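/- arXiv:1305.4719 — 5 statements merged into one kernel-verified Lean document; each statement's English description precedes it below -/
import Mathlib

section
/- Gaussian-smoothed second-order stable density correction, weighted version (limit of B₁₃^{(3)} in the proof of Theorem 3.3): for every s > 0 the integral I(s) := ∫₀^∞ z·(p(z) − C·z^{−Y−1})·P(0 ≤ σ·W ≤ s·z) dz converges absolutely, and lim_{s→0⁺} s^{−(2Y−1)}·I(s) = −(2·C²·Y·cos²(πY/2)·Γ(−Y)² / (√(2π)·σ^{2Y−1}))·m. -/
open MeasureTheory ProbabilityTheory Filter Topology Asymptotics Set

noncomputable def Phi (x : ℝ) : ℝ := (Real.sqrt (2 * Real.pi))⁻¹ * ∫ t in (0:ℝ)..x, Real.exp (-(1/2) * t ^ 2)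

lemma gam_pos {Y : ℝ} (h1 : 1 < Y) (h2 : Y < 2) : 0 < Real.Gamma (-Y) := by
  have e1 : Real.Gamma (-Y + 1) = -Y * Real.Gamma (-Y) := Real.Gamma_add_one (by linarith)
  have e2 : Real.Gamma (-Y + 1 + 1) = (-Y + 1) * Real.Gamma (-Y + 1) := Real.Gamma_add_one (by linarith)
  have h3 : 0 < Real.Gamma (-Y + 1 + 1) := Real.Gamma_pos_of_pos (by linarith)
  rw [e2, e1, ← mul_assoc] at h3
  exact pos_of_mul_pos_right h3 (by nlinarith)

lemma c_pos {Y C c : ℝ} (h1 : 1 < Y) (h2 : Y < 2) (hC : 0 < C)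
    (hc : c = -2 * C * Real.Gamma (-Y) * Real.cos (Real.pi * Y / 2)) : 0 < c := by
  have hg := gam_pos h1 h2
  have hpi := Real.pi_pos
  have : Real.cos (Real.pi * Y / 2) < 0 :=
    Real.cos_neg_of_pi_div_two_lt_of_lt (by nlinarith) (by nlinarith)
  rw [hc]
  have : 0 < (2 * C * Real.Gamma (-Y)) * (-Real.cos (Real.pi * Y / 2)) :=
    mul_pos (by positivity) (by linarith)
  linarith

lemma gam_identity {Y : ℝ} (h1 : 1 < Y) (h2 : Y < 2) :
    (Y - 1)⁻¹ * ((Real.sqrt (2 * Real.pi))⁻¹ * ((1/2 : ℝ) ^ (-((1 - Y) + 1) / 2) * (1/2) * Real.Gamma (((1-Y)+1)/2)))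
     = (-2 * Real.Gamma (-Y) * Real.cos (Real.pi * Y / 2)) * Y / (2 * Real.pi) *
       ((1/2 : ℝ) ^ (-((Y - 2) + 1) / 2) * (1/2) * Real.Gamma (((Y-2)+1)/2)) := by
  have hpi := Real.pi_pos
  have hcos : Real.cos (Real.pi * Y / 2) < 0 :=
    Real.cos_neg_of_pi_div_two_lt_of_lt (by nlinarith) (by nlinarith)
  have e1 : Real.Gamma (-Y + 1) = -Y * Real.Gamma (-Y) := Real.Gamma_add_one (by linarith)
  have e2 := Real.Gamma_mul_Gamma_add_half ((1 - Y)/2)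
  have e3 := Real.Gamma_mul_Gamma_one_sub ((1 - Y)/2)
  have e4 : Real.Gamma ((Y-1)/2 + 1) = (Y-1)/2 * Real.Gamma ((Y-1)/2) := Real.Gamma_add_one (by linarith)
  have a1 : 1 - (1-Y)/2 = (Y-1)/2 + 1 := by ring
  have a2 : (1-Y)/2 + 1/2 = (1 - Y + 1)/2 := by ring
  have a3 : 2 * ((1-Y)/2) = -Y + 1 := by ring
  have a4 : Y - 2 + 1 = Y - 1 := by ring
  have a5 : Real.pi * ((1-Y)/2) = Real.pi/2 - Real.pi * Y/2 := by ring
  rw [a1, e4, a5, Real.sin_pi_div_two_sub] at e3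
  rw [a2, a3] at e2
  rw [a4]
  have a6 : 1 - (-Y+1) = Y := by ring
  rw [a6] at e2
  have b1 : (1/2:ℝ) ^ (-((1 - Y) + 1) / 2) = 2 * (2:ℝ)^(-(Y/2)) := by
    rw [one_div, Real.inv_rpow (by norm_num), ← Real.rpow_neg (by norm_num)]
    rw [show -(-(1 - Y + 1)/2) = 1 + -(Y/2) by ring, Real.rpow_add (by norm_num)]
    simp
  have b2 : (1/2:ℝ) ^ (-(Y-1) / 2) = (2:ℝ)^(Y/2) * (Real.sqrt 2)⁻¹ := by
    rw [one_div, Real.inv_rpow (by norm_num), ← Real.rpow_neg (by norm_num)]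
    rw [show -(-(Y-1)/2) = Y/2 + -(1/2) by ring, Real.rpow_add (by norm_num), Real.rpow_neg (by norm_num : (0:ℝ) ≤ 2) (1/2), ← Real.sqrt_eq_rpow]
  have b3 : (2:ℝ)^Y = 2^(Y/2) * 2^(Y/2) := by rw [← Real.rpow_add (by norm_num)]; ring_nf
  have b4 : (2:ℝ)^(-(Y/2)) = (2^(Y/2))⁻¹ := Real.rpow_neg (by norm_num) _
  rw [b1, b2, b4, Real.sqrt_mul (by norm_num)]
  rw [b3] at e2
  have hX : (0:ℝ) < 2^(Y/2) := by positivity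
  have hs2 : 0 < Real.sqrt 2 := by positivity
  have hsp : 0 < Real.sqrt Real.pi := by positivity
  have hG1 : Real.Gamma ((1 - Y)/2) ≠ 0 := by
    intro h
    rw [h, zero_mul] at e3
    have := div_ne_zero hpi.ne' hcos.ne
    exact this e3.symm
  have hsq : Real.sqrt Real.pi * Real.sqrt Real.pi = Real.pi := Real.mul_self_sqrt hpi.le
  generalize (2:ℝ)^(Y/2) = X at *
  generalize Real.Gamma ((1 - Y)/2) = G1 at *
  generalize Real.Gamma ((1 - Y + 1)/2) = G2 at *
  generalize Real.Gamma ((Y-1)/2) = G3 at *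
  generalize Real.cos (Real.pi * Y / 2) = k at *
  generalize hg : Real.Gamma (-Y) = g at *
  have e5 : -Y * g = G1 * G2 / (X * X * Real.sqrt Real.pi) := by
    rw [← e1, e2]; field_simp
  have e6 : G1 * ((Y-1)/2*G3) * k = Real.pi := by
    rw [e3]; field_simp
    exact div_self hcos.ne
  have e7 : k * G3 = 2 * Real.pi / (G1 * (Y-1)) := by
    have : Y - 1 ≠ 0 := by linarith
    field_simp; linarith
  have hY : Y - 1 ≠ 0 := by linarith
  calc _ = G2 / ((Y-1) * X * (Real.sqrt 2 * Real.sqrt Real.pi)) := by field_simp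
    _ = (-Y * g) * (k * G3) * X / (2 * Real.pi * Real.sqrt 2) := by
      rw [e5, e7]; field_simp
    _ = _ := by field_simp

lemma hasDerivAt_Phi (x : ℝ) :
    HasDerivAt Phi ((Real.sqrt (2 * Real.pi))⁻¹ * Real.exp (-(1/2) * x ^ 2)) x := by
  unfold Phi
  apply HasDerivAt.const_mul
  have hcont : Continuous (fun t : ℝ => Real.exp (-(1/2) * t ^ 2)) := by fun_prop
  exact intervalIntegral.integral_hasDerivAt_right (hcont.intervalIntegrable _ _)
    (hcont.stronglyMeasurableAtFilter _ _) hcont.continuousAt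

lemma Phi_cont : Continuous Phi :=
  continuous_iff_continuousAt.2 fun x => (hasDerivAt_Phi x).continuousAt

lemma sqrt_two_pi_ge : 1 ≤ Real.sqrt (2 * Real.pi) := by
  rw [Real.one_le_sqrt]; nlinarith [Real.pi_gt_three]

lemma Phi_nonneg {x : ℝ} (hx : 0 ≤ x) : 0 ≤ Phi x := by
  unfold Phi
  have := intervalIntegral.integral_nonneg (μ := volume) hx (f := fun t : ℝ => Real.exp (-(1/2) * t ^ 2))
    (fun t _ => (Real.exp_pos _).le)
  positivity

lemma Phi_le {x : ℝ} (hx : 0 ≤ x) : Phi x ≤ x := by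
  unfold Phi
  have hcont : Continuous (fun t : ℝ => Real.exp (-(1/2) * t ^ 2)) := by fun_prop
  have h1 : ∫ t in (0:ℝ)..x, Real.exp (-(1/2) * t ^ 2) ≤ ∫ t in (0:ℝ)..x, (1:ℝ) := by
    apply intervalIntegral.integral_mono_on hx (hcont.intervalIntegrable _ _) (by simp)
    intro t _
    rw [Real.exp_le_one_iff]; nlinarith [sq_nonneg t]
  simp only [intervalIntegral.integral_const, sub_zero, smul_eq_mul, mul_one] at h1
  have h2 : (Real.sqrt (2 * Real.pi))⁻¹ ≤ 1 := inv_le_one_of_one_le₀ sqrt_two_pi_ge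
  calc _ ≤ (Real.sqrt (2 * Real.pi))⁻¹ * x := by gcongr
    _ ≤ 1 * x := by gcongr
    _ = x := one_mul x

lemma Phi_eq_gauss {x : ℝ} (hx : 0 ≤ x) : (gaussianReal 0 1 (Icc 0 x)).toReal = Phi x := by
  rw [gaussianReal_apply_eq_integral _ (by simp), ENNReal.toReal_ofReal]
  · rw [integral_Icc_eq_integral_Ioc, ← intervalIntegral.integral_of_le hx, Phi,
      ← intervalIntegral.integral_const_mul]
    congr 1
    ext t
    simp [gaussianPDFReal]
    left; ring
  · exact integral_nonneg (fun _ => gaussianPDFReal_nonneg _ _ _)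

lemma Phi_le_one {x : ℝ} (hx : 0 ≤ x) : Phi x ≤ 1 := by
  rw [← Phi_eq_gauss hx]
  exact measureReal_le_one

lemma prob_eq {Ω : Type} [MeasurableSpace Ω] (P : Measure Ω) (σ : ℝ) (hσ : 0 < σ)
    (W : Ω → ℝ) (hWmeas : Measurable W)
    (hWlaw : Measure.map W P = gaussianReal 0 1) (s z : ℝ) (hs : 0 < s) (hz : 0 < z) :
    (P {ω | 0 ≤ σ * W ω ∧ σ * W ω ≤ s * z}).toReal = Phi (s / σ * z) := by
  rw [← Phi_eq_gauss (by positivity), ← hWlaw, Measure.map_apply hWmeas measurableSet_Icc]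
  congr 2
  ext ω
  simp only [mem_ofPred_eq, mem_preimage, mem_Icc]
  rw [mul_nonneg_iff_of_pos_left hσ, div_mul_eq_mul_div, le_div_iff₀ hσ, mul_comm σ]

lemma B_int {Y : ℝ} (h1 : 1 < Y) (h2 : Y < 2) {a : ℝ} (ha : 0 < a) :
    IntegrableOn (fun z => z ^ (-Y) * Phi (a * z)) (Ioi 0) := by
  have hm : ∀ S : Set ℝ, MeasurableSet S → AEStronglyMeasurable (fun z : ℝ => z ^ (-Y) * Phi (a * z)) (volume.restrict S) := by
    intro S _
    apply Measurable.aestronglyMeasurable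
    have : Measurable Phi := Phi_cont.measurable
    fun_prop
  rw [← Ioc_union_Ioi_eq_Ioi (zero_le_one (α := ℝ))]
  refine IntegrableOn.union ?_ ?_
  · have hb : IntegrableOn (fun z : ℝ => a * z ^ (1 - Y)) (Ioc 0 1) := by
      rw [← intervalIntegrable_iff_integrableOn_Ioc_of_le zero_le_one]
      exact (intervalIntegral.intervalIntegrable_rpow' (by linarith)).const_mul a
    refine Integrable.mono' hb (hm _ measurableSet_Ioc) ?_
    filter_upwards [ae_restrict_mem measurableSet_Ioc] with z hz
    have hz0 : 0 < z := hz.1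
    have haz : 0 ≤ a * z := by positivity
    rw [Real.norm_of_nonneg (mul_nonneg (by positivity) (Phi_nonneg haz))]
    calc z ^ (-Y) * Phi (a * z) ≤ z ^ (-Y) * (a * z) := by gcongr; exact Phi_le haz
      _ = a * z ^ (1 - Y) := by
        rw [sub_eq_neg_add, Real.rpow_add hz0, Real.rpow_one]; ring
  · have hb : IntegrableOn (fun z : ℝ => z ^ (-Y)) (Ioi 1) :=
      integrableOn_Ioi_rpow_of_lt (by linarith) one_pos
    refine Integrable.mono' hb (hm _ measurableSet_Ioi) ?_
    filter_upwards [ae_restrict_mem measurableSet_Ioi] with z hz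
    have hz0 : 0 < z := lt_trans one_pos hz
    have haz : 0 ≤ a * z := by positivity
    rw [Real.norm_of_nonneg (mul_nonneg (by positivity) (Phi_nonneg haz))]
    calc z ^ (-Y) * Phi (a * z) ≤ z ^ (-Y) * 1 := by gcongr; exact Phi_le_one haz
      _ = _ := mul_one _

lemma B_val_one {Y : ℝ} (h1 : 1 < Y) (h2 : Y < 2) :
    ∫ z in Ioi (0:ℝ), z ^ (-Y) * Phi z = (Y - 1)⁻¹ * ((Real.sqrt (2 * Real.pi))⁻¹ *
      ((1/2 : ℝ) ^ (-((1 - Y) + 1) / 2) * (1/2) * Real.Gamma (((1-Y)+1)/2))) := by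
  have hY : Y - 1 ≠ 0 := by linarith
  have hY' : 1 - Y ≠ 0 := by linarith
  have hG : ∫ x in Ioi (0:ℝ), x ^ (1 - Y) * Real.exp (-(1/2) * x ^ 2) =
      (1/2 : ℝ) ^ (-((1 - Y) + 1) / 2) * (1/2) * Real.Gamma (((1-Y)+1)/2) := by
    have := integral_rpow_mul_exp_neg_mul_rpow (p := 2) (q := 1 - Y) (b := 1/2) (by norm_num) (by linarith) (by norm_num)
    rw [← this]
    simp only [Real.rpow_two]
  have hGi : IntegrableOn (fun x : ℝ => x ^ (1 - Y) * Real.exp (-(1/2) * x ^ 2)) (Ioi 0) :=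
    integrableOn_rpow_mul_exp_neg_mul_sq (by norm_num) (by linarith)
  have key := integral_Ioi_mul_deriv_eq_deriv_mul (a := 0) (a' := 0) (b' := 0)
    (u := Phi) (v := fun x : ℝ => x ^ (1 - Y) / (1 - Y)) 
    (u' := fun x => (Real.sqrt (2 * Real.pi))⁻¹ * Real.exp (-(1/2) * x ^ 2))
    (v' := fun x => x ^ (-Y)) (fun x _ => hasDerivAt_Phi x) ?_ ?_ ?_ ?_ ?_
  · have e1 : ∫ z in Ioi (0:ℝ), z ^ (-Y) * Phi z = ∫ z in Ioi (0:ℝ), Phi z * z ^ (-Y) := by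
      simp_rw [mul_comm]
    rw [e1, key, ← hG, ← integral_const_mul, ← integral_const_mul, sub_self, zero_sub, ← integral_neg]
    apply integral_congr_ae
    filter_upwards with x
    rw [show (1 - Y) = -(Y-1) by ring]
    field_simp
  · intro x hx
    have := (Real.hasDerivAt_rpow_const (x := x) (p := 1 - Y) (Or.inl (ne_of_gt hx))).div_const (1 - Y)
    convert! this using 1
    rw [mul_div_cancel_left₀ _ hY']
    ring_nf
  · have := B_int h1 h2 one_pos
    simp only [one_mul] at this
    refine this.congr_fun (fun x _ => ?_) measurableSet_Ioi
    simp [mul_comm]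
  · refine IntegrableOn.congr_fun (hGi.const_mul ((Real.sqrt (2 * Real.pi))⁻¹ / (1 - Y))) (fun x _ => ?_) measurableSet_Ioi
    simp only [Pi.mul_apply]
    ring
  · have ht : Tendsto (fun x : ℝ => x ^ (2 - Y) / (Y - 1)) (𝓝[>] 0) (𝓝 0) := by
      have : Tendsto (fun x : ℝ => x ^ (2 - Y) / (Y - 1)) (𝓝 0) (𝓝 ((0:ℝ) ^ (2 - Y) / (Y - 1))) :=
        ((Real.continuousAt_rpow_const 0 (2 - Y) (Or.inr (by linarith))).tendsto).div_const _
      rw [Real.zero_rpow (by linarith), zero_div] at this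
      exact this.mono_left nhdsWithin_le_nhds
    refine squeeze_zero_norm' ?_ ht
    filter_upwards [self_mem_nhdsWithin] with x hx
    have hx0 : 0 < x := hx
    simp only [Pi.mul_apply, norm_mul, norm_div, Real.norm_eq_abs]
    rw [abs_of_nonneg (Phi_nonneg hx0.le), abs_of_neg (show 1 - Y < 0 by linarith), abs_of_pos (by positivity)]
    rw [neg_sub, ← mul_div_assoc]
    have : 0 < Y - 1 := by linarith
    gcongr
    calc Phi x * x ^ (1 - Y) ≤ x * x ^ (1-Y) := by gcongr; exact Phi_le hx0.le
      _ = x ^ (2 - Y) := by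
        rw [show 2 - Y = 1 + (1 - Y) by ring, Real.rpow_add hx0, Real.rpow_one]
  · have ht : Tendsto (fun x : ℝ => x ^ (1 - Y) / (Y - 1)) atTop (𝓝 0) := by
      have := (tendsto_rpow_neg_atTop (show 0 < Y - 1 by linarith)).div_const (Y - 1)
      rw [zero_div] at this
      simpa using this
    refine squeeze_zero_norm' ?_ ht
    filter_upwards [eventually_gt_atTop 0] with x hx0
    simp only [Pi.mul_apply, norm_mul, norm_div, Real.norm_eq_abs]
    rw [abs_of_nonneg (Phi_nonneg hx0.le), abs_of_neg (show 1 - Y < 0 by linarith), abs_of_pos (by positivity)]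
    rw [neg_sub, ← mul_div_assoc]
    have : 0 < Y - 1 := by linarith
    gcongr
    calc Phi x * x ^ (1 - Y) ≤ 1 * x ^ (1-Y) := by gcongr; exact Phi_le_one hx0.le
      _ = x ^ (1 - Y) := one_mul _

lemma B_val {Y : ℝ} (h1 : 1 < Y) (h2 : Y < 2) {a : ℝ} (ha : 0 < a) :
    ∫ z in Ioi (0:ℝ), z ^ (-Y) * Phi (a * z) = a ^ (Y - 1) * 
     ((-2 * Real.Gamma (-Y) * Real.cos (Real.pi * Y / 2)) * Y / (2 * Real.pi) *
      ∫ w in Ioi (0:ℝ), w ^ (Y - 2) * Real.exp (-(1/2) * w ^ 2)) := by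
  have hG : ∫ x in Ioi (0:ℝ), x ^ (Y - 2) * Real.exp (-(1/2) * x ^ 2) =
      (1/2 : ℝ) ^ (-((Y - 2) + 1) / 2) * (1/2) * Real.Gamma (((Y-2)+1)/2) := by
    have := integral_rpow_mul_exp_neg_mul_rpow (p := 2) (q := Y - 2) (b := 1/2) (by norm_num) (by linarith) (by norm_num)
    rw [← this]
    simp only [Real.rpow_two]
  rw [hG, ← gam_identity h1 h2, ← B_val_one h1 h2]
  have := integral_comp_mul_left_Ioi (fun z : ℝ => z ^ (-Y) * Phi z) 0 ha
  rw [mul_zero] at this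
  have e : ∫ z in Ioi (0:ℝ), z ^ (-Y) * Phi (a * z) = a ^ Y * ∫ z in Ioi (0:ℝ), (a * z) ^ (-Y) * Phi (a * z) := by
    rw [← integral_const_mul]
    apply setIntegral_congr_fun measurableSet_Ioi
    intro z hz
    have hz0 : (0:ℝ) < z := hz
    simp only
    rw [Real.mul_rpow ha.le hz0.le, ← mul_assoc, ← mul_assoc, ← Real.rpow_add ha]
    simp
  rw [e, this, smul_eq_mul, Real.rpow_sub_one ha.ne']
  ring

lemma int_exp_neg_abs : Integrable (fun w : ℝ => Real.exp (-|w|)) := by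
  by_contra h
  have h1 := integral_undef h
  have h2 := integral_comp_abs (f := fun x => Real.exp (-x))
  rw [h1, integral_exp_neg_Ioi_zero] at h2
  norm_num at h2

lemma int_kernel {Y b : ℝ} (h1 : 1 < Y) (hb : 0 < b) (t : ℝ) :
    Integrable (fun w : ℝ => Real.exp (t * w) * Real.exp (-(b * |w| ^ Y))) := by
  have hY : 0 < Y - 1 := by linarith
  set R : ℝ := ((|t| + 1) / b) ^ (1 / (Y - 1)) with hR
  have hR0 : 0 < R := by positivity
  have hRb : b * R ^ (Y - 1) = |t| + 1 := by
    rw [hR, ← Real.rpow_mul (by positivity), one_div, inv_mul_cancel₀ hY.ne', Real.rpow_one]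
    field_simp
  refine Integrable.mono' (int_exp_neg_abs.const_mul (Real.exp ((|t| + 1) * R))) ?_ ?_
  · apply Measurable.aestronglyMeasurable
    fun_prop
  · filter_upwards with w
    rw [Real.norm_of_nonneg (by positivity), ← Real.exp_add, ← Real.exp_add]
    apply Real.exp_le_exp.2
    have h3 : t * w ≤ |t| * |w| := by rw [← abs_mul]; exact le_abs_self _
    have h4 : (|t| + 1) * (|w| - R) ≤ b * |w| ^ Y := by
      rcases le_total |w| R with h | h
      · have : (|t| + 1) * (|w| - R) ≤ 0 := mul_nonpos_of_nonneg_of_nonpos (by positivity) (by linarith)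
        have : 0 ≤ b * |w| ^ Y := by positivity
        linarith
      · have hw : 0 < |w| := lt_of_lt_of_le hR0 h
        have e : |w| ^ Y = |w| ^ (Y - 1) * |w| := by
          rw [← Real.rpow_add_one hw.ne']; ring_nf
        have h5 : R ^ (Y - 1) ≤ |w| ^ (Y - 1) := Real.rpow_le_rpow hR0.le h hY.le
        calc (|t| + 1) * (|w| - R) ≤ (|t| + 1) * |w| := by
              gcongr; linarith
          _ = b * (R ^ (Y-1) * |w|) := by rw [← hRb]; ring
          _ ≤ b * |w| ^ Y := by rw [e]; gcongr
    nlinarith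


lemma dens_rep {Y c : ℝ} (h1 : 1 < Y) (hc : 0 < c) {μ : Measure ℝ} [IsProbabilityMeasure μ]
    (hchar : ∀ u : ℝ, (∫ x, Complex.exp (Complex.I * u * x) ∂μ)
      = (Real.exp (-(c * |u| ^ Y)) : ℂ))
    {p : ℝ → ℝ} (hp : Continuous p)
    (hdens : μ = MeasureTheory.volume.withDensity (fun x => ENNReal.ofReal (p x))) (x : ℝ) : ((max (p x) 0 : ℝ) : ℂ) =
    ∫ w : ℝ, Complex.exp (2 * Real.pi * x * Complex.I * w) * (Real.exp (-(c * |2 * Real.pi * w| ^ Y)) : ℂ) := by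
  have hpi := Real.pi_pos
  set q : ℝ → ℂ := fun x => ((max (p x) 0 : ℝ) : ℂ) with hq
  have hqc : Continuous q := by fun_prop
  have hmeas : Measurable (fun x => ENNReal.ofReal (p x)) := by fun_prop
  have hqi : Integrable q := by
    have : Integrable (fun _ : ℝ => (1:ℂ)) μ := integrable_const _
    rw [hdens, integrable_withDensity_iff_integrable_smul' hmeas (by simp)] at this
    refine this.congr (ae_of_all _ fun x => ?_)
    simp [hq, ENNReal.toReal_ofReal']
  have hF : ∀ w : ℝ, FourierTransform.fourier q w = (Real.exp (-(c * |2 * Real.pi * w| ^ Y)) : ℂ) := by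
    intro w
    have := hchar (-(2 * Real.pi * w))
    rw [abs_neg] at this
    rw [← this, hdens, integral_withDensity_eq_integral_toReal_smul hmeas (by simp), Real.fourier_real_eq_integral_exp_smul]
    congr 1
    ext v
    simp only [hq, ENNReal.toReal_ofReal', smul_eq_mul, Complex.real_smul]
    rw [mul_comm]
    congr 2
    push_cast
    ring
  have hFi : Integrable (FourierTransform.fourier q) := by
    have h := int_kernel h1 (show 0 < c * (2 * Real.pi) ^ Y by positivity) 0
    refine h.ofReal.congr (ae_of_all _ fun w => ?_)
    simp only [hF, zero_mul, Real.exp_zero, one_mul]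
    congr 3
    rw [abs_mul, abs_of_pos (show 0 < 2 * Real.pi by positivity), Real.mul_rpow (show 0 ≤ 2 * Real.pi by positivity) (abs_nonneg w)]
    ring
  have key := congrFun (hqc.fourierInv_fourier_eq hqi hFi) x
  rw [← hq] at *
  change q x = _
  rw [← key, Real.fourierInv_eq']
  congr 1
  ext w
  rw [hF, smul_eq_mul]
  congr 2
  simp
  ring

lemma dens_max_even {Y c : ℝ} (h1 : 1 < Y) (hc : 0 < c) {μ : Measure ℝ} [IsProbabilityMeasure μ]
    (hchar : ∀ u : ℝ, (∫ x, Complex.exp (Complex.I * u * x) ∂μ)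
      = (Real.exp (-(c * |u| ^ Y)) : ℂ))
    {p : ℝ → ℝ} (hp : Continuous p)
    (hdens : μ = MeasureTheory.volume.withDensity (fun x => ENNReal.ofReal (p x))) (x : ℝ) : max (p (-x)) 0 = max (p x) 0 := by
  have e1 := dens_rep h1 hc hchar hp hdens x
  have e2 := dens_rep h1 hc hchar hp hdens (-x)
  rw [← integral_neg_eq_self] at e2
  have : ((max (p (-x)) 0 : ℝ) : ℂ) = ((max (p x) 0 : ℝ) : ℂ) := by
    rw [e1, e2]
    congr 1
    ext w
    congr 1
    · push_cast; ring_nf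
    · simp
  exact_mod_cast this

lemma dens_nonneg {Y c : ℝ} (h1 : 1 < Y) (hc : 0 < c) {μ : Measure ℝ} [IsProbabilityMeasure μ]
    (hchar : ∀ u : ℝ, (∫ x, Complex.exp (Complex.I * u * x) ∂μ)
      = (Real.exp (-(c * |u| ^ Y)) : ℂ))
    {p : ℝ → ℝ} (hp : Continuous p)
    (hdens : μ = MeasureTheory.volume.withDensity (fun x => ENNReal.ofReal (p x))) (x : ℝ) : 0 ≤ p x := by
  by_contra! hx
  have hpi := Real.pi_pos
  have hmeas : Measurable (fun x => ENNReal.ofReal (p x)) := by fun_prop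
  have hkm : Measurable (fun w : ℝ => ENNReal.ofReal (Real.exp (-(c * |2 * Real.pi * w| ^ Y)))) := by fun_prop
  set ν : Measure ℝ := volume.withDensity (fun w : ℝ => ENNReal.ofReal (Real.exp (-(c * |2 * Real.pi * w| ^ Y)))) with hν
  have hset : integrableExpSet id ν = univ := by
    ext t
    simp only [integrableExpSet, mem_univ, iff_true]
    change Integrable _ _
    rw [hν, integrable_withDensity_iff_integrable_smul' hkm (by simp)]
    refine (int_kernel h1 (show 0 < c * (2 * Real.pi) ^ Y by positivity) t).congr (ae_of_all _ fun w => ?_)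
    simp only [id, smul_eq_mul]
    rw [ENNReal.toReal_ofReal (Real.exp_pos _).le, mul_comm]
    congr 2
    rw [abs_mul, abs_of_pos (show 0 < 2 * Real.pi by positivity), Real.mul_rpow (show 0 ≤ 2 * Real.pi by positivity) (abs_nonneg w)]
    ring
  have hrep : ∀ x : ℝ, ((max (p x) 0 : ℝ) : ℂ) = complexMGF id ν (2 * Real.pi * Complex.I * x) := by
    intro x
    rw [dens_rep h1 hc hchar hp hdens x, complexMGF, hν, integral_withDensity_eq_integral_toReal_smul hkm (by simp)]
    congr 1
    ext w
    rw [ENNReal.toReal_ofReal (Real.exp_pos _).le, Complex.real_smul, mul_comm]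
    simp only [id]
    congr 2
    ring
  have han : AnalyticOnNhd ℂ (complexMGF id ν) univ := by
    have := analyticOnNhd_complexMGF (X := id) (μ := ν)
    rw [hset] at this
    simpa using this
  have hlin : AnalyticOnNhd ℂ (fun z : ℂ => complexMGF id ν (2 * Real.pi * Complex.I * z)) univ := by
    intro z _
    exact (han _ (mem_univ _)).fun_comp (by fun_prop)
  have hzero := hlin.eqOn_zero_of_preconnected_of_frequently_eq_zero isPreconnected_univ (mem_univ (x:ℂ)) (by
    have hev : ∀ᶠ y in 𝓝 x, p y < 0 := hp.continuousAt.eventually_lt continuousAt_const hx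
    have ht : Tendsto (fun y : ℝ => (y : ℂ)) (𝓝[≠] x) (𝓝[≠] (x:ℂ)) := by
      apply tendsto_nhdsWithin_iff.2 ⟨(Complex.continuous_ofReal.tendsto x).mono_left nhdsWithin_le_nhds, ?_⟩
      filter_upwards [self_mem_nhdsWithin] with y hy
      simpa using hy
    refine ht.frequently (Eventually.frequently ?_)
    filter_upwards [nhdsWithin_le_nhds hev] with y hy
    rw [← hrep, max_eq_right hy.le]; simp)
  have hz : ∀ y, ENNReal.ofReal (p y) = 0 := by
    intro y
    have := hzero (mem_univ (y:ℂ))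
    simp only [Pi.zero_apply] at this
    rw [← hrep] at this
    have h : max (p y) 0 = 0 := by exact_mod_cast this
    rw [ENNReal.ofReal_eq_zero]
    exact max_eq_right_iff.1 h
  have : μ univ = 0 := by
    rw [hdens]; simp [hz]
  simp at this

lemma dens_even {Y c : ℝ} (h1 : 1 < Y) (hc : 0 < c) {μ : Measure ℝ} [IsProbabilityMeasure μ]
    (hchar : ∀ u : ℝ, (∫ x, Complex.exp (Complex.I * u * x) ∂μ)
      = (Real.exp (-(c * |u| ^ Y)) : ℂ))
    {p : ℝ → ℝ} (hp : Continuous p)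
    (hdens : μ = MeasureTheory.volume.withDensity (fun x => ENNReal.ofReal (p x))) (x : ℝ) : p (-x) = p x := by
  have := dens_max_even h1 hc hchar hp hdens x
  rwa [max_eq_left (dens_nonneg h1 hc hchar hp hdens _), max_eq_left (dens_nonneg h1 hc hchar hp hdens _)] at this

lemma cos_char {Y c : ℝ} {μ : Measure ℝ} [IsProbabilityMeasure μ]
    (hchar : ∀ u : ℝ, (∫ x, Complex.exp (Complex.I * u * x) ∂μ)
      = (Real.exp (-(c * |u| ^ Y)) : ℂ)) (u : ℝ) :
    ∫ x, Real.cos (u * x) ∂μ = Real.exp (-(c * |u| ^ Y)) := by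
  have h := congrArg Complex.re (hchar u)
  rw [Complex.ofReal_re] at h
  rw [← h]
  have hi : Integrable (fun x : ℝ => Complex.exp (Complex.I * u * x)) μ := by
    refine Integrable.of_bound (C := 1) (by fun_prop) (ae_of_all _ fun x => ?_)
    rw [show Complex.I * u * x = ((u * x : ℝ) : ℂ) * Complex.I by push_cast; ring, Complex.norm_exp_ofReal_mul_I]
  rw [show (∫ x, Complex.exp (Complex.I * u * x) ∂μ).re = ∫ x, (Complex.exp (Complex.I * u * x)).re ∂μ from (integral_re hi).symm]
  congr 1
  ext x
  rw [show Complex.I * u * x = ((u * x : ℝ) : ℂ) * Complex.I by push_cast; ring, Complex.exp_ofReal_mul_I_re]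

lemma aux_int {Y c r : ℝ} (hr1 : 0 < r) (hr2 : r < Y) (hc : 0 < c) :
    IntegrableOn (fun u : ℝ => u ^ (-1 - r) * (1 - Real.exp (-(c * |u| ^ Y)))) (Ioi 0) := by
  have hm : Measurable (fun u : ℝ => u ^ (-1 - r) * (1 - Real.exp (-(c * |u| ^ Y)))) := by fun_prop
  rw [← Ioc_union_Ioi_eq_Ioi (zero_le_one (α := ℝ))]
  refine IntegrableOn.union ?_ ?_
  · have hb : IntegrableOn (fun z : ℝ => c * z ^ (Y - 1 - r)) (Ioc 0 1) := by
      rw [← intervalIntegrable_iff_integrableOn_Ioc_of_le zero_le_one]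
      exact (intervalIntegral.intervalIntegrable_rpow' (by linarith)).const_mul c
    refine Integrable.mono' hb hm.aestronglyMeasurable ?_
    filter_upwards [ae_restrict_mem measurableSet_Ioc] with z hz
    have hz0 : 0 < z := hz.1
    have h0 : Real.exp (-(c * |z| ^ Y)) ≤ 1 := Real.exp_le_one_iff.2 (by
      have : 0 ≤ c * |z| ^ Y := by positivity
      linarith)
    have h1 := Real.add_one_le_exp (-(c * |z| ^ Y))
    rw [Real.norm_of_nonneg (mul_nonneg (by positivity) (by linarith))]
    calc _ ≤ z ^ (-1 - r) * (c * z ^ Y) := by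
          rw [abs_of_pos hz0] at *
          gcongr; linarith
      _ = c * z ^ (Y - 1 - r) := by
        rw [show Y - 1 - r = (-1 - r) + Y by ring, Real.rpow_add hz0]; ring
  · have hb : IntegrableOn (fun z : ℝ => z ^ (-1 - r)) (Ioi 1) :=
      integrableOn_Ioi_rpow_of_lt (by linarith) one_pos
    refine Integrable.mono' hb hm.aestronglyMeasurable ?_
    filter_upwards [ae_restrict_mem measurableSet_Ioi] with z hz
    have hz0 : 0 < z := lt_trans one_pos hz
    have h0 : Real.exp (-(c * |z| ^ Y)) ≤ 1 := Real.exp_le_one_iff.2 (by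
      have : 0 ≤ c * |z| ^ Y := by positivity
      linarith)
    rw [Real.norm_of_nonneg (mul_nonneg (by positivity) (by linarith))]
    calc _ ≤ z ^ (-1 - r) * 1 := by
          gcongr; linarith [Real.exp_pos (-(c * |z| ^ Y))]
      _ = _ := mul_one _

lemma one_sub_cos_one : 0 < 1 - Real.cos 1 := by
  have := Real.cos_one_le
  linarith

lemma lower_int {r : ℝ} (hr1 : 0 < r) (x : ℝ) :
    ENNReal.ofReal ((1 - Real.cos 1) * 2 ^ (-1 - r) * |x| ^ r) ≤
      ∫⁻ u in Ioi (0:ℝ), ENNReal.ofReal (u ^ (-1 - r)) * ENNReal.ofReal (1 - Real.cos (u * x)) := by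
  rcases eq_or_ne x 0 with rfl | hx
  · simp [Real.zero_rpow hr1.ne']
  have hx0 : 0 < |x| := abs_pos.2 hx
  have hk := one_sub_cos_one
  calc _ = ∫⁻ u in Ioc (1 / |x|) (2 / |x|), ENNReal.ofReal ((1 - Real.cos 1) * (2 / |x|) ^ (-1 - r)) := by
        rw [setLIntegral_const, Real.volume_Ioc, ← ENNReal.ofReal_mul (by positivity)]
        congr 1
        rw [Real.div_rpow (by norm_num) hx0.le, show -1 - r = -(1 + r) by ring,
          Real.rpow_neg hx0.le, Real.rpow_add hx0, Real.rpow_one]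
        field_simp
        ring
    _ ≤ ∫⁻ u in Ioc (1 / |x|) (2 / |x|), ENNReal.ofReal (u ^ (-1 - r)) * ENNReal.ofReal (1 - Real.cos (u * x)) := by
        apply setLIntegral_mono (by fun_prop)
        intro u hu
        have h1 : 0 < 1 / |x| := by positivity
        have hu0 : 0 < u := h1.trans hu.1
        rw [← ENNReal.ofReal_mul (by positivity)]
        apply ENNReal.ofReal_le_ofReal
        rw [mul_comm]
        have ha : 1 < u * |x| := by
          have := hu.1; rwa [div_lt_iff₀ hx0] at this
        have hb : u * |x| ≤ 2 := by
          have := hu.2; rwa [le_div_iff₀ hx0] at this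
        have hcos : Real.cos (u * x) ≤ Real.cos 1 := by
          rw [← Real.cos_abs (u * x), abs_mul, abs_of_pos hu0]
          exact Real.cos_le_cos_of_nonneg_of_le_pi (by norm_num) (by linarith [Real.pi_gt_three]) ha.le
        have hpow : (2 / |x|) ^ (-1 - r) ≤ u ^ (-1 - r) :=
          Real.rpow_le_rpow_of_nonpos hu0 hu.2 (by linarith)
        gcongr
    _ ≤ _ := lintegral_mono_set (fun u hu => lt_trans (show 0 < 1 / |x| by positivity) hu.1)

lemma moment {Y c r : ℝ} (hr1 : 0 < r) (hr2 : r < Y) (hc : 0 < c) {μ : Measure ℝ} [IsProbabilityMeasure μ]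
    (hchar : ∀ u : ℝ, (∫ x, Complex.exp (Complex.I * u * x) ∂μ)
      = (Real.exp (-(c * |u| ^ Y)) : ℂ)) : Integrable (fun x : ℝ => |x| ^ r) μ := by
  have hk := one_sub_cos_one
  have hK : 0 < (1 - Real.cos 1) * 2 ^ (-1 - r) := by positivity
  suffices h : Integrable (fun x : ℝ => ((1 - Real.cos 1) * 2 ^ (-1 - r)) * |x| ^ r) μ by
    refine (h.const_mul ((1 - Real.cos 1) * 2 ^ (-1 - r))⁻¹).congr (ae_of_all _ fun x => ?_)
    simp only
    rw [← mul_assoc, inv_mul_cancel₀ hK.ne', one_mul]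
  refine ⟨(Measurable.aestronglyMeasurable (by fun_prop)), ?_⟩
  rw [hasFiniteIntegral_iff_ofReal (ae_of_all _ fun x => by simp only [Pi.zero_apply]; positivity)]
  calc _ ≤ ∫⁻ x, (∫⁻ u in Ioi (0:ℝ), ENNReal.ofReal (u ^ (-1 - r)) * ENNReal.ofReal (1 - Real.cos (u * x))) ∂μ :=
        lintegral_mono fun x => lower_int hr1 x
    _ = ∫⁻ u in Ioi (0:ℝ), (∫⁻ x, ENNReal.ofReal (u ^ (-1 - r)) * ENNReal.ofReal (1 - Real.cos (u * x)) ∂μ) := by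
        apply lintegral_lintegral_swap
        apply Measurable.aemeasurable
        fun_prop
    _ = ∫⁻ u in Ioi (0:ℝ), ENNReal.ofReal (u ^ (-1 - r) * (1 - Real.exp (-(c * |u| ^ Y)))) := by
        apply setLIntegral_congr_fun measurableSet_Ioi
        intro u hu
        have hu0 : (0:ℝ) < u := hu
        simp only
        rw [lintegral_const_mul _ (by fun_prop), ENNReal.ofReal_mul (by positivity)]
        congr 1
        have hci : Integrable (fun x => Real.cos (u * x)) μ :=
          Integrable.of_bound (C := 1) (by fun_prop) (ae_of_all _ fun x => by
            rw [Real.norm_eq_abs]; exact Real.abs_cos_le_one _)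
        have hci1 : Integrable (fun x => 1 - Real.cos (u * x)) μ := (integrable_const _).sub hci
        rw [← ofReal_integral_eq_lintegral_ofReal hci1
          (ae_of_all _ fun x => by simpa using Real.cos_le_one _), integral_sub (integrable_const _) hci,
          cos_char hchar]
        simp
    _ < ⊤ := (aux_int hr1 hr2 hc).lintegral_lt_top

lemma deriv_char {Y c : ℝ} (h1 : 1 < Y) (hc : 0 < c) {μ : Measure ℝ} [IsProbabilityMeasure μ]
    (hchar : ∀ u : ℝ, (∫ x, Complex.exp (Complex.I * u * x) ∂μ)
      = (Real.exp (-(c * |u| ^ Y)) : ℂ)) {u : ℝ} (hu : 0 < u) :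
    ∫ x, x * Real.sin (u * x) ∂μ = c * Y * u ^ (Y - 1) * Real.exp (-(c * u ^ Y)) := by
  have hmom : Integrable (fun x : ℝ => |x|) μ := by
    simpa using moment one_pos h1 hc hchar
  have hd := (hasDerivAt_integral_of_dominated_loc_of_deriv_le (μ := μ) (s := univ) (x₀ := u)
    (F := fun u x => Real.cos (u * x)) (F' := fun u x => -(x * Real.sin (u * x))) (bound := fun x => |x|)
    univ_mem (Eventually.of_forall fun v => by fun_prop)
    (Integrable.of_bound (C := 1) (by fun_prop) (ae_of_all _ fun x => by
            rw [Real.norm_eq_abs]; exact Real.abs_cos_le_one _))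
    (by fun_prop) (ae_of_all _ fun x v _ => by
      rw [norm_neg, norm_mul, Real.norm_eq_abs, Real.norm_eq_abs]
      exact mul_le_of_le_one_right (abs_nonneg _) (Real.abs_sin_le_one _)) hmom
    (ae_of_all _ fun x v _ => by
      have := ((hasDerivAt_id v).mul_const x).cos
      convert! this using 1
      simp; ring)).2
  simp_rw [cos_char hchar] at hd
  have hd2 : HasDerivAt (fun v : ℝ => Real.exp (-(c * |v| ^ Y)))
      (Real.exp (-(c * u ^ Y)) * -(c * (Y * u ^ (Y - 1)))) u := by
    have h := (((Real.hasDerivAt_rpow_const (x := u) (p := Y) (Or.inl hu.ne')).const_mul c).neg).exp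
    refine h.congr_of_eventuallyEq ?_
    filter_upwards [eventually_gt_nhds hu] with v hv
    rw [abs_of_pos hv]; rfl
  have := hd.unique hd2
  rw [integral_neg] at this
  linarith

lemma gauss_cos (t : ℝ) : ∫ w in Ioi (0:ℝ), Real.cos (t * w) * Real.exp (-(1/2) * w ^ 2) =
    Real.sqrt (2 * Real.pi) / 2 * Real.exp (-(1/2) * t ^ 2) := by
  have h := cos_char (Y := 2) (c := 1/2) (μ := gaussianReal 0 1) (fun u => by
    have := charFun_gaussianReal (μ := 0) (v := 1) u
    rw [charFun_apply_real] at this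
    have e : ∀ x : ℝ, Complex.exp (Complex.I * u * x) = Complex.exp (u * x * Complex.I) := by
      intro x; ring_nf
    simp_rw [e, this]
    push_cast
    congr 1
    rw [show |u| ^ (2:ℝ) = u ^ 2 by rw [Real.rpow_two, sq_abs]]
    push_cast
    ring) t
  rw [integral_gaussianReal_eq_integral_smul (by simp)] at h
  have h2 := integral_comp_abs (f := fun w => gaussianPDFReal 0 1 w • Real.cos (t * w))
  have e : ∀ w : ℝ, gaussianPDFReal 0 1 |w| • Real.cos (t * |w|) = gaussianPDFReal 0 1 w • Real.cos (t * w) := by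
    intro w
    congr 1
    · simp [gaussianPDFReal]
    · rw [← Real.cos_abs (t * |w|), ← Real.cos_abs (t * w)]; simp [abs_mul]
  simp_rw [e] at h2
  rw [h] at h2
  have e2 : ∀ w : ℝ, gaussianPDFReal 0 1 w • Real.cos (t * w) =
      (Real.sqrt (2 * Real.pi))⁻¹ * (Real.cos (t * w) * Real.exp (-(1/2) * w ^ 2)) := by
    intro w
    simp only [gaussianPDFReal, NNReal.coe_one, mul_one, sub_zero, smul_eq_mul]
    rw [show -w^2/2 = -(1/2) * w^2 by ring]
    ring
  simp_rw [e2] at h2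
  rw [integral_const_mul, Real.rpow_two, sq_abs, ← neg_mul] at h2
  have hs : 0 < Real.sqrt (2 * Real.pi) := lt_of_lt_of_le one_pos sqrt_two_pi_ge
  rw [h2]
  field_simp

lemma Phi_fourier (x : ℝ) : Phi x = Real.pi⁻¹ * ∫ w in Ioi (0:ℝ), Real.sin (x * w) / w * Real.exp (-(1/2) * w ^ 2) := by
  have hs : 0 < Real.sqrt (2 * Real.pi) := lt_of_lt_of_le one_pos sqrt_two_pi_ge
  have hpi := Real.pi_pos
  have hsq : Real.sqrt (2 * Real.pi) * Real.sqrt (2 * Real.pi) = 2 * Real.pi := Real.mul_self_sqrt (by positivity)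
  have hg : IntegrableOn (fun w : ℝ => Real.exp (-(1/2) * w ^ 2)) (Ioi 0) := 
    (integrable_exp_neg_mul_sq (by norm_num : (0:ℝ) < 1/2)).integrableOn
  have : IsFiniteMeasure (volume.restrict (uIoc 0 x)) := ⟨by simp [uIoc]⟩
  have hswap := intervalIntegral_integral_swap (μ := volume.restrict (Ioi (0:ℝ))) (a := 0) (b := x)
    (f := fun t w => Real.cos (t * w) * Real.exp (-(1/2) * w ^ 2)) (by
      have hb : Integrable (fun z : ℝ × ℝ => (1:ℝ) * Real.exp (-(1/2) * z.2 ^ 2)) ((volume.restrict (uIoc 0 x)).prod (volume.restrict (Ioi (0:ℝ)))) :=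
        Integrable.mul_prod (f := fun _ : ℝ => (1:ℝ)) (g := fun w : ℝ => Real.exp (-(1/2) * w ^ 2)) (integrable_const _) hg
      refine hb.mono' ?_ (ae_of_all _ fun z => ?_)
      · apply Continuous.aestronglyMeasurable
        simp only [Function.uncurry_def]
        fun_prop
      · simp only [Function.uncurry_def, norm_mul, Real.norm_eq_abs, Real.abs_exp]
        gcongr
        exact Real.abs_cos_le_one _)
  simp_rw [gauss_cos] at hswap
  rw [intervalIntegral.integral_const_mul] at hswap
  have e : ∫ w in Ioi (0:ℝ), Real.sin (x * w) / w * Real.exp (-(1/2) * w ^ 2) =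
      ∫ w in Ioi (0:ℝ), ∫ t in (0:ℝ)..x, Real.cos (t * w) * Real.exp (-(1/2) * w ^ 2) := by
    apply setIntegral_congr_fun measurableSet_Ioi
    intro w hw
    have hw0 : w ≠ 0 := ne_of_gt hw
    simp only
    rw [intervalIntegral.integral_mul_const, intervalIntegral.integral_comp_mul_right _ hw0, integral_cos]
    simp
    field_simp
  rw [e, ← hswap, Phi]
  generalize (∫ t in (0:ℝ)..x, Real.exp (-(1/2) * t ^ 2)) = J
  have : Real.pi = Real.sqrt (2 * Real.pi) * Real.sqrt (2 * Real.pi) / 2 := by rw [hsq]; ring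
  have e3 : Real.pi⁻¹ * (Real.sqrt (2 * Real.pi) / 2) = (Real.sqrt (2 * Real.pi))⁻¹ := by
    have : Real.pi⁻¹ = 2 * (Real.sqrt (2 * Real.pi) * Real.sqrt (2 * Real.pi))⁻¹ := by
      rw [hsq]; field_simp
    rw [this]; field_simp
  rw [← mul_assoc, e3]

lemma Phi_odd (x : ℝ) : Phi (-x) = - Phi x := by
  simp [Phi_fourier, neg_mul, Real.sin_neg, neg_div, integral_neg]

lemma abs_sin_le_rpow {e : ℝ} (h0 : 0 < e) (h1 : e < 1) (y : ℝ) : |Real.sin y| ≤ |y| ^ e := by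
  rcases le_total |y| 1 with h | h
  · refine Real.abs_sin_le_abs.trans ?_
    rcases eq_or_ne y 0 with rfl | hy
    · simp [Real.zero_rpow h0.ne']
    · have := Real.rpow_le_rpow_of_exponent_ge (abs_pos.2 hy) h h1.le
      simpa using this
  · exact (Real.abs_sin_le_one y).trans (Real.one_le_rpow h h0.le)

lemma A_int {Y c : ℝ} (h1 : 1 < Y) (hc : 0 < c) {μ : Measure ℝ} [IsProbabilityMeasure μ]
    (hchar : ∀ u : ℝ, (∫ x, Complex.exp (Complex.I * u * x) ∂μ)
      = (Real.exp (-(c * |u| ^ Y)) : ℂ))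
    {p : ℝ → ℝ} (hp : Continuous p)
    (hdens : μ = MeasureTheory.volume.withDensity (fun x => ENNReal.ofReal (p x))) {a : ℝ} (ha : 0 < a) :
    IntegrableOn (fun z => z * p z * Phi (a * z)) (Ioi 0) := by
  have hp0 := dens_nonneg h1 hc hchar hp hdens
  have hmom : Integrable (fun x : ℝ => |x|) μ := by
    simpa using moment one_pos h1 hc hchar
  have hmeas : Measurable (fun x => ENNReal.ofReal (p x)) := by fun_prop
  rw [hdens, integrable_withDensity_iff_integrable_smul' hmeas (by simp)] at hmom
  have hP := Phi_cont
  refine Integrable.mono' hmom.integrableOn (Continuous.aestronglyMeasurable (by fun_prop)) ?_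
  filter_upwards [ae_restrict_mem measurableSet_Ioi] with z hz
  have hz0 : 0 < z := hz
  have haz : 0 ≤ a * z := by positivity
  have := hp0 z
  rw [Real.norm_of_nonneg (mul_nonneg (by positivity) (Phi_nonneg haz)), ENNReal.toReal_ofReal this, smul_eq_mul, abs_of_pos hz0]
  calc _ ≤ z * p z * 1 := by gcongr; exact Phi_le_one haz
    _ = _ := by ring

lemma A_val {Y c : ℝ} (h1 : 1 < Y) (h2 : Y < 2) (hc : 0 < c) {μ : Measure ℝ} [IsProbabilityMeasure μ]
    (hchar : ∀ u : ℝ, (∫ x, Complex.exp (Complex.I * u * x) ∂μ)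
      = (Real.exp (-(c * |u| ^ Y)) : ℂ))
    {p : ℝ → ℝ} (hp : Continuous p)
    (hdens : μ = MeasureTheory.volume.withDensity (fun x => ENNReal.ofReal (p x))) {a : ℝ} (ha : 0 < a) :
    ∫ z in Ioi (0:ℝ), z * p z * Phi (a * z) = a ^ (Y - 1) * (c * Y / (2 * Real.pi) *
      ∫ w in Ioi (0:ℝ), w ^ (Y - 2) * Real.exp (-(1/2) * w ^ 2) * Real.exp (-(c * (a * w) ^ Y))) := by
  have hpi := Real.pi_pos
  have hp0 := dens_nonneg h1 hc hchar hp hdens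
  have hev := dens_even h1 hc hchar hp hdens
  have hmeas : Measurable (fun x => ENNReal.ofReal (p x)) := by fun_prop
  have s1 : ∫ x, x * Phi (a * x) ∂μ = 2 * ∫ z in Ioi (0:ℝ), z * p z * Phi (a * z) := by
    conv_lhs => rw [hdens]
    rw [integral_withDensity_eq_integral_toReal_smul hmeas (by simp), ← integral_comp_abs]
    congr 1
    ext x
    rw [ENNReal.toReal_ofReal (hp0 x), smul_eq_mul]
    rcases abs_choice x with h | h
    · rw [h]; ring
    · rw [h, hev, mul_neg, Phi_odd]; ring
  set r : ℝ := (1 + Y) / 2 with hr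
  have hmom := moment (r := r) (by linarith) (by linarith) hc hchar
  have hg : Integrable (fun w : ℝ => |w| ^ (r - 2) * Real.exp (-(1/2) * w ^ 2)) (volume.restrict (Ioi 0)) := by
    have := integrableOn_rpow_mul_exp_neg_mul_sq (b := 1/2) (by norm_num) (s := r - 2) (by linarith)
    refine this.congr_fun (fun w hw => ?_) measurableSet_Ioi
    have hw0 : (0:ℝ) < w := hw
    simp only [abs_of_pos hw0]
  have hint : Integrable (Function.uncurry fun x w : ℝ => x * (Real.sin (a * x * w) / w * Real.exp (-(1/2) * w ^ 2)))
      (μ.prod (volume.restrict (Ioi 0))) := by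
    refine ((hmom.mul_prod hg).const_mul (a ^ (r - 1))).mono' ?_ (ae_of_all _ fun z => ?_)
    · apply Measurable.aestronglyMeasurable
      simp only [Function.uncurry_def]
      fun_prop
    · obtain ⟨x, w⟩ := z
      simp only [Function.uncurry_apply_pair, norm_mul, norm_div, Real.norm_eq_abs, Real.abs_exp]
      rcases eq_or_ne w 0 with rfl | hw
      · simp only [abs_zero, div_zero, zero_mul, mul_zero]; positivity
      rcases eq_or_ne x 0 with rfl | hx
      · simp only [abs_zero, zero_mul]; positivity
      have hw0 : 0 < |w| := abs_pos.2 hw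
      have hx0 : 0 < |x| := abs_pos.2 hx
      have hb := abs_sin_le_rpow (e := r - 1) (by linarith) (by linarith) (a * x * w)
      rw [abs_mul, abs_mul, abs_of_pos ha, Real.mul_rpow (by positivity) hw0.le, Real.mul_rpow ha.le hx0.le] at hb
      have ex : |x| ^ r = |x| * |x| ^ (r - 1) := by
        rw [Real.rpow_sub_one hx0.ne']; field_simp
      have ew : |w| ^ (r - 2) = |w| ^ (r - 1) / |w| := by
        rw [← Real.rpow_sub_one hw0.ne']; ring_nf
      rw [ex, ew]
      calc _ ≤ |x| * ((a ^ (r - 1) * |x| ^ (r - 1) * |w| ^ (r - 1)) / |w| * Real.exp (-(1/2) * w ^ 2)) := by gcongr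
        _ = _ := by ring
  have s2 : ∫ x, x * Phi (a * x) ∂μ = Real.pi⁻¹ * ∫ w in Ioi (0:ℝ), ∫ x, x * (Real.sin (a * x * w) / w * Real.exp (-(1/2) * w ^ 2)) ∂μ := by
    rw [← integral_integral_swap hint, ← integral_const_mul]
    congr 1
    ext x
    rw [Phi_fourier, integral_const_mul]
    ring
  have s3 : ∫ w in Ioi (0:ℝ), ∫ x, x * (Real.sin (a * x * w) / w * Real.exp (-(1/2) * w ^ 2)) ∂μ =
     ∫ w in Ioi (0:ℝ), (a ^ (Y - 1) * (c * Y)) * (w ^ (Y - 2) * Real.exp (-(1/2) * w ^ 2) * Real.exp (-(c * (a * w) ^ Y))) := by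
    apply setIntegral_congr_fun measurableSet_Ioi
    intro w hw
    have hw0 : (0:ℝ) < w := hw
    have e : ∀ x : ℝ, x * (Real.sin (a * x * w) / w * Real.exp (-(1/2) * w ^ 2)) =
        (x * Real.sin ((a * w) * x)) * (Real.exp (-(1/2) * w ^ 2) / w) := by
      intro x
      rw [show a * w * x = a * x * w by ring]; ring
    simp only [e]
    rw [integral_mul_const, deriv_char h1 hc hchar (by positivity), Real.mul_rpow ha.le hw0.le (z := Y - 1)]
    have ew : w ^ (Y - 2) = w ^ (Y - 1) / w := by
      rw [← Real.rpow_sub_one hw0.ne']; ring_nf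
    rw [ew]; ring
  rw [s3, integral_const_mul] at s2
  rw [s2] at s1
  generalize (∫ w in Ioi (0:ℝ), w ^ (Y - 2) * Real.exp (-(1/2) * w ^ 2) * Real.exp (-(c * (a * w) ^ Y))) = J at *
  generalize (∫ z in Ioi (0:ℝ), z * p z * Phi (a * z)) = K at *
  field_simp at s1 ⊢
  linarith

lemma J_lim {Y c : ℝ} (h1 : 1 < Y) (hc : 0 < c) :
    Tendsto (fun a : ℝ => ∫ w in Ioi (0:ℝ), w ^ (Y - 2) * Real.exp (-(1/2) * w ^ 2) *
      ((Real.exp (-(c * (a * w) ^ Y)) - 1) * a ^ (-Y))) (𝓝[>] 0)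
      (𝓝 (∫ w in Ioi (0:ℝ), -c * (w ^ (2 * Y - 2) * Real.exp (-(1/2) * w ^ 2)))) := by
  have hi := integrableOn_rpow_mul_exp_neg_mul_sq (b := 1/2) (by norm_num) (s := 2 * Y - 2) (by linarith)
  apply tendsto_integral_filter_of_dominated_convergence (fun w => c * (w ^ (2 * Y - 2) * Real.exp (-(1/2) * w ^ 2)))
  · exact Eventually.of_forall fun a => Measurable.aestronglyMeasurable (by fun_prop)
  · filter_upwards [self_mem_nhdsWithin] with a ha
    have ha0 : (0:ℝ) < a := ha
    filter_upwards [ae_restrict_mem measurableSet_Ioi] with w hw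
    have hw0 : (0:ℝ) < w := hw
    have hx : 0 ≤ c * (a * w) ^ Y := by positivity
    have h2 := Real.add_one_le_exp (-(c * (a * w) ^ Y))
    have h3 : Real.exp (-(c * (a * w) ^ Y)) ≤ 1 := Real.exp_le_one_iff.2 (by linarith)
    have h4 : |Real.exp (-(c * (a * w) ^ Y)) - 1| ≤ c * (a * w) ^ Y := by
      rw [abs_le]; constructor <;> linarith
    rw [norm_mul, norm_mul (Real.exp (-(c * (a * w) ^ Y)) - 1), Real.norm_eq_abs (Real.exp _ - 1),
      Real.norm_of_nonneg (show 0 ≤ w ^ (Y - 2) * Real.exp (-(1/2) * w ^ 2) by positivity),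
      Real.norm_of_nonneg (show 0 ≤ a ^ (-Y) by positivity)]
    calc _ ≤ w ^ (Y - 2) * Real.exp (-(1/2) * w ^ 2) * ((c * (a * w) ^ Y) * a ^ (-Y)) := by gcongr
      _ = _ := by
        rw [Real.mul_rpow ha0.le hw0.le, Real.rpow_neg ha0.le, show 2 * Y - 2 = (Y - 2) + Y by ring, Real.rpow_add hw0]
        have : a ^ Y ≠ 0 := by positivity
        field_simp
  · exact hi.const_mul c
  · filter_upwards [ae_restrict_mem measurableSet_Ioi] with w hw
    have hw0 : (0:ℝ) < w := hw
    have hd : HasDerivAt (fun y : ℝ => Real.exp (-(c * w ^ Y * y))) (-(c * w ^ Y)) 0 := by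
      have := (((hasDerivAt_id (0:ℝ)).const_mul (c * w ^ Y)).neg).exp
      simpa using this
    have ht := hd.tendsto_slope
    have ha : Tendsto (fun a : ℝ => a ^ Y) (𝓝[>] 0) (𝓝[≠] 0) := by
      refine tendsto_nhdsWithin_iff.2 ⟨?_, ?_⟩
      · have := (Real.continuousAt_rpow_const 0 Y (Or.inr (by linarith))).tendsto
        rw [Real.zero_rpow (by linarith)] at this
        exact this.mono_left nhdsWithin_le_nhds
      · filter_upwards [self_mem_nhdsWithin] with a ha
        have ha0 : (0:ℝ) < a := ha
        exact (Real.rpow_pos_of_pos ha0 Y).ne'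
    have := (ht.comp ha).const_mul (w ^ (Y - 2) * Real.exp (-(1/2) * w ^ 2))
    have e : w ^ (Y - 2) * Real.exp (-(1/2) * w ^ 2) * -(c * w ^ Y) = -c * (w ^ (2 * Y - 2) * Real.exp (-(1/2) * w ^ 2)) := by
      rw [show 2 * Y - 2 = (Y - 2) + Y by ring, Real.rpow_add hw0]; ring
    rw [e] at this
    refine this.congr' ?_
    filter_upwards [self_mem_nhdsWithin] with a ha
    have ha0 : (0:ℝ) < a := ha
    simp only [Function.comp, slope_def_field, mul_zero, neg_zero, Real.exp_zero, sub_zero]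
    rw [Real.mul_rpow ha0.le hw0.le, Real.rpow_neg ha0.le]
    rw [show c * w ^ Y * a ^ Y = c * (a ^ Y * w ^ Y) by ring]
    rfl

lemma m_val {Y : ℝ} {Ω : Type} [MeasurableSpace Ω] (P : Measure Ω) 
    (W : Ω → ℝ) (hWmeas : Measurable W)
    (hWlaw : Measure.map W P = gaussianReal 0 1) :
    ∫ ω, |W ω| ^ (2*Y - 2) ∂P = 2 * (Real.sqrt (2 * Real.pi))⁻¹ *
      ∫ w in Ioi (0:ℝ), w ^ (2 * Y - 2) * Real.exp (-(1/2) * w ^ 2) := by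
  have e1 : ∫ ω, |W ω| ^ (2*Y - 2) ∂P = ∫ x, |x| ^ (2 * Y - 2) ∂(Measure.map W P) := by
    rw [integral_map hWmeas.aemeasurable (Measurable.aestronglyMeasurable (by fun_prop))]
  rw [e1, hWlaw, integral_gaussianReal_eq_integral_smul (by simp), mul_assoc, ← integral_const_mul, ← integral_comp_abs]
  congr 1
  ext x
  simp only [gaussianPDFReal, NNReal.coe_one, mul_one, sub_zero, smul_eq_mul, sq_abs]
  rw [show -x^2/2 = -(1/2) * x^2 by ring]
  ring

theorem stmt11
    {Ω : Type} [MeasurableSpace Ω] (P : Measure Ω) [IsProbabilityMeasure P]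
    (Y C σ c : ℝ) (hY : Y ∈ Set.Ioo (1:ℝ) 2) (hC : 0 < C) (hσ : 0 < σ)
    (hc : c = -2 * C * Real.Gamma (-Y) * Real.cos (Real.pi * Y / 2))
    (μ : Measure ℝ) [IsProbabilityMeasure μ]
    (hchar : ∀ u : ℝ, (∫ x, Complex.exp (Complex.I * u * x) ∂μ)
      = (Real.exp (-(c * |u| ^ Y)) : ℂ))
    (p : ℝ → ℝ) (hp : Continuous p)
    (hdens : μ = MeasureTheory.volume.withDensity (fun x => ENNReal.ofReal (p x)))
    (W : Ω → ℝ) (hWmeas : Measurable W)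
    (hWlaw : Measure.map W P = gaussianReal 0 1)
    (m : ℝ) (hm : m = ∫ ω, |W ω| ^ (2*Y - 2) ∂P) :
    (∀ s > (0:ℝ), IntegrableOn
        (fun z => z * (p z - C * z ^ (-Y - 1))
          * (P {ω | 0 ≤ σ * W ω ∧ σ * W ω ≤ s * z}).toReal)
        (Set.Ioi 0)) ∧
    Filter.Tendsto
      (fun s => s ^ (-(2*Y - 1)) * ∫ z in Set.Ioi (0:ℝ),
        z * (p z - C * z ^ (-Y - 1))
          * (P {ω | 0 ≤ σ * W ω ∧ σ * W ω ≤ s * z}).toReal)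
      (𝓝[>] (0:ℝ))
      (𝓝 (-(2 * C ^ 2 * Y * Real.cos (Real.pi * Y / 2) ^ 2 * Real.Gamma (-Y) ^ 2
        / (Real.sqrt (2 * Real.pi) * σ ^ (2*Y - 1))) * m)) := by
  obtain ⟨h1, h2⟩ := hY
  have hc0 : 0 < c := c_pos h1 h2 hC hc
  have hpi := Real.pi_pos
  have hEq : ∀ s > (0:ℝ), EqOn (fun z => z * p z * Phi (s / σ * z) - C * (z ^ (-Y) * Phi (s / σ * z)))
      (fun z => z * (p z - C * z ^ (-Y - 1))
          * (P {ω | 0 ≤ σ * W ω ∧ σ * W ω ≤ s * z}).toReal) (Ioi 0) := by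
    intro s hs z hz
    have hz0 : (0:ℝ) < z := hz
    simp only
    rw [prob_eq P σ hσ W hWmeas hWlaw s z hs hz0, Real.rpow_sub_one hz0.ne']
    field_simp
  have hAi : ∀ s > (0:ℝ), IntegrableOn (fun z => z * p z * Phi (s / σ * z)) (Ioi 0) :=
    fun s hs => A_int h1 hc0 hchar hp hdens (by positivity)
  have hBi : ∀ s > (0:ℝ), IntegrableOn (fun z => C * (z ^ (-Y) * Phi (s / σ * z))) (Ioi 0) :=
    fun s hs => (B_int h1 h2 (by positivity)).const_mul C
  refine ⟨fun s hs => ((hAi s hs).sub (hBi s hs)).congr_fun (hEq s hs) measurableSet_Ioi, ?_⟩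
  have hlim := ((J_lim h1 hc0).comp (show Tendsto (fun s : ℝ => s / σ) (𝓝[>] 0) (𝓝[>] 0) by
    refine tendsto_nhdsWithin_iff.2 ⟨?_, ?_⟩
    · have : Tendsto (fun s : ℝ => s / σ) (𝓝 0) (𝓝 (0 / σ)) := tendsto_id.div_const σ
      rw [zero_div] at this
      exact this.mono_left nhdsWithin_le_nhds
    · filter_upwards [self_mem_nhdsWithin] with s hs
      exact div_pos hs hσ)).const_mul ((σ ^ (2 * Y - 1))⁻¹ * (c * Y / (2 * Real.pi)))
  have hfin : (σ ^ (2 * Y - 1))⁻¹ * (c * Y / (2 * Real.pi)) *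
      (∫ w in Ioi (0:ℝ), -c * (w ^ (2 * Y - 2) * Real.exp (-(1/2) * w ^ 2))) =
      -(2 * C ^ 2 * Y * Real.cos (Real.pi * Y / 2) ^ 2 * Real.Gamma (-Y) ^ 2
        / (Real.sqrt (2 * Real.pi) * σ ^ (2*Y - 1))) * m := by
    rw [hm, m_val P W hWmeas hWlaw, integral_const_mul]
    generalize (∫ w in Ioi (0:ℝ), w ^ (2 * Y - 2) * Real.exp (-(1/2) * w ^ 2)) = K
    have hs : 0 < Real.sqrt (2 * Real.pi) := lt_of_lt_of_le one_pos sqrt_two_pi_ge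
    have hsq : Real.sqrt (2 * Real.pi) * Real.sqrt (2 * Real.pi) = 2 * Real.pi := Real.mul_self_sqrt (by positivity)
    have hσp : 0 < σ ^ (2 * Y - 1) := by positivity
    generalize Real.sqrt (2 * Real.pi) = S at *
    generalize σ ^ (2 * Y - 1) = T at *
    rw [← hsq, hc]
    field_simp
  rw [hfin] at hlim
  refine hlim.congr' ?_
  filter_upwards [self_mem_nhdsWithin] with s hs
  have hs0 : (0:ℝ) < s := hs
  have ha : 0 < s / σ := by positivity
  rw [← setIntegral_congr_fun measurableSet_Ioi (hEq s hs0), integral_sub (hAi s hs0) (hBi s hs0),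
    integral_const_mul, A_val h1 h2 hc0 hchar hp hdens ha, B_val h1 h2 ha]
  simp only [Function.comp]
  set a := s / σ with ha_def
  have hg : IntegrableOn (fun w : ℝ => w ^ (Y - 2) * Real.exp (-(1/2) * w ^ 2)) (Ioi 0) :=
    integrableOn_rpow_mul_exp_neg_mul_sq (b := 1/2) (by norm_num) (s := Y - 2) (by linarith)
  have hg2 : IntegrableOn (fun w : ℝ => w ^ (Y - 2) * Real.exp (-(1/2) * w ^ 2) * Real.exp (-(c * (a * w) ^ Y))) (Ioi 0) := by
    refine Integrable.mono' hg (Measurable.aestronglyMeasurable (by fun_prop)) ?_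
    filter_upwards [ae_restrict_mem measurableSet_Ioi] with w hw
    have hw0 : (0:ℝ) < w := hw
    rw [Real.norm_of_nonneg (by positivity)]
    have hx : 0 ≤ c * (a * w) ^ Y := by positivity
    exact mul_le_of_le_one_right (by positivity) (Real.exp_le_one_iff.2 (by linarith))
  have eJ : ∫ w in Ioi (0:ℝ), w ^ (Y - 2) * Real.exp (-(1/2) * w ^ 2) *
      ((Real.exp (-(c * (a * w) ^ Y)) - 1) * a ^ (-Y)) =
      a ^ (-Y) * ((∫ w in Ioi (0:ℝ), w ^ (Y - 2) * Real.exp (-(1/2) * w ^ 2) * Real.exp (-(c * (a * w) ^ Y))) -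
        ∫ w in Ioi (0:ℝ), w ^ (Y - 2) * Real.exp (-(1/2) * w ^ 2)) := by
    rw [← integral_sub hg2 hg, ← integral_const_mul]
    congr 1
    ext w
    ring
  rw [eJ]
  have es : s ^ (-(2 * Y - 1)) * a ^ (Y - 1) = (σ ^ (2 * Y - 1))⁻¹ * a ^ (-Y) := by
    have : s = a * σ := by rw [ha_def]; field_simp
    rw [this, Real.mul_rpow ha.le hσ.le, Real.rpow_neg hσ.le, mul_right_comm, ← Real.rpow_add ha]
    rw [show -(2 * Y - 1) + (Y - 1) = -Y by ring, mul_comm]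
  generalize (∫ w in Ioi (0:ℝ), w ^ (Y - 2) * Real.exp (-(1/2) * w ^ 2) * Real.exp (-(c * (a * w) ^ Y))) = J1
  generalize (∫ w in Ioi (0:ℝ), w ^ (Y - 2) * Real.exp (-(1/2) * w ^ 2)) = J2
  have ec : C * (-2 * Real.Gamma (-Y) * Real.cos (Real.pi * Y / 2)) = c := by rw [hc]; ring
  calc _ = ((σ ^ (2 * Y - 1))⁻¹ * a ^ (-Y)) * (c * Y / (2 * Real.pi) * (J1 - J2)) := by ring
    _ = s ^ (-(2 * Y - 1)) * (a ^ (Y - 1) * (c * Y / (2 * Real.pi) * (J1 - J2))) := by rw [← es]; ring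
    _ = _ := by
      conv_lhs => rw [mul_sub, ← ec]
      rw [← ec]
      ring
end

section
/- Gaussian-smoothed second-order stable density correction, first-moment version (limit of B₂₂^{(3)} in the proof of Theorem 3.3): for every s > 0 the integral J(s) := ∫₀^∞ E[σ·W·1_{0 ≤ σ·W ≤ s·z}]·(p(z) − C·z^{−Y−1}) dz converges absolutely, and lim_{s→0⁺} s^{−2Y}·J(s) = −((2Y−1)·C²·cos²(πY/2)·Γ(−Y)² / (√(2π)·σ^{2Y−1}))·m. -/
open MeasureTheory ProbabilityTheory Filter Topology Asymptotics Set

lemma aux_gauss_moment (r : ℝ) (hr : -1 < r) :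
    ∫ x, |x| ^ r ∂(gaussianReal 0 1) = 2 ^ (r / 2) * Real.Gamma ((r + 1) / 2) / √Real.pi := by
  rw [integral_gaussianReal_eq_integral_smul one_ne_zero, gaussianPDFReal_def]
  have h1 : ∀ x : ℝ, ((√(2 * Real.pi * ((1 : NNReal) : ℝ)))⁻¹ *
      Real.exp (-(x - 0) ^ 2 / (2 * ((1 : NNReal) : ℝ)))) • |x| ^ r
      = (fun y : ℝ => (√(2 * Real.pi))⁻¹ * (y ^ r * Real.exp (-(1 / 2) * y ^ (2 : ℝ)))) |x| := by
    intro x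
    simp only [smul_eq_mul, NNReal.coe_one, mul_one, sub_zero, Real.rpow_two, sq_abs]
    rw [show -x ^ 2 / 2 = -(1/2) * x ^ 2 by ring]
    ring
  rw [integral_congr_ae (Eventually.of_forall h1), integral_comp_abs
      (f := fun y : ℝ => (√(2 * Real.pi))⁻¹ * (y ^ r * Real.exp (-(1 / 2) * y ^ (2 : ℝ)))), integral_const_mul,
    integral_rpow_mul_exp_neg_mul_rpow two_pos hr (by norm_num)]
  have h2 : ((1 / 2 : ℝ)) ^ (-(r + 1) / 2) = 2 ^ (r / 2) * √2 := by
    rw [one_div, Real.inv_rpow two_pos.le, ← Real.rpow_neg two_pos.le, Real.sqrt_eq_rpow,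
      ← Real.rpow_add two_pos]
    congr 1; ring
  rw [h2, Real.sqrt_mul two_pos.le]
  have : √(2:ℝ) ≠ 0 := by positivity
  have : √Real.pi ≠ 0 := by positivity
  field_simp

lemma aux_gauss_integrable (r : ℝ) (hr : 0 ≤ r) :
    Integrable (fun x : ℝ => |x| ^ r) (gaussianReal 0 1) := by
  rcases hr.eq_or_lt with rfl | hr
  · simp
  have := (memLp_id_gaussianReal (μ := 0) (v := 1) r.toNNReal).integrable_norm_rpow'
  have e : ((r.toNNReal : NNReal) : ENNReal).toReal = r := by
    simp [hr.le]
  rw [e] at this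
  simpa using this

lemma aux_trunc (σ b : ℝ) (hσ : 0 < σ) (hb : 0 ≤ b) :
    ∫ x, Set.indicator {x | 0 ≤ σ * x ∧ σ * x ≤ b} (fun x => σ * x) x ∂(gaussianReal 0 1)
      = σ / √(2 * Real.pi) * (1 - Real.exp (-(b ^ 2 / (2 * σ ^ 2)))) := by
  rw [integral_gaussianReal_eq_integral_smul one_ne_zero, gaussianPDFReal_def]
  have hset : {x | 0 ≤ σ * x ∧ σ * x ≤ b} = Icc 0 (b / σ) := by
    ext x
    simp only [mem_ofPred_eq, mem_Icc, mul_nonneg_iff_of_pos_left hσ, le_div_iff₀ hσ, mul_comm x σ]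
  rw [hset]
  have h1 : ∀ x : ℝ, ((√(2 * Real.pi * ((1 : NNReal) : ℝ)))⁻¹ *
      Real.exp (-(x - 0) ^ 2 / (2 * ((1 : NNReal) : ℝ)))) • Set.indicator (Icc 0 (b / σ)) (fun x => σ * x) x
      = Set.indicator (Icc 0 (b / σ)) (fun x => σ / √(2 * Real.pi) * (x * Real.exp (-x ^ 2 / 2))) x := by
    intro x
    by_cases hx : x ∈ Icc 0 (b / σ)
    · simp only [hx, indicator_of_mem, smul_eq_mul, NNReal.coe_one, mul_one, sub_zero]
      ring
    · simp [hx]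
  simp_rw [h1]
  rw [integral_indicator measurableSet_Icc, integral_Icc_eq_integral_Ioc,
    ← intervalIntegral.integral_of_le (by positivity), intervalIntegral.integral_const_mul]
  congr 1
  have : ∀ x ∈ uIcc 0 (b / σ), HasDerivAt (fun x : ℝ => - Real.exp (-x ^ 2 / 2))
      (x * Real.exp (-x ^ 2 / 2)) x := by
    intro x _
    have := ((((hasDerivAt_id x).pow 2).neg.div_const 2).exp).neg
    convert! this using 1
    simp; ring
  rw [intervalIntegral.integral_eq_sub_of_hasDerivAt this
    ((by fun_prop : Continuous _).intervalIntegrable _ _)]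
  have : -(b / σ) ^ 2 / 2 = -(b ^ 2 / (2 * σ ^ 2)) := by field_simp
  rw [this]; simp; ring

/-- the constant identity -/
lemma aux_const (Y C c : ℝ) (hY : Y ∈ Set.Ioo (1:ℝ) 2)
    (hc : c = -2 * C * Real.Gamma (-Y) * Real.cos (Real.pi * Y / 2)) :
    C * Real.Gamma (1 - Y / 2) / Y =
      1 / 2 * c * 2 ^ Y * Real.Gamma ((Y + 1) / 2) / √Real.pi := by
  obtain ⟨h1, h2⟩ := hY
  have hcos : Real.cos (Real.pi * Y / 2) < 0 := by
    apply Real.cos_neg_of_pi_div_two_lt_of_lt <;> nlinarith [Real.pi_pos]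
  have hd := Real.Gamma_mul_Gamma_add_half (-Y/2)
  have hr := Real.Gamma_mul_Gamma_one_sub ((Y + 1) / 2)
  rw [show Real.pi * ((Y + 1) / 2) = Real.pi * Y / 2 + Real.pi / 2 by ring,
    Real.sin_add_pi_div_two, eq_div_iff hcos.ne] at hr
  rw [show 2 * (-Y/2) = -Y by ring, show 1 - -Y = 1 + Y by ring,
    show -Y / 2 + 1/2 = 1 - (Y+1)/2 by ring, Real.rpow_add two_pos, Real.rpow_one] at hd
  have hg : Real.Gamma (1 - Y / 2) = -Y / 2 * Real.Gamma (-Y/2) := by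
    rw [← Real.Gamma_add_one (by linarith : -Y/2 ≠ 0)]; congr 1; ring
  rw [hg, hc]
  have hpi : √Real.pi * √Real.pi = Real.pi := Real.mul_self_sqrt Real.pi_pos.le
  have hpi0 : √Real.pi ≠ 0 := by positivity
  have hG : Real.Gamma (-Y / 2) * Real.pi = 2 * Real.Gamma (-Y) * 2 ^ Y * √Real.pi
      * Real.Gamma ((Y+1)/2) * Real.cos (Real.pi * Y / 2) := by
    linear_combination (Real.Gamma ((Y+1)/2) * Real.cos (Real.pi * Y / 2)) * hd
      - Real.Gamma (-Y / 2) * hr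
  have hY0 : Y ≠ 0 := by linarith
  have hG' : Real.Gamma (-Y / 2) * √Real.pi = 2 * Real.Gamma (-Y) * 2 ^ Y
      * Real.Gamma ((Y+1)/2) * Real.cos (Real.pi * Y / 2) := by
    apply mul_right_cancel₀ hpi0
    rw [mul_assoc, hpi, hG]; ring
  generalize Real.Gamma (-Y / 2) = A at *
  generalize Real.cos (Real.pi * Y / 2) = B at *
  field_simp
  linear_combination (-C) * hG'

lemma aux_cpos (Y C c : ℝ) (hY : Y ∈ Set.Ioo (1:ℝ) 2) (hC : 0 < C)
    (hc : c = -2 * C * Real.Gamma (-Y) * Real.cos (Real.pi * Y / 2)) : 0 < c := by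
  have h := aux_const Y C c hY hc
  obtain ⟨h1, h2⟩ := hY
  have hl : 0 < C * Real.Gamma (1 - Y / 2) / Y := by
    have := Real.Gamma_pos_of_pos (show 0 < 1 - Y / 2 by linarith)
    positivity
  have hg := Real.Gamma_pos_of_pos (show 0 < (Y + 1) / 2 by linarith)
  rw [h] at hl
  by_contra hn
  push Not at hn
  have : 1 / 2 * c * 2 ^ Y * Real.Gamma ((Y + 1) / 2) / √Real.pi =
    c * (1 / 2 * 2 ^ Y * Real.Gamma ((Y + 1) / 2) / √Real.pi) := by ring
  rw [this] at hl
  have h3 : 0 < (1 / 2 * 2 ^ Y * Real.Gamma ((Y + 1) / 2) / √Real.pi) := by positivity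
  nlinarith

lemma aux_limit (Y : ℝ) (hY : 0 ≤ Y) :
    Tendsto (fun θ : ℝ => ∫ x, (1 - Real.exp (-(θ * |x| ^ Y)) - θ * |x| ^ Y) / θ ^ 2 ∂(gaussianReal 0 1))
      (𝓝[>] 0) (𝓝 (∫ x, -(|x| ^ (2 * Y) / 2) ∂(gaussianReal 0 1))) := by
  have hsq : ∀ x : ℝ, |x| ^ (2 * Y) = (|x| ^ Y) ^ 2 := by
    intro x
    rw [mul_comm, Real.rpow_mul (abs_nonneg x)]; norm_cast
  have hm : Measurable (fun x : ℝ => |x| ^ Y) := by fun_prop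
  apply tendsto_integral_filter_of_dominated_convergence (fun x => |x| ^ (2 * Y) / 2)
  · refine Eventually.of_forall fun θ => Measurable.aestronglyMeasurable ?_
    fun_prop
  · filter_upwards [self_mem_nhdsWithin] with θ (hθ : 0 < θ)
    refine Eventually.of_forall fun x => ?_
    have hy : 0 ≤ θ * |x| ^ Y := by positivity
    rw [hsq, Real.norm_eq_abs, abs_div, abs_of_pos (show 0 < θ ^ 2 by positivity),
      div_le_iff₀ (by positivity)]
    have e1 := Real.one_sub_le_exp_neg (θ * |x| ^ Y)
    have e2 : Real.exp (-(θ * |x| ^ Y)) ≤ 1 - θ * |x| ^ Y + (θ * |x| ^ Y) ^ 2 / 2 := by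
      have := Real.quadratic_le_exp_of_nonneg hy
      rw [Real.exp_neg]
      apply inv_le_of_inv_le₀
      · nlinarith [sq_nonneg (θ * |x| ^ Y - 1)]
      · refine le_trans ?_ this
        apply inv_le_of_inv_le₀ (by positivity)
        rw [inv_le_iff_one_le_mul₀ (by positivity)]
        nlinarith [sq_nonneg ((θ * |x| ^ Y)^2)]
    rw [abs_le]
    constructor <;> nlinarith
  · exact (aux_gauss_integrable _ (by positivity)).div_const 2
  · refine Eventually.of_forall fun x => ?_
    rw [hsq]
    set y := |x| ^ Y with hy
    have hy0 : 0 ≤ y := by positivity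
    -- limit
    have hb : ∀ᶠ θ in 𝓝[>] (0:ℝ), |(1 - Real.exp (-(θ * y)) - θ * y) / θ ^ 2 - -(y ^ 2 / 2)| ≤ θ * y ^ 3 := by
      have : Tendsto (fun θ : ℝ => θ * y) (𝓝[>] 0) (𝓝 0) := by
        have : Tendsto (fun θ : ℝ => θ * y) (𝓝 0) (𝓝 (0 * y)) := (continuous_id.mul continuous_const).tendsto 0
        rw [zero_mul] at this
        exact this.mono_left nhdsWithin_le_nhds
      filter_upwards [self_mem_nhdsWithin, this.eventually (gt_mem_nhds one_pos)] with θ (hθ : 0 < θ) h1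
      have hw : 0 ≤ θ * y := by positivity
      have := Real.exp_bound (x := -(θ * y)) (n := 3) (by rw [abs_neg, abs_of_nonneg hw]; exact h1.le) (by norm_num)
      rw [abs_neg, abs_of_nonneg hw] at this
      simp [Finset.sum_range_succ, Nat.factorial] at this
      have e : (1 - Real.exp (-(θ * y)) - θ * y) / θ ^ 2 - -(y ^ 2 / 2) =
        -(Real.exp (-(θ * y)) - (1 + -(θ * y) + (θ * y) ^ 2 / 2)) / θ ^ 2 := by
        field_simp; ring
      rw [e, abs_div, abs_neg, abs_of_pos (show 0 < θ ^ 2 by positivity), div_le_iff₀ (by positivity)]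
      refine this.trans ?_
      rw [mul_pow]
      have : 0 ≤ θ ^ 3 * y ^ 3 := by positivity
      nlinarith
    rw [tendsto_iff_norm_sub_tendsto_zero]
    refine squeeze_zero' (Eventually.of_forall fun _ => norm_nonneg _) hb ?_
    have : Tendsto (fun θ : ℝ => θ * y ^ 3) (𝓝 0) (𝓝 (0 * y ^ 3)) := (continuous_id.mul continuous_const).tendsto 0
    rw [zero_mul] at this
    exact this.mono_left nhdsWithin_le_nhds

lemma aux_one_sub_exp_bound (a z : ℝ) (ha : 0 < a) :
    0 ≤ 1 - Real.exp (-(a * z ^ 2)) ∧ 1 - Real.exp (-(a * z ^ 2)) ≤ 1 ∧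
      1 - Real.exp (-(a * z ^ 2)) ≤ a * z ^ 2 := by
  refine ⟨?_, ?_, ?_⟩
  · have : Real.exp (-(a * z ^ 2)) ≤ 1 := by
      rw [Real.exp_le_one_iff]; have := sq_nonneg z; nlinarith
    linarith
  · linarith [Real.exp_pos (-(a * z ^ 2))]
  · linarith [Real.one_sub_le_exp_neg (a * z ^ 2)]

lemma aux_K_integrable (Y a : ℝ) (hY : Y ∈ Set.Ioo (1:ℝ) 2) (ha : 0 < a) :
    IntegrableOn (fun z : ℝ => (1 - Real.exp (-(a * z ^ 2))) * z ^ (-Y - 1)) (Ioi 0) := by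
  obtain ⟨h1, h2⟩ := hY
  have hm : Measurable (fun z : ℝ => (1 - Real.exp (-(a * z ^ 2))) * z ^ (-Y - 1)) := by fun_prop
  rw [← Ioc_union_Ioi_eq_Ioi (zero_le_one' ℝ)]
  refine IntegrableOn.union ?_ ?_
  · have : IntegrableOn (fun z : ℝ => a * z ^ (1 - Y)) (Ioc 0 1) := by
      rw [← intervalIntegrable_iff_integrableOn_Ioc_of_le zero_le_one]
      exact (intervalIntegral.intervalIntegrable_rpow' (by linarith)).const_mul a
    refine Integrable.mono' this hm.aestronglyMeasurable ?_
    filter_upwards [ae_restrict_mem measurableSet_Ioc] with z hz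
    obtain ⟨b1, b2, b3⟩ := aux_one_sub_exp_bound a z ha
    have hz0 : 0 < z := hz.1
    have hp : 0 < z ^ (-Y - 1) := Real.rpow_pos_of_pos hz0 _
    rw [Real.norm_eq_abs, abs_of_nonneg (by positivity)]
    have : z ^ (1 - Y) = z ^ 2 * z ^ (-Y - 1) := by
      rw [← Real.rpow_two, ← Real.rpow_add hz0]; congr 1; ring
    rw [this, ← mul_assoc]
    gcongr
  · have : IntegrableOn (fun z : ℝ => z ^ (-Y - 1)) (Ioi 1) :=
      integrableOn_Ioi_rpow_of_lt (by linarith) one_pos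
    refine Integrable.mono' this hm.aestronglyMeasurable ?_
    filter_upwards [ae_restrict_mem measurableSet_Ioi] with z hz
    obtain ⟨b1, b2, b3⟩ := aux_one_sub_exp_bound a z ha
    have hz0 : 0 < z := lt_trans one_pos hz
    have hp : 0 < z ^ (-Y - 1) := Real.rpow_pos_of_pos hz0 _
    rw [Real.norm_eq_abs, abs_of_nonneg (by positivity)]
    nlinarith

lemma aux_K (Y a : ℝ) (hY : Y ∈ Set.Ioo (1:ℝ) 2) (ha : 0 < a) :
    ∫ z in Ioi (0:ℝ), (1 - Real.exp (-(a * z ^ 2))) * z ^ (-Y - 1) =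
      a ^ (Y / 2) * Real.Gamma (1 - Y / 2) / Y := by
  have hI := aux_K_integrable Y a hY ha
  obtain ⟨h1, h2⟩ := hY
  have hI2 : IntegrableOn (fun z : ℝ => z ^ (1 - Y) * Real.exp (-a * z ^ (2:ℝ))) (Ioi 0) :=
    integrableOn_rpow_mul_exp_neg_mul_rpow (by linarith) two_pos ha
  have hI2' := integral_rpow_mul_exp_neg_mul_rpow (q := 1 - Y) two_pos (by linarith) ha
  have hY0 : Y ≠ 0 := by linarith
  have key := integral_Ioi_of_hasDerivAt_of_tendsto (a := (0:ℝ)) (m := 0)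
    (f := fun z : ℝ => -((1 - Real.exp (-(a * z ^ 2))) * z ^ (-Y) / Y))
    (f' := fun z : ℝ => (1 - Real.exp (-(a * z ^ 2))) * z ^ (-Y - 1)
      - 2 * a / Y * (z ^ (1 - Y) * Real.exp (-a * z ^ (2:ℝ)))) ?_ ?_
      (hI.sub (hI2.const_mul _)) ?_
  · rw [integral_sub hI (hI2.const_mul _), integral_const_mul, hI2'] at key
    simp only [ne_eq, OfNat.ofNat_ne_zero, not_false_eq_true, zero_pow, mul_zero, neg_zero,
      Real.exp_zero, sub_self, zero_mul, zero_div] at key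
    rw [sub_eq_zero] at key
    rw [key, show (1 - Y + 1) / 2 = 1 - Y / 2 by ring]
    have : a ^ (Y / 2) = a * a ^ (-(1 - Y + 1) / 2) := by
      nth_rewrite 2 [← Real.rpow_one a]
      rw [← Real.rpow_add ha]; congr 1; ring
    rw [this]; field_simp
  · rw [ContinuousWithinAt]
    simp only [ne_eq, OfNat.ofNat_ne_zero, not_false_eq_true, zero_pow, mul_zero, neg_zero,
      Real.exp_zero, sub_self, zero_mul, zero_div]
    have hb : ∀ᶠ z in 𝓝[≥] (0:ℝ), |(-((1 - Real.exp (-(a * z ^ 2))) * z ^ (-Y) / Y))| ≤ a * z ^ (2 - Y) / Y := by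
      filter_upwards [self_mem_nhdsWithin] with z (hz : 0 ≤ z)
      rcases hz.eq_or_lt with rfl | hz
      · simp [Real.zero_rpow (show 2 - Y ≠ 0 by linarith)]
      obtain ⟨b1, b2, b3⟩ := aux_one_sub_exp_bound a z ha
      have hp : 0 < z ^ (-Y) := Real.rpow_pos_of_pos hz _
      rw [abs_neg, abs_of_nonneg (by positivity)]
      have : z ^ (2 - Y) = z ^ 2 * z ^ (-Y) := by
        rw [← Real.rpow_two, ← Real.rpow_add hz]; congr 1
      rw [this, ← mul_assoc]
      gcongr
    apply squeeze_zero_norm' hb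
    have : Tendsto (fun z : ℝ => a * z ^ (2 - Y) / Y) (𝓝 0) (𝓝 (a * 0 ^ (2 - Y) / Y)) :=
      (((Real.continuousAt_rpow_const 0 (2 - Y) (Or.inr (by linarith))).tendsto).const_mul a).div_const Y
    rw [Real.zero_rpow (show 2 - Y ≠ 0 by linarith), mul_zero, zero_div] at this
    exact this.mono_left nhdsWithin_le_nhds
  · intro z (hz : 0 < z)
    have d1 : HasDerivAt (fun z : ℝ => 1 - Real.exp (-(a * z ^ 2)))
        (-(Real.exp (-(a * z ^ 2)) * -(a * (2 * z)))) z := by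
      have := ((((hasDerivAt_id z).pow 2).const_mul a).neg.exp).const_sub 1
      convert! this using 1
      simp
    have d2 := Real.hasDerivAt_rpow_const (x := z) (p := -Y) (Or.inl hz.ne')
    have := ((d1.mul d2).div_const Y).neg
    convert! this using 1
    have : z ^ (1 - Y) = z * z ^ (-Y) := by
      nth_rewrite 2 [← Real.rpow_one z]
      rw [← Real.rpow_add hz]; congr 1
    rw [this, Real.rpow_two, neg_mul]
    field_simp
    ring
  · have hb : ∀ᶠ z in atTop, |(-((1 - Real.exp (-(a * z ^ 2))) * z ^ (-Y) / Y))| ≤ z ^ (-Y) / Y := by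
      filter_upwards [eventually_gt_atTop (0:ℝ)] with z hz
      obtain ⟨b1, b2, b3⟩ := aux_one_sub_exp_bound a z ha
      have hp : 0 < z ^ (-Y) := Real.rpow_pos_of_pos hz _
      rw [abs_neg, abs_of_nonneg (by positivity)]
      gcongr
      nlinarith
    apply squeeze_zero_norm' hb
    have := (tendsto_rpow_neg_atTop (show 0 < Y by linarith)).div_const Y
    simpa using this

lemma aux_fubini (μ : Measure ℝ) [IsProbabilityMeasure μ] (c Y t : ℝ)
    (hchar : ∀ u : ℝ, (∫ x, Complex.exp (Complex.I * u * x) ∂μ)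
      = (Real.exp (-(c * |u| ^ Y)) : ℂ)) :
    ∫ x, Real.exp (-(t ^ 2 / 2 * x ^ 2)) ∂μ =
      ∫ w, Real.exp (-(c * |t * w| ^ Y)) ∂(gaussianReal 0 1) := by
  have hint : Integrable (Function.uncurry fun (x w : ℝ) => Complex.exp (Complex.I * (t * w : ℝ) * x))
      (μ.prod (gaussianReal 0 1)) := by
    refine Integrable.of_bound (C := 1) (Continuous.aestronglyMeasurable (by fun_prop)) ?_
    refine Eventually.of_forall fun q => ?_
    simp only [Function.uncurry]
    rw [mul_assoc, mul_comm, ← Complex.ofReal_mul, Complex.norm_exp_ofReal_mul_I]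
  have hs := integral_integral_swap hint
  simp_rw [hchar] at hs
  have h1 : ∀ x : ℝ, ∫ w, Complex.exp (Complex.I * (t * w : ℝ) * x) ∂(gaussianReal 0 1) =
      (Real.exp (-(t ^ 2 / 2 * x ^ 2)) : ℂ) := by
    intro x
    have := charFun_gaussianReal (μ := 0) (v := 1) (t * x)
    rw [charFun_apply_real] at this
    convert! this using 1
    · congr 1; ext w; congr 1; push_cast; ring
    · push_cast; congr 1; simp; ring
  simp_rw [h1] at hs
  simp_rw [integral_complex_ofReal] at hs
  exact_mod_cast hs

lemma aux_symm (μ : Measure ℝ) [IsProbabilityMeasure μ] (c Y : ℝ)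
    (hchar : ∀ u : ℝ, (∫ x, Complex.exp (Complex.I * u * x) ∂μ)
      = (Real.exp (-(c * |u| ^ Y)) : ℂ)) : μ.map (fun x => -x) = μ := by
  have : IsProbabilityMeasure (μ.map (fun x => -x)) := Measure.isProbabilityMeasure_map (by fun_prop)
  apply Measure.ext_of_charFun
  ext u
  rw [charFun_apply_real, charFun_apply_real, integral_map (by fun_prop) (by fun_prop)]
  have h1 := hchar u
  have h2 := hchar (-u)
  rw [abs_neg] at h2
  rw [← h1] at h2
  convert! h2 using 3
  · congr 1; push_cast; ring
  · congr 1; push_cast; ring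

lemma aux_half (μ : Measure ℝ) [IsProbabilityMeasure μ] (hs : μ.map (fun x => -x) = μ)
    (f : ℝ → ℝ) (hf : Continuous f) (hfi : Integrable f μ) (heven : ∀ x, f (-x) = f x) (h0 : f 0 = 0) :
    ∫ x in Ioi (0:ℝ), f x ∂μ = 1 / 2 * ∫ x, f x ∂μ := by
  have h1 : ∫ x in Iio (0:ℝ), f x ∂μ = ∫ x in Ioi (0:ℝ), f x ∂μ := by
    conv_lhs => rw [← hs]
    rw [setIntegral_map measurableSet_Iio hf.aestronglyMeasurable (by fun_prop)]
    simp [heven]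
  have h2 : ∫ x in Iic (0:ℝ), f x ∂μ = ∫ x in Iio (0:ℝ), f x ∂μ := by
    rw [← Iio_union_right, setIntegral_union (by simp) (by simp) hfi.integrableOn hfi.integrableOn]
    simp [h0]
  have h3 := integral_add_compl (measurableSet_Ioi (a := (0:ℝ))) hfi
  rw [compl_Ioi, h2, h1] at h3
  linarith

lemma aux_int_exp (Y b : ℝ) (hY : 0 < Y) (hb : 0 < b) :
    Integrable (fun w : ℝ => Real.exp (-(b * |w| ^ Y))) := by
  have h := integrableOn_rpow_mul_exp_neg_mul_rpow (s := 0) (by norm_num) hY hb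
  have h1 : IntegrableOn (fun w : ℝ => Real.exp (-(b * |w| ^ Y))) (Ioi 0) := by
    refine h.congr_fun (fun x (hx : 0 < x) => ?_) measurableSet_Ioi
    simp [abs_of_pos hx]
  have h2 : IntegrableOn (fun w : ℝ => Real.exp (-(b * |w| ^ Y))) (Iic 0) := by
    rw [← Measure.map_neg_eq_self (volume : Measure ℝ)]
    let m : MeasurableEmbedding fun x : ℝ => -x := (Homeomorph.neg ℝ).measurableEmbedding
    rw [m.integrableOn_map_iff]
    simp_rw [Function.comp_def, abs_neg, neg_preimage, neg_Iic, neg_zero]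
    exact Iff.mpr integrableOn_Ici_iff_integrableOn_Ioi h1
  rw [← integrableOn_univ, ← Iic_union_Ioi (a := (0:ℝ))]
  exact h2.union h1

lemma aux_int_exp2 (Y b t : ℝ) (hY : 1 < Y) (hb : 0 < b) :
    Integrable (fun w : ℝ => Real.exp (-(b * |w| ^ Y)) * Real.exp (t * w)) := by
  have h := aux_int_exp Y (b / 2) (by linarith) (half_pos hb)
  set R := (2 * |t| / b) ^ (1 / (Y - 1)) with hR
  have hR0 : 0 ≤ R := by positivity
  refine Integrable.mono' (h.const_mul (Real.exp (|t| * R))) (Continuous.aestronglyMeasurable ?_) ?_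
  · have : Continuous (fun w : ℝ => |w| ^ Y) := continuous_abs.rpow_const (fun _ => Or.inr (by linarith))
    fun_prop
  refine Eventually.of_forall fun w => ?_
  rw [Real.norm_eq_abs, abs_of_pos (by positivity), ← Real.exp_add, ← Real.exp_add, Real.exp_le_exp]
  have h1 : t * w ≤ |t| * |w| := by rw [← abs_mul]; exact le_abs_self _
  suffices |t| * |w| ≤ |t| * R + b / 2 * |w| ^ Y by linarith
  rcases le_total |w| R with hw | hw
  · have : |t| * |w| ≤ |t| * R := by gcongr
    have : 0 ≤ b / 2 * |w| ^ Y := by positivity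
    linarith
  · rcases (abs_nonneg w).eq_or_lt with h0 | h0
    · rw [← h0]; rw [mul_zero]; positivity
    have e : |w| ^ Y = |w| ^ (Y - 1) * |w| := by
      nth_rewrite 3 [← Real.rpow_one |w|]
      rw [← Real.rpow_add h0]; congr 1; ring
    have e2 : 2 * |t| / b ≤ |w| ^ (Y - 1) := by
      calc 2 * |t| / b = R ^ (Y - 1) := by
            rw [hR, ← Real.rpow_mul (by positivity), one_div_mul_cancel (by linarith), Real.rpow_one]
        _ ≤ _ := by gcongr
    rw [div_le_iff₀ hb] at e2
    rw [e]
    have : 0 ≤ |t| * R := by positivity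
    nlinarith

lemma aux_p_nonneg (Y c : ℝ) (hY : 1 < Y) (hc : 0 < c) (μ : Measure ℝ) [IsProbabilityMeasure μ]
    (hchar : ∀ u : ℝ, (∫ x, Complex.exp (Complex.I * u * x) ∂μ)
      = (Real.exp (-(c * |u| ^ Y)) : ℂ))
    (p : ℝ → ℝ) (hp : Continuous p)
    (hdens : μ = MeasureTheory.volume.withDensity (fun x => ENNReal.ofReal (p x))) (x₀ : ℝ) :
    0 ≤ p x₀ := by
  by_contra hneg
  push Not at hneg
  have hpm : Measurable (fun x => ENNReal.ofReal (p x)) := by fun_prop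
  set f : ℝ → ℂ := fun x => ((max (p x) 0 : ℝ) : ℂ) with hf
  have hfc : Continuous f := by fun_prop
  have htr : ∀ x, (ENNReal.ofReal (p x)).toReal = max (p x) 0 := fun x => ENNReal.toReal_ofReal'
  have hfi : Integrable f := by
    have h1 : Integrable (fun _ : ℝ => (1:ℂ)) μ := integrable_const _
    rw [hdens, integrable_withDensity_iff_integrable_smul' hpm (by simp)] at h1
    simpa [htr] using h1
  have hF : FourierTransform.fourier f = fun w : ℝ => (Real.exp (-(c * |-2 * Real.pi * w| ^ Y)) : ℂ) := by
    ext w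
    rw [Real.fourier_real_eq_integral_exp_smul, ← hchar (-2 * Real.pi * w)]
    conv_rhs => rw [hdens]
    rw [integral_withDensity_eq_integral_toReal_smul hpm (by simp)]
    congr 1; ext x
    rw [htr, smul_eq_mul, mul_comm, Complex.real_smul]
    congr 2; push_cast; ring
  set b := c * (2 * Real.pi) ^ Y with hb
  have hb0 : 0 < b := by positivity
  have hbe : ∀ w : ℝ, c * |-2 * Real.pi * w| ^ Y = b * |w| ^ Y := by
    intro w
    rw [abs_mul, Real.mul_rpow (abs_nonneg _) (abs_nonneg _), hb, abs_mul, abs_neg,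
      abs_of_pos Real.pi_pos, abs_of_pos (two_pos : (0:ℝ) < 2), mul_assoc]
  simp_rw [hbe] at hF
  have hFi : Integrable (FourierTransform.fourier f) := by
    rw [hF]
    exact (aux_int_exp Y b (by linarith) hb0).ofReal
  have hinv := hfc.fourierInv_fourier_eq hfi hFi
  set ν : Measure ℝ := volume.withDensity (fun w => ENNReal.ofReal (Real.exp (-(b * |w| ^ Y)))) with hν
  have hνm : Measurable (fun w : ℝ => ENNReal.ofReal (Real.exp (-(b * |w| ^ Y)))) := by fun_prop
  have hset : integrableExpSet id ν = univ := by
    ext t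
    simp only [integrableExpSet, mem_ofPred_eq, mem_univ, iff_true, id]
    rw [hν, integrable_withDensity_iff_integrable_smul' hνm (by simp)]
    have := aux_int_exp2 Y b t hY hb0
    refine this.congr (Eventually.of_forall fun w => ?_)
    simp [ENNReal.toReal_ofReal (Real.exp_pos _).le]
  have han : AnalyticOnNhd ℂ (complexMGF id ν) univ := by
    have := analyticOnNhd_complexMGF (X := id) (μ := ν)
    rw [hset] at this
    simpa using this
  have hfx : ∀ x : ℝ, f x = complexMGF id ν (2 * Real.pi * x * Complex.I) := by
    intro x
    rw [← hinv, hF, Real.fourierInv_eq', complexMGF, hν,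
      integral_withDensity_eq_integral_toReal_smul hνm (by simp)]
    congr 1; ext w
    rw [ENNReal.toReal_ofReal (Real.exp_pos _).le, smul_eq_mul, mul_comm, Complex.real_smul]
    congr 2
    simp; ring
  have hzero : ∀ x, f x = 0 := by
    have hanR : AnalyticOnNhd ℝ f univ := by
      have e : f = fun x : ℝ => complexMGF id ν (2 * Real.pi * x * Complex.I) := funext hfx
      rw [e]
      intro x _
      have h1 : AnalyticAt ℝ (complexMGF id ν) (2 * Real.pi * (x:ℂ) * Complex.I) :=
        (han _ (mem_univ _)).restrictScalars
      have h2 : AnalyticAt ℝ (fun x : ℝ => (2 * Real.pi * (x:ℂ) * Complex.I)) x :=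
        (analyticAt_const.mul (Complex.ofRealCLM.analyticAt x)).mul analyticAt_const
      exact AnalyticAt.fun_comp (f := fun x : ℝ => (2 * Real.pi * (x:ℂ) * Complex.I)) h1 h2
    have := hanR.eqOn_zero_of_preconnected_of_eventuallyEq_zero isPreconnected_univ (mem_univ x₀) ?_
    · exact fun x => this (mem_univ x)
    · filter_upwards [hp.continuousAt.eventually (gt_mem_nhds hneg)] with x hx
      simp [hf, max_eq_right hx.le]
  have hz : ∀ x, ENNReal.ofReal (p x) = 0 := by
    intro x
    have := hzero x
    simp only [hf, Complex.ofReal_eq_zero] at this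
    rw [ENNReal.ofReal_eq_zero]
    exact max_eq_right_iff.1 this
  have h1 : μ univ = 1 := measure_univ
  rw [hdens] at h1
  simp [hz] at h1
lemma aux_J (Y C σ c : ℝ) (hY : Y ∈ Set.Ioo (1:ℝ) 2) (hC : 0 < C) (hσ : 0 < σ)
    (hc : c = -2 * C * Real.Gamma (-Y) * Real.cos (Real.pi * Y / 2))
    (μ : Measure ℝ) [IsProbabilityMeasure μ]
    (hchar : ∀ u : ℝ, (∫ x, Complex.exp (Complex.I * u * x) ∂μ)
      = (Real.exp (-(c * |u| ^ Y)) : ℂ))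
    (p : ℝ → ℝ) (hp : Continuous p)
    (hdens : μ = MeasureTheory.volume.withDensity (fun x => ENNReal.ofReal (p x)))
    (s : ℝ) (hs : 0 < s) :
    IntegrableOn (fun z => (1 - Real.exp (-((s * z) ^ 2 / (2 * σ ^ 2)))) * (p z - C * z ^ (-Y - 1)))
      (Ioi 0) ∧
    ∫ z in Ioi (0:ℝ), (1 - Real.exp (-((s * z) ^ 2 / (2 * σ ^ 2)))) * (p z - C * z ^ (-Y - 1)) =
      1 / 2 * ∫ w, (1 - Real.exp (-((c * (s / σ) ^ Y) * |w| ^ Y)) - (c * (s / σ) ^ Y) * |w| ^ Y)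
        ∂(gaussianReal 0 1) := by
  have hc0 := aux_cpos Y C c hY hC hc
  have hp0 := aux_p_nonneg Y c hY.1 hc0 μ hchar p hp hdens
  have hY1 := hY.1
  set t := s / σ with ht
  have ht0 : 0 < t := by positivity
  set a := t ^ 2 / 2 with ha
  have ha0 : 0 < a := by positivity
  have e : ∀ z : ℝ, (s * z) ^ 2 / (2 * σ ^ 2) = a * z ^ 2 := by
    intro z; rw [ha, ht]; field_simp
  simp_rw [e]
  have hpm : Measurable (fun x => ENNReal.ofReal (p x)) := by fun_prop
  have htr : ∀ x, (ENNReal.ofReal (p x)).toReal = p x := fun x => ENNReal.toReal_ofReal (hp0 x)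
  set f : ℝ → ℝ := fun z => 1 - Real.exp (-(a * z ^ 2)) with hf
  have hfc : Continuous f := by fun_prop
  have hfi : Integrable f μ := by
    refine Integrable.of_bound (C := 1) hfc.aestronglyMeasurable (Eventually.of_forall fun z => ?_)
    obtain ⟨b1, b2, b3⟩ := aux_one_sub_exp_bound a z ha0
    rw [Real.norm_eq_abs, abs_of_nonneg b1]; exact b2
  have hfp : Integrable (fun z => f z * p z) := by
    have h := hfi
    rw [hdens, integrable_withDensity_iff_integrable_smul' hpm (by simp)] at h
    refine h.congr (Eventually.of_forall fun z => ?_)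
    simp only [htr, smul_eq_mul]; ring
  have hfpv : ∫ z in Ioi (0:ℝ), f z * p z = ∫ z in Ioi (0:ℝ), f z ∂μ := by
    rw [hdens, restrict_withDensity measurableSet_Ioi,
      integral_withDensity_eq_integral_toReal_smul hpm (by simp)]
    congr 1; ext z
    simp only [htr, smul_eq_mul]; ring
  have hK := aux_K_integrable Y a hY ha0
  have hsplit : (fun z => f z * (p z - C * z ^ (-Y - 1))) =
      fun z => f z * p z - C * (f z * z ^ (-Y - 1)) := by ext z; ring
  have hgi := aux_gauss_integrable Y (by linarith)
  have hei : Integrable (fun w : ℝ => Real.exp (-(c * t ^ Y * |w| ^ Y))) (gaussianReal 0 1) := by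
    refine Integrable.of_bound (C := 1) (Measurable.aestronglyMeasurable (by fun_prop))
      (Eventually.of_forall fun z => ?_)
    rw [Real.norm_eq_abs, abs_of_pos (Real.exp_pos _), Real.exp_le_one_iff, neg_nonpos]
    positivity
  have hxi : Integrable (fun x => Real.exp (-(a * x ^ 2))) μ := by
    refine ((integrable_const (1:ℝ)).sub hfi).congr (Eventually.of_forall fun x => ?_)
    simp [hf]
  have hei2 : Integrable (fun w : ℝ => 1 - Real.exp (-(c * t ^ Y * |w| ^ Y))) (gaussianReal 0 1) :=
    (integrable_const _).sub hei
  change IntegrableOn (fun z => f z * (p z - C * z ^ (-Y - 1))) _ ∧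
    ∫ z in Ioi (0:ℝ), (fun z => f z * (p z - C * z ^ (-Y - 1))) z = _
  rw [hsplit]
  refine ⟨hfp.integrableOn.sub (hK.const_mul C), ?_⟩
  rw [integral_sub hfp.integrableOn (hK.const_mul C), integral_const_mul, aux_K Y a hY ha0, hfpv,
    aux_half μ (aux_symm μ c Y hchar) f hfc hfi (by simp [hf]) (by simp [hf]), hf,
    integral_sub (integrable_const _) hxi, aux_fubini μ c Y t hchar,
    integral_sub hei2 (hgi.const_mul _),
    integral_sub (integrable_const _) hei, integral_const_mul, aux_gauss_moment Y (by linarith)]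
  have e2 : ∀ w : ℝ, c * |t * w| ^ Y = c * t ^ Y * |w| ^ Y := by
    intro w
    rw [abs_mul, abs_of_pos ht0, Real.mul_rpow ht0.le (abs_nonneg _)]; ring
  simp_rw [e2]
  have hcst := aux_const Y C c hY hc
  have e3 : a ^ (Y / 2) * 2 ^ Y = t ^ Y * 2 ^ (Y / 2) := by
    have t2 : (t ^ 2) ^ (Y / 2) = t ^ Y := by
      rw [← Real.rpow_two, ← Real.rpow_mul ht0.le]; congr 1; ring
    have t3 : (2:ℝ) ^ Y = 2 ^ (Y / 2) * 2 ^ (Y / 2) := by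
      rw [← Real.rpow_add two_pos]; congr 1; ring
    rw [ha, Real.div_rpow (by positivity) two_pos.le, t2, t3]
    field_simp
  simp only [integral_const, probReal_univ, smul_eq_mul, one_mul, mul_one]
  linear_combination (-a ^ (Y / 2)) * hcst - (1 / 2 * c * Real.Gamma ((Y + 1) / 2) / √Real.pi) * e3

theorem stmt12
    {Ω : Type} [MeasurableSpace Ω] (P : Measure Ω) [IsProbabilityMeasure P]
    (Y C σ c : ℝ) (hY : Y ∈ Set.Ioo (1:ℝ) 2) (hC : 0 < C) (hσ : 0 < σ)
    (hc : c = -2 * C * Real.Gamma (-Y) * Real.cos (Real.pi * Y / 2))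
    (μ : Measure ℝ) [IsProbabilityMeasure μ]
    (hchar : ∀ u : ℝ, (∫ x, Complex.exp (Complex.I * u * x) ∂μ)
      = (Real.exp (-(c * |u| ^ Y)) : ℂ))
    (p : ℝ → ℝ) (hp : Continuous p)
    (hdens : μ = MeasureTheory.volume.withDensity (fun x => ENNReal.ofReal (p x)))
    (W : Ω → ℝ) (hWmeas : Measurable W)
    (hWlaw : Measure.map W P = gaussianReal 0 1)
    (m : ℝ) (hm : m = ∫ ω, |W ω| ^ (2*Y - 2) ∂P) :
    (∀ s > (0:ℝ), IntegrableOn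
        (fun z => (∫ ω, Set.indicator {ω | 0 ≤ σ * W ω ∧ σ * W ω ≤ s * z}
            (fun ω => σ * W ω) ω ∂P) * (p z - C * z ^ (-Y - 1)))
        (Set.Ioi 0)) ∧
    Filter.Tendsto
      (fun s => s ^ (-(2*Y)) * ∫ z in Set.Ioi (0:ℝ),
        (∫ ω, Set.indicator {ω | 0 ≤ σ * W ω ∧ σ * W ω ≤ s * z}
            (fun ω => σ * W ω) ω ∂P) * (p z - C * z ^ (-Y - 1)))
      (𝓝[>] (0:ℝ))
      (𝓝 (-((2*Y - 1) * C ^ 2 * Real.cos (Real.pi * Y / 2) ^ 2 * Real.Gamma (-Y) ^ 2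
        / (Real.sqrt (2 * Real.pi) * σ ^ (2*Y - 1))) * m)) := by
  have hW : ∀ s > 0, ∀ z > 0, (∫ ω, Set.indicator {ω | 0 ≤ σ * W ω ∧ σ * W ω ≤ s * z}
            (fun ω => σ * W ω) ω ∂P) =
      σ / √(2 * Real.pi) * (1 - Real.exp (-((s * z) ^ 2 / (2 * σ ^ 2)))) := by
    intro s hs z hz
    rw [← aux_trunc σ (s * z) hσ (by positivity), ← hWlaw, integral_map hWmeas.aemeasurable]
    · rfl
    · refine Measurable.aestronglyMeasurable (Measurable.indicator (by fun_prop) ?_)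
      have hm1 : Measurable (fun x : ℝ => σ * x) := by fun_prop
      exact (measurableSet_le measurable_const hm1).inter
        (measurableSet_le hm1 measurable_const)
  have hJ := aux_J Y C σ c hY hC hσ hc μ hchar p hp hdens
  have hc0 := aux_cpos Y C c hY hC hc
  obtain ⟨hY1, hY2⟩ := hY
  have hcongr : ∀ s > 0, EqOn (fun z => (∫ ω, Set.indicator {ω | 0 ≤ σ * W ω ∧ σ * W ω ≤ s * z}
            (fun ω => σ * W ω) ω ∂P) * (p z - C * z ^ (-Y - 1)))
      (fun z => σ / √(2 * Real.pi) * ((1 - Real.exp (-((s * z) ^ 2 / (2 * σ ^ 2)))) *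
        (p z - C * z ^ (-Y - 1)))) (Ioi 0) := by
    intro s hs z hz
    simp only
    rw [hW s hs z hz, mul_assoc]
  constructor
  · intro s hs
    rw [integrableOn_congr_fun (hcongr s hs) measurableSet_Ioi]
    exact (hJ s hs).1.const_mul _
  have hθ : Tendsto (fun s : ℝ => c * (s / σ) ^ Y) (𝓝[>] 0) (𝓝[>] 0) := by
    apply tendsto_nhdsWithin_of_tendsto_nhds_of_eventually_within
    · have h1 : Tendsto (fun s : ℝ => s / σ) (𝓝 0) (𝓝 (0 / σ)) := (continuous_id.div_const σ).tendsto 0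
      rw [zero_div] at h1
      have h2 := ((Real.continuousAt_rpow_const 0 Y (Or.inr (by linarith))).tendsto.comp h1).const_mul c
      rw [Real.zero_rpow (by linarith), mul_zero] at h2
      exact h2.mono_left nhdsWithin_le_nhds
    · filter_upwards [self_mem_nhdsWithin] with s (hs : 0 < s)
      exact mem_Ioi.2 (by positivity)
  have hlim := ((aux_limit Y (by linarith)).comp hθ).const_mul
    (σ / √(2 * Real.pi) * (1 / 2) * (c ^ 2 * σ ^ (-(2 * Y))))
  have hmv : m = 2 ^ ((2 * Y - 2) / 2) * Real.Gamma ((2 * Y - 2 + 1) / 2) / √Real.pi := by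
    rw [hm, ← aux_gauss_moment (2 * Y - 2) (by linarith), ← hWlaw,
      integral_map hWmeas.aemeasurable (Measurable.aestronglyMeasurable (by fun_prop))]
  have hm2 : ∫ x, |x| ^ (2 * Y) ∂(gaussianReal 0 1) = (2 * Y - 1) * m := by
    rw [aux_gauss_moment (2 * Y) (by linarith), hmv,
      show (2 * Y + 1) / 2 = (2 * Y - 2 + 1) / 2 + 1 by ring,
      Real.Gamma_add_one (by linarith : (2 * Y - 2 + 1) / 2 ≠ 0),
      show 2 * Y / 2 = (2 * Y - 2) / 2 + 1 by ring, Real.rpow_add two_pos, Real.rpow_one]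
    ring
  have hval : -((2*Y - 1) * C ^ 2 * Real.cos (Real.pi * Y / 2) ^ 2 * Real.Gamma (-Y) ^ 2
        / (Real.sqrt (2 * Real.pi) * σ ^ (2*Y - 1))) * m =
      σ / √(2 * Real.pi) * (1 / 2) * (c ^ 2 * σ ^ (-(2 * Y))) *
        ∫ x, -(|x| ^ (2 * Y) / 2) ∂(gaussianReal 0 1) := by
    rw [integral_neg, integral_div, hm2, hc, Real.rpow_neg hσ.le, Real.rpow_sub hσ, Real.rpow_one]
    have := Real.rpow_pos_of_pos hσ (2 * Y)
    have : 0 < √(2 * Real.pi) := by positivity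
    generalize Real.cos (Real.pi * Y / 2) = A
    generalize Real.Gamma (-Y) = B
    field_simp
  rw [hval]
  refine hlim.congr' ?_
  filter_upwards [self_mem_nhdsWithin] with s (hs : 0 < s)
  rw [setIntegral_congr_fun measurableSet_Ioi (hcongr s hs), integral_const_mul, (hJ s hs).2]
  simp only [Function.comp]
  rw [integral_div]
  have e1 : (s / σ) ^ Y * (s / σ) ^ Y = s ^ (2 * Y) * σ ^ (-(2 * Y)) := by
    rw [← Real.rpow_add (by positivity), ← two_mul, Real.div_rpow hs.le hσ.le, Real.rpow_neg hσ.le,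
      div_eq_mul_inv]
  have e2 : (c * (s / σ) ^ Y) ^ 2 = c ^ 2 * σ ^ (-(2 * Y)) * s ^ (2 * Y) := by
    rw [mul_pow, sq ((s / σ) ^ Y), e1]; ring
  rw [e2, Real.rpow_neg hs.le]
  have := Real.rpow_pos_of_pos hs (2 * Y)
  have := Real.rpow_pos_of_pos hσ (-(2 * Y))
  field_simp
end

section
/- Tail-integral representation of the exponential remainder: let V be a real random variable with E[|V|] < ∞ and E[e^{−V}] < ∞. Then E[1 − e^{−V} − V] = ∫₀^∞ (e^{−y} − 1)·P(V ≥ y) dy − ∫₀^∞ (e^{y} − 1)·P(V ≤ −y) dy, and both integrals on the right-hand side are absolutely convergent. -/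
open MeasureTheory Filter Topology Set

theorem tail_aux {Ω : Type} [MeasurableSpace Ω] (P : Measure Ω) [IsProbabilityMeasure P]
    (X : Ω → ℝ) (hX : Measurable X) (g : ℝ → ℝ) (hg : Continuous g)
    (hg0 : ∀ t, 0 ≤ t → 0 ≤ g t) (G : Ω → ℝ) (hG : ∀ ω, ∫ t in (0:ℝ)..(max (X ω) 0), g t = G ω)
    (hGi : Integrable G P) :
    IntegrableOn (fun y => g y * (P {ω | y ≤ X ω}).toReal) (Set.Ioi 0) ∧
    ∫ y in Set.Ioi (0:ℝ), g y * (P {ω | y ≤ X ω}).toReal = ∫ ω, G ω ∂P := by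
  have key := lintegral_comp_eq_lintegral_meas_le_mul_of_measurable (f := fun ω => max (X ω) 0)
    (g := g) P (fun ω => le_max_right _ _) (hX.max measurable_const)
    (fun t _ => hg.intervalIntegrable 0 t) hg.measurable (fun t ht => hg0 t (le_of_lt ht))
  simp only [hG] at key
  have hGn : 0 ≤ᵐ[P] G := Eventually.of_forall fun ω => by
    rw [← hG ω]
    exact intervalIntegral.integral_nonneg (le_max_right _ _) (fun t ht => hg0 t ht.1)
  have hmeas : Measurable (fun y : ℝ => (P {ω | y ≤ X ω}).toReal) := by
    apply Antitone.measurable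
    intro a b hab
    exact ENNReal.toReal_mono (measure_ne_top _ _)
      (measure_mono fun ω (hω : b ≤ X ω) => le_trans hab hω)
  have hm : AEStronglyMeasurable (fun y => g y * (P {ω | y ≤ X ω}).toReal)
      (volume.restrict (Set.Ioi 0)) := (hg.measurable.mul hmeas).aestronglyMeasurable
  have hnn : 0 ≤ᵐ[volume.restrict (Set.Ioi 0)]
      (fun y => g y * (P {ω | y ≤ X ω}).toReal) := by
    filter_upwards [ae_restrict_mem measurableSet_Ioi] with y hy
    exact mul_nonneg (hg0 y (le_of_lt hy)) ENNReal.toReal_nonneg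
  have hEq : ∫⁻ y in Set.Ioi (0:ℝ), ENNReal.ofReal (g y * (P {ω | y ≤ X ω}).toReal)
      = ∫⁻ ω, ENNReal.ofReal (G ω) ∂P := by
    rw [key]
    apply setLIntegral_congr_fun measurableSet_Ioi
    intro y hy
    have hy' : (0:ℝ) < y := hy
    have hs : {ω | y ≤ max (X ω) 0} = {ω | y ≤ X ω} := by
      ext ω
      simp [hy']
    simp only [hs]
    rw [ENNReal.ofReal_mul (hg0 y hy'.le), ENNReal.ofReal_toReal (measure_ne_top _ _), mul_comm]
  constructor
  · refine ⟨hm, ?_⟩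
    rw [hasFiniteIntegral_iff_ofReal hnn, hEq]
    exact hGi.lintegral_lt_top
  · rw [integral_eq_lintegral_of_nonneg_ae hnn hm, hEq,
      integral_eq_lintegral_of_nonneg_ae hGn hGi.aestronglyMeasurable]

/-- Tail-integral representation of the exponential remainder: if `E[|V|] < ∞` and
`E[e^(−V)] < ∞`, then
`E[1 − e^(−V) − V] = ∫₀^∞ (e^(−y) − 1)·P(V ≥ y) dy − ∫₀^∞ (e^y − 1)·P(V ≤ −y) dy`,
and both integrals on the right-hand side are absolutely convergent. -/
theorem stmt13
    {Ω : Type} [MeasurableSpace Ω] (P : Measure Ω) [IsProbabilityMeasure P]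
    (V : Ω → ℝ) (hVmeas : Measurable V)
    (hVint : Integrable V P)
    (hVexp : Integrable (fun ω => Real.exp (-V ω)) P) :
    IntegrableOn (fun y => (Real.exp (-y) - 1) * (P {ω | y ≤ V ω}).toReal) (Set.Ioi 0) ∧
    IntegrableOn (fun y => (Real.exp y - 1) * (P {ω | V ω ≤ -y}).toReal) (Set.Ioi 0) ∧
    (∫ ω, (1 - Real.exp (-V ω) - V ω) ∂P) =
      (∫ y in Set.Ioi (0:ℝ), (Real.exp (-y) - 1) * (P {ω | y ≤ V ω}).toReal)
      - ∫ y in Set.Ioi (0:ℝ), (Real.exp y - 1) * (P {ω | V ω ≤ -y}).toReal := by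
  have hVm : Integrable (fun ω => max (V ω) 0) P := hVint.pos_part
  have hVn : Integrable (fun ω => max (-V ω) 0) P := hVint.neg.pos_part
  have hE1 : Integrable (fun ω => Real.exp (-max (V ω) 0)) P := by
    refine Integrable.mono' (integrable_const (1:ℝ))
      (by fun_prop) (Eventually.of_forall fun ω => ?_)
    rw [Real.norm_eq_abs, abs_of_pos (Real.exp_pos _)]
    exact Real.exp_le_one_iff.2 (by simp)
  have hE2 : Integrable (fun ω => Real.exp (max (-V ω) 0)) P := by
    refine Integrable.mono' (hVexp.add (integrable_const (1:ℝ)))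
      (by fun_prop) (Eventually.of_forall fun ω => ?_)
    rw [Real.norm_eq_abs, abs_of_pos (Real.exp_pos _)]
    have := Real.exp_pos (-V ω)
    rcases max_cases (-V ω) 0 with h | h <;> rw [h.1] <;> simp <;> linarith
  have hG1 : Integrable (fun ω => max (V ω) 0 - (1 - Real.exp (-max (V ω) 0))) P :=
    hVm.sub ((integrable_const (1:ℝ)).sub hE1)
  have hG2 : Integrable (fun ω => Real.exp (max (-V ω) 0) - 1 - max (-V ω) 0) P :=
    (hE2.sub (integrable_const (1:ℝ))).sub hVn
  obtain ⟨a1, a2⟩ := tail_aux P V hVmeas (fun y => 1 - Real.exp (-y)) (by fun_prop)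
    (fun t ht => by simpa using ht) _ (fun ω => by
      rw [intervalIntegral.integral_sub (by simp)
        ((by fun_prop : Continuous fun y : ℝ => Real.exp (-y)).intervalIntegrable _ _)]
      simp [intervalIntegral.integral_comp_neg (fun x => Real.exp x)]) hG1
  obtain ⟨b1, b2⟩ := tail_aux P (fun ω => -V ω) hVmeas.neg (fun y => Real.exp y - 1) (by fun_prop)
    (fun t ht => by simpa using ht) _ (fun ω => by
      rw [intervalIntegral.integral_sub
        (Real.continuous_exp.intervalIntegrable _ _) (by simp)]
      simp) hG2
  have hs : ∀ y, {ω | V ω ≤ -y} = {ω | y ≤ -V ω} := fun y => by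
    ext ω
    exact (le_neg (a := V ω) (b := y))
  have hf : (fun y => (Real.exp (-y) - 1) * (P {ω | y ≤ V ω}).toReal)
      = fun y => -((1 - Real.exp (-y)) * (P {ω | y ≤ V ω}).toReal) := by
    funext y
    ring
  simp only [hs]
  rw [hf]
  refine ⟨a1.neg, b1, ?_⟩
  have hG1n : Integrable (fun ω => -(max (V ω) 0 - (1 - Real.exp (-max (V ω) 0)))) P := hG1.neg
  rw [integral_neg, a2, b2, ← integral_neg, ← integral_sub hG1n hG2]
  congr 1
  funext ω
  rcases le_total 0 (V ω) with h | h
  · rw [max_eq_left h, max_eq_right (by linarith : -V ω ≤ 0)]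
    simp
  · rw [max_eq_right h, max_eq_left (by linarith : 0 ≤ -V ω)]
    simp
    ring
end

section
/- Pointwise scaling limit of the joint stable probability (display (NdedLmt2)): for every fixed x > 0 and w > 0, lim_{t→0⁺} t^{−1}·P( U − V ≥ t^{1/2−1/Y}·w and M*·U + G*·V ≤ t^{−1/Y}·x ≤ M·U + G·V ) = (C/Y)·(M^Y − (M−1)^Y)·x^{−Y}. -/
open MeasureTheory ProbabilityTheory Filter Topology Set

lemma aux_int_real {a b : ℝ} (ha : -1 < a) (hb : 0 < b) :
    IntegrableOn (fun v : ℝ => v ^ a * Real.exp (-(b * v))) (Ioi 0) := by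
  have := integrableOn_rpow_mul_exp_neg_mul_rpow (p := 1) ha one_pos hb
  simpa [neg_mul] using this

lemma aux_gamma {a : ℝ} (ha : 0 < a) {r : ℂ} (hr : 0 < r.re) :
    ∫ v in Ioi (0:ℝ), ((v ^ (a - 1) : ℝ) : ℂ) * Complex.exp (-(r * v))
      = (1 / r) ^ (a : ℂ) * (Real.Gamma a : ℂ) := by
  set F : ℂ → ℂ := fun r => ∫ v in Ioi (0:ℝ), ((v ^ (a - 1) : ℝ) : ℂ) * Complex.exp (-(r * v))
  set H : ℂ → ℂ := fun r => (1 / r) ^ (a : ℂ) * (Real.Gamma a : ℂ)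
  set S : Set ℂ := {r | 0 < r.re}
  have hSo : IsOpen S := isOpen_lt continuous_const Complex.continuous_re
  have hSc : Convex ℝ S := convex_halfSpace_re_gt 0
  have hnorm : ∀ (r : ℂ) (v : ℝ), ‖Complex.exp (-(r * v))‖ = Real.exp (-(r.re * v)) := by
    intro r v; rw [Complex.norm_exp]; simp
  have hF : DifferentiableOn ℂ F S := by
    intro r hr
    have hr' : 0 < r.re := hr
    have := hasDerivAt_integral_of_dominated_loc_of_deriv_le (𝕜 := ℂ) (μ := volume.restrict (Ioi (0:ℝ)))
      (F := fun r v => ((v ^ (a - 1) : ℝ) : ℂ) * Complex.exp (-(r * v)))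
      (F' := fun r v => ((v ^ (a - 1) : ℝ) : ℂ) * (Complex.exp (-(r * v)) * (-(v:ℂ))))
      (x₀ := r) (s := Metric.ball r (r.re / 2)) (bound := fun v => v ^ a * Real.exp (-(r.re / 2 * v)))
      (Metric.ball_mem_nhds _ (by positivity)) ?_ ?_ ?_ ?_ ?_ ?_
    · exact this.2.differentiableAt.differentiableWithinAt
    · exact Eventually.of_forall fun r => by
        apply Measurable.aestronglyMeasurable; fun_prop
    · have h := aux_int_real (a := a - 1) (by linarith) hr'
      refine Integrable.mono' h (by apply Measurable.aestronglyMeasurable; fun_prop) ?_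
      filter_upwards [ae_restrict_mem measurableSet_Ioi] with v hv
      rw [norm_mul, hnorm, Complex.norm_real, Real.norm_of_nonneg (Real.rpow_nonneg (le_of_lt hv) _)]
    · apply Measurable.aestronglyMeasurable; fun_prop
    · filter_upwards [ae_restrict_mem measurableSet_Ioi] with v hv z hz
      have hv : 0 < v := hv
      rw [norm_mul, norm_mul, hnorm, Complex.norm_real, Real.norm_of_nonneg (Real.rpow_nonneg hv.le _)]
      have h1 : |(z - r).re| < r.re / 2 := (Complex.abs_re_le_norm _).trans_lt (by simpa [dist_eq_norm] using hz)
      have h2 : r.re / 2 ≤ z.re := by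
        have := (abs_lt.1 h1).1; simp at this; linarith
      have h3 : v ^ a = v ^ (a - 1) * v := by
        rw [← Real.rpow_add_one hv.ne']; simp
      rw [norm_neg, Complex.norm_real, Real.norm_of_nonneg hv.le, h3]
      have h4 : Real.exp (-(z.re * v)) ≤ Real.exp (-(r.re / 2 * v)) := by gcongr
      have h5 := Real.rpow_nonneg hv.le (a-1)
      calc _ = v ^ (a-1) * v * Real.exp (-(z.re * v)) := by ring
        _ ≤ _ := by gcongr
    · exact aux_int_real (by linarith) (by positivity)
    · refine Eventually.of_forall fun v z _ => ?_
      have h1 : HasDerivAt (fun z : ℂ => -(z * v)) (-(v:ℂ)) z := by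
        have h0 : HasDerivAt (fun z : ℂ => z * (v:ℂ)) (v:ℂ) z := by
          simpa using (hasDerivAt_id z).mul_const (v:ℂ)
        exact h0.neg
      exact (h1.cexp).const_mul _
  have hH : DifferentiableOn ℂ H S := by
    intro r hr
    have hr' : 0 < r.re := hr
    have hr0 : r ≠ 0 := by rintro rfl; simp at hr'
    apply DifferentiableAt.differentiableWithinAt
    apply DifferentiableAt.mul_const
    apply DifferentiableAt.cpow_const
    · exact (differentiableAt_const _).div differentiableAt_id hr0
    · left
      rw [one_div, Complex.inv_re]
      have : 0 < Complex.normSq r := Complex.normSq_pos.2 hr0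
      positivity
  have hreal : ∀ x : ℝ, 0 < x → F x = H x := by
    intro x hx
    have := Complex.integral_cpow_mul_exp_neg_mul_Ioi (a := a) (r := x) (by simpa using ha) hx
    simp only [F, H]
    rw [← Complex.Gamma_ofReal, ← this]
    refine setIntegral_congr_fun measurableSet_Ioi (fun v hv => ?_)
    rw [Complex.ofReal_cpow (le_of_lt hv)]; push_cast; rfl
  have hfreq : ∃ᶠ z in 𝓝[≠] (1:ℂ), F z = H z := by
    have ht : Tendsto (fun n : ℕ => (((1 + 1 / ((n:ℝ) + 1) : ℝ)) : ℂ)) atTop (𝓝[≠] (1:ℂ)) := by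
      rw [tendsto_nhdsWithin_iff]
      constructor
      · have h : Tendsto (fun n : ℕ => (1 + 1 / ((n:ℝ) + 1) : ℝ)) atTop (𝓝 1) := by
          simpa using tendsto_one_div_add_atTop_nhds_zero_nat (𝕜 := ℝ) |>.const_add (1:ℝ)
        exact (Complex.continuous_ofReal.tendsto (1:ℝ)).comp h
      · refine Eventually.of_forall fun n => ?_
        simp only [mem_compl_iff, mem_singleton_iff]
        norm_cast
        have : 0 < 1 / ((n:ℝ) + 1) := by positivity
        intro h
        have h' : 1 / ((n:ℝ) + 1) = 0 := by push_cast at h; linarith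
        linarith
    exact ht.frequently (Frequently.of_forall fun n => hreal _ (by positivity))
  have := (hF.analyticOnNhd hSo).eqOn_of_preconnected_of_frequently_eq (hH.analyticOnNhd hSo)
    hSc.isPreconnected (z₀ := 1) (by simp [S]) hfreq
  exact this hr

open scoped FourierTransform SchwartzMap

noncomputable def psi0 (Y u : ℝ) : ℂ := ((|u| ^ Y : ℝ) : ℂ) *
        (((Real.cos (Real.pi * Y / 2) : ℝ) : ℂ)
          - Complex.I * ((Real.sign u : ℝ) : ℂ) * ((Real.sin (Real.pi * Y / 2) : ℝ) : ℂ))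

lemma psi0_eq (Y u : ℝ) (hu : u ≠ 0) :
    psi0 Y u = (Complex.I * u) ^ 2 * (1 / (-(Complex.I * u))) ^ (((2 - Y : ℝ)) : ℂ) := by
  have hI : Complex.I ^ 2 = -1 := Complex.I_sq
  have key : ∀ r : ℝ, 0 < r → r ^ (2:ℝ) * (r⁻¹) ^ (2 - Y) = r ^ Y := by
    intro r hr
    rw [Real.inv_rpow hr.le, ← Real.rpow_neg hr.le, ← Real.rpow_add hr]; ring_nf
  have h1 : ∀ r : ℝ, 0 < r → ∀ z : ℂ, z ≠ 0 → ((r:ℂ) * z) ^ (((2 - Y : ℝ)) : ℂ) =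
      ((r ^ (2 - Y) : ℝ) : ℂ) * Complex.exp (Complex.log z * ((2 - Y : ℝ) : ℂ)) := by
    intro r hr z hz
    have hr' : (r:ℂ) ≠ 0 := by exact_mod_cast hr.ne'
    rw [Complex.cpow_def_of_ne_zero (mul_ne_zero hr' hz), Complex.log_ofReal_mul hr hz, add_mul,
      Complex.exp_add, Real.rpow_def_of_pos hr]
    push_cast; rfl
  have hc : Real.cos (Real.pi / 2 * (2 - Y)) = - Real.cos (Real.pi * Y / 2) := by
    rw [← Real.cos_pi_sub]; ring_nf
  have hs : Real.sin (Real.pi / 2 * (2 - Y)) = Real.sin (Real.pi * Y / 2) := by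
    rw [← Real.sin_pi_sub]; ring_nf
  rcases lt_or_gt_of_ne hu with h | h
  · have hpos : 0 < -u := by linarith
    have e1 : 1 / (-(Complex.I * u)) = (((-u)⁻¹ : ℝ) : ℂ) * (-Complex.I) := by
      have : (u:ℂ) ≠ 0 := by exact_mod_cast hu
      push_cast
      field_simp
      simp
    rw [e1, h1 _ (by positivity) _ (by simp), Complex.log_neg_I, psi0, abs_of_neg h, Real.sign_of_neg h,
      ← key _ hpos]
    have e2 : -(↑Real.pi / 2) * Complex.I * ((2 - Y : ℝ) : ℂ) = ((-(Real.pi / 2 * (2 - Y)) : ℝ) : ℂ) * Complex.I := by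
      push_cast; ring
    rw [e2, Complex.exp_mul_I, ← Complex.ofReal_cos, ← Complex.ofReal_sin, Real.cos_neg, Real.sin_neg, hc, hs]
    push_cast
    rw [mul_pow, hI]
    norm_num
    ring
  · have e1 : 1 / (-(Complex.I * u)) = (((u)⁻¹ : ℝ) : ℂ) * (Complex.I) := by
      have : (u:ℂ) ≠ 0 := by exact_mod_cast hu
      push_cast
      field_simp
      simp
    rw [e1, h1 _ (by positivity) _ (by simp), Complex.log_I, psi0, abs_of_pos h, Real.sign_of_pos h,
      ← key _ h]
    have e2 : (↑Real.pi / 2) * Complex.I * ((2 - Y : ℝ) : ℂ) = (((Real.pi / 2 * (2 - Y)) : ℝ) : ℂ) * Complex.I := by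
      push_cast; ring
    rw [e2, Complex.exp_mul_I, ← Complex.ofReal_cos, ← Complex.ofReal_sin, hc, hs]
    push_cast
    rw [mul_pow, hI]
    norm_num
    ring

lemma aux_finv (f : 𝓢(ℝ, ℂ)) (x : ℝ) :
    ∫ ξ, 𝓕 f ξ * Complex.exp (2 * Real.pi * Complex.I * ξ * x) = f x := by
  have h : 𝓕⁻ (𝓕 (f : ℝ → ℂ)) x = f x := by
    have := f.continuous.fourierInv_fourier_eq f.integrable (by
      rw [← SchwartzMap.fourier_coe]; exact (𝓕 f).integrable)
    exact congrFun this x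
  rw [← h, Real.fourierInv_eq', ← SchwartzMap.fourier_coe]
  congr 1; ext ξ
  simp only [smul_eq_mul]
  rw [mul_comm]
  congr 2
  simp
  ring

noncomputable def dd (f : 𝓢(ℝ, ℂ)) : 𝓢(ℝ, ℂ) := SchwartzMap.derivCLM ℂ ℂ (SchwartzMap.derivCLM ℂ ℂ f)

lemma aux_fderiv (f : 𝓢(ℝ, ℂ)) (ξ : ℝ) :
    𝓕 (SchwartzMap.derivCLM ℂ ℂ f) ξ = (2 * Real.pi * Complex.I * ξ) * 𝓕 f ξ := by
  have := Real.fourier_deriv f.integrable f.differentiable (SchwartzMap.derivCLM ℂ ℂ f).integrable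
  have h2 := congrFun this ξ
  exact h2

lemma aux_fdd (f : 𝓢(ℝ, ℂ)) (ξ : ℝ) :
    𝓕 (dd f) ξ = (Complex.I * ((2 * Real.pi * ξ : ℝ) : ℂ)) ^ 2 * 𝓕 f ξ := by
  rw [dd, aux_fderiv, aux_fderiv]; push_cast; ring

lemma psi0_norm (Y u : ℝ) : ‖psi0 Y u‖ ≤ 2 * |u| ^ Y := by
  have h0 : 0 ≤ |u| ^ Y := by positivity
  rw [psi0, norm_mul, Complex.norm_real, Real.norm_of_nonneg h0, mul_comm]
  gcongr
  refine (norm_sub_le _ _).trans ?_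
  rw [norm_mul, norm_mul, Complex.norm_I, Complex.norm_real, Complex.norm_real, Complex.norm_real]
  have h1 : ‖Real.sign u‖ ≤ 1 := by
    rcases Real.sign_apply_eq u with h | h | h <;> simp [h]
  have h2 := Real.abs_cos_le_one (Real.pi * Y / 2)
  have h3 := Real.abs_sin_le_one (Real.pi * Y / 2)
  simp only [Real.norm_eq_abs] at *
  nlinarith [abs_nonneg (Real.sign u), abs_nonneg (Real.sin (Real.pi * Y / 2))]

lemma psi0_meas (Y : ℝ) : Measurable (psi0 Y) := by
  have : Measurable Real.sign := by
    unfold Real.sign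
    exact Measurable.ite measurableSet_Iio measurable_const
      (Measurable.ite measurableSet_Ioi measurable_const measurable_const)
  unfold psi0
  fun_prop

lemma aux_intY (f : 𝓢(ℝ, ℂ)) {Y : ℝ} (hY : Y ∈ Ioo (1:ℝ) 2) :
    Integrable (fun ξ : ℝ => ‖𝓕 f ξ‖ * |2 * Real.pi * ξ| ^ Y) := by
  have h0 := (𝓕 f).integrable_pow_mul volume 0
  have h2 := (𝓕 f).integrable_pow_mul volume 2
  refine Integrable.mono' (h0.add (h2.const_mul ((2 * Real.pi) ^ 2))) ?_ ?_
  · have := (𝓕 f).continuous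
    apply Measurable.aestronglyMeasurable; fun_prop
  · refine Eventually.of_forall fun ξ => ?_
    rw [Real.norm_of_nonneg (by positivity)]
    have : |2 * Real.pi * ξ| ^ Y ≤ 1 + |2 * Real.pi * ξ| ^ 2 := by
      rcases le_total (|2 * Real.pi * ξ|) 1 with h | h
      · have := Real.rpow_le_one (abs_nonneg _) h (by linarith [hY.1] : 0 ≤ Y)
        nlinarith [sq_nonneg (|2 * Real.pi * ξ|)]
      · have := Real.rpow_le_rpow_of_exponent_le h (hY.2.le)
        rw [Real.rpow_two] at this; linarith
    have h3 : |2 * Real.pi * ξ| ^ 2 = (2 * Real.pi) ^ 2 * ‖ξ‖ ^ 2 := by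
      rw [Real.norm_eq_abs, sq_abs, sq_abs]; ring
    simp only [Pi.add_apply, pow_zero, one_mul]
    calc _ ≤ ‖𝓕 f ξ‖ * (1 + |2 * Real.pi * ξ| ^ 2) := by gcongr
      _ = _ := by rw [h3]; ring

lemma aux_functional (f : 𝓢(ℝ, ℂ)) {Y a : ℝ} (hY : Y ∈ Ioo (1:ℝ) 2) (ha : 0 < a)
    (hg : ∀ v < a, dd f v = 0) :
    (∫ ξ, 𝓕 f ξ * psi0 Y (2 * Real.pi * ξ)) * (Real.Gamma (2 - Y) : ℂ) =
      ∫ v in Ioi (0:ℝ), ((v ^ (1 - Y) : ℝ) : ℂ) * dd f v := by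
  obtain ⟨hY1, hY2⟩ := hY
  set A : ℝ := 2 - Y with hA
  have hA0 : 0 < A := by linarith
  have hA1 : (1 - Y) = A - 1 := by rw [hA]; ring
  set r : ℝ → ℝ → ℂ := fun ε ξ => (ε : ℂ) + (-(Complex.I * ((2 * Real.pi * ξ : ℝ) : ℂ))) with hr
  have hrre : ∀ ε ξ, (r ε ξ).re = ε := by intro ε ξ; simp [hr]
  have hrim : ∀ ε ξ, (r ε ξ).im = -(2 * Real.pi * ξ) := by intro ε ξ; simp [hr]
  have hfc := (𝓕 f).continuous
  have hgc := (𝓕 (dd f)).continuous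
  have hgc' := (dd f).continuous
  have hid : ∀ ε : ℝ, 0 < ε →
      (∫ ξ, 𝓕 (dd f) ξ * ((1 / r ε ξ) ^ (A : ℂ))) * (Real.Gamma A : ℂ) =
      ∫ v in Ioi (0:ℝ), ((v ^ (1 - Y) : ℝ) : ℂ) * (Real.exp (-(ε * v)) : ℂ) * dd f v := by
    intro ε hε
    rw [← integral_mul_const]
    have e1 : ∀ ξ : ℝ, 𝓕 (dd f) ξ * ((1 / r ε ξ) ^ (A : ℂ)) * (Real.Gamma A : ℂ) =
        ∫ v in Ioi (0:ℝ), 𝓕 (dd f) ξ * (((v ^ (A - 1) : ℝ) : ℂ) * Complex.exp (-(r ε ξ * v))) := by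
      intro ξ
      rw [integral_const_mul, aux_gamma hA0 (by rw [hrre]; exact hε), mul_assoc]
    simp_rw [e1]
    rw [integral_integral_swap]
    · refine setIntegral_congr_fun measurableSet_Ioi (fun v hv => ?_)
      rw [← aux_finv (dd f) v, ← integral_const_mul, hA1]
      congr 1; ext ξ
      have : Complex.exp (-(r ε ξ * v)) = (Real.exp (-(ε * v)) : ℂ) *
          Complex.exp (2 * Real.pi * Complex.I * ξ * v) := by
        rw [Complex.ofReal_exp, ← Complex.exp_add]
        congr 1
        simp only [hr]; push_cast; ring
      rw [this]; ring
    · have h1 : Integrable (fun ξ => ‖𝓕 (dd f) ξ‖) := (𝓕 (dd f)).integrable.norm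
      have h2 := aux_int_real (a := A - 1) (by linarith) hε
      refine Integrable.mono' (h1.mul_prod h2) ?_ ?_
      · apply Measurable.aestronglyMeasurable
        simp only [hr, Function.uncurry_def]
        fun_prop
      · have : ∀ᵐ p : ℝ × ℝ ∂((volume : Measure ℝ).prod (volume.restrict (Ioi (0:ℝ)))), p.2 ∈ Ioi (0:ℝ) := by
          have := (Measure.quasiMeasurePreserving_snd (μ := (volume : Measure ℝ)) (ν := volume.restrict (Ioi (0:ℝ)))).ae (ae_restrict_mem measurableSet_Ioi)
          exact this
        filter_upwards [this] with p hp
        simp only [Function.uncurry_def]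
        rw [norm_mul, norm_mul, Complex.norm_real, Real.norm_of_nonneg (Real.rpow_nonneg (le_of_lt hp) _),
          Complex.norm_exp]
        have : (-(r ε p.1 * p.2)).re = -(ε * p.2) := by
          rw [Complex.neg_re, Complex.re_mul_ofReal, hrre]
        rw [this]
  have hL : Tendsto (fun ε => ∫ ξ, 𝓕 (dd f) ξ * ((1 / r ε ξ) ^ (A : ℂ))) (𝓝[>] 0)
      (𝓝 (∫ ξ, 𝓕 f ξ * psi0 Y (2 * Real.pi * ξ))) := by
    refine tendsto_integral_filter_of_dominated_convergence
      (fun ξ : ℝ => ‖𝓕 f ξ‖ * |2 * Real.pi * ξ| ^ Y) ?_ ?_ (aux_intY f ⟨hY1, hY2⟩) ?_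
    · refine Eventually.of_forall fun ε => ?_
      apply Measurable.aestronglyMeasurable
      simp only [hr]
      fun_prop
    · refine Eventually.of_forall fun ε => ?_
      filter_upwards [Measure.ae_ne volume (0:ℝ)] with ξ hξ
      have hu : 0 < |2 * Real.pi * ξ| := by have := Real.pi_pos; positivity
      rw [aux_fdd, norm_mul, norm_mul, Complex.norm_cpow_real, norm_pow, norm_mul, Complex.norm_I,
        Complex.norm_real, Real.norm_eq_abs, one_mul, norm_div, norm_one]
      have h1 : |2 * Real.pi * ξ| ≤ ‖r ε ξ‖ := by
        have := Complex.abs_im_le_norm (r ε ξ)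
        rwa [hrim, abs_neg] at this
      have h2 : (1 / ‖r ε ξ‖) ^ A ≤ (1 / |2 * Real.pi * ξ|) ^ A := by
        gcongr
      have h3 : |2 * Real.pi * ξ| ^ 2 * (1 / |2 * Real.pi * ξ|) ^ A = |2 * Real.pi * ξ| ^ Y := by
        rw [one_div, Real.inv_rpow hu.le, ← Real.rpow_neg hu.le, ← Real.rpow_two, ← Real.rpow_add hu, hA]
        ring_nf
      rw [← h3]
      calc _ ≤ |2 * Real.pi * ξ| ^ 2 * ‖𝓕 f ξ‖ * (1 / |2 * Real.pi * ξ|) ^ A := by gcongr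
        _ = _ := by ring
    · filter_upwards [Measure.ae_ne volume (0:ℝ)] with ξ hξ
      have hu : 2 * Real.pi * ξ ≠ 0 := by have := Real.pi_pos; positivity
      have e : 𝓕 f ξ * psi0 Y (2 * Real.pi * ξ) = 𝓕 (dd f) ξ * ((1 / r 0 ξ) ^ (A : ℂ)) := by
        rw [psi0_eq _ _ hu, aux_fdd]
        simp only [hr, Complex.ofReal_zero, zero_add]
        ring
      rw [e]
      have hne : r 0 ξ ≠ 0 := by
        intro h; have := hrim 0 ξ; rw [h] at this; simp at this; simp_all
      have hc : ContinuousAt (fun ε : ℝ => 𝓕 (dd f) ξ * ((1 / r ε ξ) ^ (A : ℂ))) 0 := by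
        apply ContinuousAt.mul continuousAt_const
        apply ContinuousAt.cpow
        · have hcr : ContinuousAt (fun ε : ℝ => r ε ξ) 0 := by simp only [hr]; fun_prop
          exact continuousAt_const.div hcr hne
        · exact continuousAt_const
        · right
          rw [one_div, Complex.inv_im, hrim]
          have := Complex.normSq_pos.2 hne
          rw [neg_neg]
          positivity
      exact hc.tendsto.mono_left nhdsWithin_le_nhds
  have hR : Tendsto (fun ε : ℝ => ∫ v in Ioi (0:ℝ), ((v ^ (1 - Y) : ℝ) : ℂ) * (Real.exp (-(ε * v)) : ℂ) * dd f v)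
      (𝓝[>] 0) (𝓝 (∫ v in Ioi (0:ℝ), ((v ^ (1 - Y) : ℝ) : ℂ) * dd f v)) := by
    refine tendsto_integral_filter_of_dominated_convergence
      (fun v : ℝ => a ^ (1 - Y) * ‖dd f v‖) ?_ ?_ ((dd f).integrable.norm.const_mul _).restrict ?_
    · refine Eventually.of_forall fun ε => ?_
      apply Measurable.aestronglyMeasurable
      fun_prop
    · filter_upwards [self_mem_nhdsWithin] with ε hε
      filter_upwards [ae_restrict_mem measurableSet_Ioi] with v hv
      have hv : 0 < v := hv
      have hε : 0 < ε := hε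
      rcases lt_or_ge v a with h | h
      · simp [hg v h]
      · rw [norm_mul, norm_mul, Complex.norm_real, Complex.norm_real, Real.norm_of_nonneg (by positivity),
          Real.norm_of_nonneg (by positivity)]
        have h1 : v ^ (1 - Y) ≤ a ^ (1 - Y) := Real.rpow_le_rpow_of_nonpos ha h (by linarith)
        have h2 : Real.exp (-(ε * v)) ≤ 1 := Real.exp_le_one_iff.2 (by nlinarith)
        have h3 : 0 ≤ v ^ (1 - Y) := by positivity
        have : v ^ (1 - Y) * Real.exp (-(ε * v)) ≤ a ^ (1 - Y) := by nlinarith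
        gcongr
    · refine Eventually.of_forall fun v => ?_
      have hc : Continuous (fun ε : ℝ => ((v ^ (1 - Y) : ℝ) : ℂ) * (Real.exp (-(ε * v)) : ℂ) * dd f v) := by
        fun_prop
      have := hc.tendsto 0
      simp only [zero_mul, neg_zero, Real.exp_zero, Complex.ofReal_one, mul_one] at this
      exact this.mono_left nhdsWithin_le_nhds
  refine tendsto_nhds_unique (hL.mul_const _) (hR.congr' ?_)
  filter_upwards [self_mem_nhdsWithin] with ε hε
  exact (hid ε hε).symm

lemma aux_parts (f : 𝓢(ℝ, ℂ)) {Y a b : ℝ} (ha : 0 < a) (hab : a < b)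
    (hfa : ∀ v < a, f v = 0) (hfb : ∀ v, b < v → f v = 0) :
    (∀ v < a, dd f v = 0) ∧
    ∫ v in Ioi (0:ℝ), ((v ^ (1 - Y) : ℝ) : ℂ) * dd f v =
      (Y * (Y - 1) : ℝ) * ∫ v in (a/2)..(b+1), ((v ^ (-1 - Y) : ℝ) : ℂ) * f v := by
  have hd : ∀ g : 𝓢(ℝ, ℂ), (∀ v < a, g v = 0) → (∀ v, b < v → g v = 0) →
      (∀ v < a, SchwartzMap.derivCLM ℂ ℂ g v = 0) ∧ (∀ v, b < v → SchwartzMap.derivCLM ℂ ℂ g v = 0) := by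
    intro g h1 h2
    constructor
    · intro v hv
      have : g =ᶠ[𝓝 v] fun _ => 0 := by
        filter_upwards [Iio_mem_nhds hv] with x hx using h1 x hx
      rw [SchwartzMap.derivCLM_apply, this.deriv_eq]; simp
    · intro v hv
      have : g =ᶠ[𝓝 v] fun _ => 0 := by
        filter_upwards [Ioi_mem_nhds hv] with x hx using h2 x hx
      rw [SchwartzMap.derivCLM_apply, this.deriv_eq]; simp
  obtain ⟨d1a, d1b⟩ := hd f hfa hfb
  obtain ⟨d2a, d2b⟩ := hd _ d1a d1b
  refine ⟨d2a, ?_⟩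
  have hle : a / 2 ≤ b + 1 := by linarith
  have e1 : ∫ v in Ioi (0:ℝ), ((v ^ (1 - Y) : ℝ) : ℂ) * dd f v =
      ∫ v in (a/2)..(b+1), ((v ^ (1 - Y) : ℝ) : ℂ) * dd f v := by
    rw [intervalIntegral.integral_of_le hle]
    refine setIntegral_eq_of_subset_of_forall_sdiff_eq_zero measurableSet_Ioi ?_ ?_
    · intro v hv; exact lt_trans (by positivity) hv.1
    · rintro v ⟨hv, hv'⟩
      have : dd f v = 0 := by
        rcases lt_or_ge v a with h | h
        · exact d2a v h
        · apply d2b v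
          by_contra hc
          exact hv' ⟨by linarith, by linarith⟩
      rw [this, mul_zero]
  rw [e1, ← sub_eq_zero, ← intervalIntegral.integral_const_mul]
  have hpos : ∀ v ∈ uIcc (a/2) (b+1), 0 < v := by
    intro v hv
    rw [uIcc_of_le hle] at hv
    exact lt_of_lt_of_le (by positivity) hv.1
  have hcr : ∀ p : ℝ, ContinuousOn (fun v : ℝ => ((v ^ p : ℝ) : ℂ)) (uIcc (a/2) (b+1)) := by
    intro p
    apply Complex.continuous_ofReal.comp_continuousOn
    exact fun v hv => (Real.continuousAt_rpow_const v p (Or.inl (hpos v hv).ne')).continuousWithinAt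
  have i1 : IntervalIntegrable (fun v : ℝ => ((v ^ (1 - Y) : ℝ) : ℂ) * dd f v) volume (a/2) (b+1) :=
    ((hcr _).mul (dd f).continuous.continuousOn).intervalIntegrable
  have i2 : IntervalIntegrable (fun v : ℝ => ((Y * (Y - 1) : ℝ) : ℂ) * (((v ^ (-1 - Y) : ℝ) : ℂ) * f v)) volume (a/2) (b+1) :=
    (continuousOn_const.mul ((hcr _).mul f.continuous.continuousOn)).intervalIntegrable
  rw [← intervalIntegral.integral_sub i1 i2]
  have hder : ∀ v ∈ uIcc (a/2) (b+1), HasDerivAt (fun v : ℝ => ((v ^ (1 - Y) : ℝ) : ℂ) * SchwartzMap.derivCLM ℂ ℂ f v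
      + ((Y - 1 : ℝ) : ℂ) * (((v ^ (-Y) : ℝ) : ℂ) * f v))
      (((v ^ (1 - Y) : ℝ) : ℂ) * dd f v - ((Y * (Y - 1) : ℝ) : ℂ) * (((v ^ (-1 - Y) : ℝ) : ℂ) * f v)) v := by
    intro v hv
    have hv0 := hpos v hv
    have p1 : HasDerivAt (fun v : ℝ => ((v ^ (1 - Y) : ℝ) : ℂ)) (((1 - Y) * v ^ (1 - Y - 1) : ℝ) : ℂ) v :=
      (Real.hasDerivAt_rpow_const (Or.inl hv0.ne')).ofReal_comp
    have p2 : HasDerivAt (fun v : ℝ => ((v ^ (-Y) : ℝ) : ℂ)) (((-Y) * v ^ (-Y - 1) : ℝ) : ℂ) v :=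
      (Real.hasDerivAt_rpow_const (Or.inl hv0.ne')).ofReal_comp
    have p3 : HasDerivAt f (SchwartzMap.derivCLM ℂ ℂ f v) v := f.hasDerivAt v
    have p4 : HasDerivAt (SchwartzMap.derivCLM ℂ ℂ f) (dd f v) v := (SchwartzMap.derivCLM ℂ ℂ f).hasDerivAt v
    refine ((p1.mul p4).add ((p2.mul p3).const_mul ((Y - 1 : ℝ) : ℂ))).congr_deriv ?_
    have q1 : 1 - Y - 1 = -Y := by ring
    have q2 : -Y - 1 = -1 - Y := by ring
    rw [q1, q2]; push_cast; ring
  rw [intervalIntegral.integral_eq_sub_of_hasDerivAt hder (i1.sub i2)]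
  rw [d1a (a/2) (by linarith), d1b (b+1) (by linarith), hfa (a/2) (by linarith), hfb (b+1) (by linarith)]
  simp

lemma psi0_scale (Y u : ℝ) {s : ℝ} (hs : 0 < s) : psi0 Y (u / s) = ((s ^ (-Y) : ℝ) : ℂ) * psi0 Y u := by
  have h : Real.sign (u / s) = Real.sign u := by
    rcases lt_trichotomy u 0 with h | h | h
    · rw [Real.sign_of_neg h, Real.sign_of_neg (div_neg_of_neg_of_pos h hs)]
    · simp [h]
    · rw [Real.sign_of_pos h, Real.sign_of_pos (div_pos h hs)]
  rw [psi0, psi0, h, abs_div, abs_of_pos hs, Real.div_rpow (abs_nonneg _) hs.le, Real.rpow_neg hs.le]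
  push_cast
  ring

lemma aux_gammaY {Y : ℝ} (hY : Y ∈ Ioo (1:ℝ) 2) :
    Real.Gamma (2 - Y) = Y * (Y - 1) * Real.Gamma (-Y) := by
  have h1 : Real.Gamma (-Y + 1) = -Y * Real.Gamma (-Y) := Real.Gamma_add_one (by linarith [hY.1])
  have h2 : Real.Gamma ((-Y + 1) + 1) = (-Y + 1) * Real.Gamma (-Y + 1) :=
    Real.Gamma_add_one (by linarith [hY.1])
  have h3 : -Y + 1 + 1 = 2 - Y := by ring
  rw [← h3, h2, h1]; ring

lemma aux_exp_bound (z : ℂ) (h : ‖Complex.exp z‖ ≤ 1) : ‖Complex.exp z - 1‖ ≤ 2 * ‖z‖ := by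
  rcases le_total ‖z‖ 1 with h1 | h1
  · exact Complex.norm_exp_sub_one_le h1
  · have := norm_sub_le (Complex.exp z) 1
    rw [norm_one] at this
    linarith

lemma aux_limit_schwartz {Ω : Type} [MeasurableSpace Ω] (P : Measure Ω) [IsProbabilityMeasure P]
    {Y κ : ℝ} (hY : Y ∈ Ioo (1:ℝ) 2) (U : Ω → ℝ) (hU : Measurable U)
    (hφ : ∀ u : ℝ, (∫ ω, Complex.exp (Complex.I * u * (U ω)) ∂P) = Complex.exp (κ * psi0 Y u))
    (f : 𝓢(ℝ, ℂ)) (hf0 : f 0 = 0) :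
    Tendsto (fun s : ℝ => ((s ^ Y : ℝ) : ℂ) * ∫ ω, f (U ω / s) ∂P) atTop
      (𝓝 (κ * ∫ ξ, 𝓕 f ξ * psi0 Y (2 * Real.pi * ξ))) := by
  have hfc := (𝓕 f).continuous
  have hbd : ∀ u : ℝ, ‖Complex.exp (κ * psi0 Y u)‖ ≤ 1 := by
    intro u
    rw [← hφ u]
    have := norm_integral_le_of_norm_le_const (μ := P) (C := 1) (f := fun ω => Complex.exp (Complex.I * u * (U ω)))
      (Eventually.of_forall fun ω => by
        have e : Complex.I * u * (U ω) = ((u * U ω : ℝ) : ℂ) * Complex.I := by push_cast; ring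
        rw [e, Complex.norm_exp_ofReal_mul_I])
    simpa using this
  have hrep : ∀ s : ℝ, 0 < s → ((s ^ Y : ℝ) : ℂ) * ∫ ω, f (U ω / s) ∂P =
      ∫ ξ, 𝓕 f ξ * (((s ^ Y : ℝ) : ℂ) * (Complex.exp (κ * psi0 Y (2 * Real.pi * ξ / s)) - 1)) := by
    intro s hs
    have e1 : ∫ ω, f (U ω / s) ∂P = ∫ ξ, 𝓕 f ξ * Complex.exp (κ * psi0 Y (2 * Real.pi * ξ / s)) := by
      simp_rw [← aux_finv f (_ / s)]
      rw [integral_integral_swap]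
      · congr 1; ext ξ
        rw [integral_const_mul, ← hφ]
        congr 2; ext ω
        congr 1; push_cast; ring
      · have h1 : Integrable (fun ξ => ‖𝓕 f ξ‖) := (𝓕 f).integrable.norm
        refine Integrable.mono' ((integrable_const (1:ℝ) (μ := P)).mul_prod h1) ?_ ?_
        · apply Measurable.aestronglyMeasurable
          simp only [Function.uncurry_def]
          fun_prop
        · refine Eventually.of_forall fun p => ?_
          simp only [Function.uncurry_def]
          rw [norm_mul]
          have e : 2 * (Real.pi : ℂ) * Complex.I * (p.2 : ℂ) * ((U p.1 / s : ℝ) : ℂ) =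
              ((2 * Real.pi * p.2 * (U p.1 / s) : ℝ) : ℂ) * Complex.I := by push_cast; ring
          rw [e, Complex.norm_exp_ofReal_mul_I]
          simp
    have e2 : ∫ ξ, 𝓕 f ξ = 0 := by
      have := aux_finv f 0
      simpa [hf0] using this
    have hpm := psi0_meas Y
    have i1 : Integrable (fun ξ => 𝓕 f ξ * Complex.exp (κ * psi0 Y (2 * Real.pi * ξ / s))) := by
      refine Integrable.mono' (𝓕 f).integrable.norm (by apply Measurable.aestronglyMeasurable; fun_prop) ?_
      refine Eventually.of_forall fun ξ => ?_
      rw [norm_mul]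
      exact mul_le_of_le_one_right (norm_nonneg _) (hbd _)
    have e3 : ∫ ω, f (U ω / s) ∂P = ∫ ξ, (𝓕 f ξ * Complex.exp (κ * psi0 Y (2 * Real.pi * ξ / s)) - 𝓕 f ξ) := by
      rw [integral_sub i1 (𝓕 f).integrable, e2, sub_zero, e1]
    rw [e3, ← integral_const_mul]
    congr 1; ext ξ; ring
  rw [← integral_const_mul]
  refine Tendsto.congr' (f₁ := fun s : ℝ => ∫ ξ, 𝓕 f ξ * (((s ^ Y : ℝ) : ℂ) * (Complex.exp (κ * psi0 Y (2 * Real.pi * ξ / s)) - 1))) ?_ ?_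
  · filter_upwards [eventually_gt_atTop 0] with s hs using (hrep s hs).symm
  have hpm := psi0_meas Y
  refine tendsto_integral_filter_of_dominated_convergence
      (fun ξ : ℝ => (4 * |κ|) * (‖𝓕 f ξ‖ * |2 * Real.pi * ξ| ^ Y)) ?_ ?_ ((aux_intY f hY).const_mul _) ?_
  · refine Eventually.of_forall fun s => ?_
    apply Measurable.aestronglyMeasurable; fun_prop
  · filter_upwards [eventually_gt_atTop 0] with s hs
    refine Eventually.of_forall fun ξ => ?_
    have h1 := aux_exp_bound _ (hbd (2 * Real.pi * ξ / s))
    rw [psi0_scale _ _ hs, norm_mul, norm_mul, Complex.norm_real, Complex.norm_real,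
      Real.norm_of_nonneg (by positivity : 0 ≤ s ^ (-Y)), Real.norm_eq_abs, ← psi0_scale _ _ hs] at h1
    rw [norm_mul, norm_mul, Complex.norm_real, Real.norm_of_nonneg (by positivity)]
    have h2 := psi0_norm Y (2 * Real.pi * ξ)
    have h3 : s ^ Y * s ^ (-Y) = 1 := by rw [← Real.rpow_add hs]; simp
    calc _ ≤ ‖𝓕 f ξ‖ * (s ^ Y * (2 * (|κ| * (s ^ (-Y) * (2 * |2 * Real.pi * ξ| ^ Y))))) := by
          gcongr
          exact h1.trans (by gcongr)
      _ = (s ^ Y * s ^ (-Y)) * ((4 * |κ|) * (‖𝓕 f ξ‖ * |2 * Real.pi * ξ| ^ Y)) := by ring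
      _ = _ := by rw [h3, one_mul]
  · refine Eventually.of_forall fun ξ => ?_
    have e : (κ:ℂ) * (𝓕 f ξ * psi0 Y (2 * Real.pi * ξ)) = 𝓕 f ξ * (κ * psi0 Y (2 * Real.pi * ξ)) := by ring
    rw [e]
    apply Tendsto.const_mul
    set c : ℂ := κ * psi0 Y (2 * Real.pi * ξ) with hc
    have hd : HasDerivAt (fun q : ℝ => Complex.exp (q * c)) c 0 := by
      have h0 : HasDerivAt (fun q : ℝ => (q:ℂ) * c) c 0 := by
        have := (Complex.ofRealCLM.hasDerivAt (x := (0:ℝ))).mul_const c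
        simpa using this
      simpa using h0.cexp
    have ht := hd.tendsto_slope_zero_right
    have hq : Tendsto (fun s : ℝ => s ^ (-Y)) atTop (𝓝[>] 0) := by
      rw [tendsto_nhdsWithin_iff]
      refine ⟨tendsto_rpow_neg_atTop (by linarith [hY.1]), ?_⟩
      filter_upwards [eventually_gt_atTop 0] with s hs
      exact Real.rpow_pos_of_pos hs _
    refine (ht.comp hq).congr' ?_
    filter_upwards [eventually_gt_atTop 0] with s hs
    simp only [Function.comp, zero_add, Complex.ofReal_zero, zero_mul, Complex.exp_zero]
    rw [psi0_scale _ _ hs, Real.rpow_neg hs.le, inv_inv, hc, Complex.real_smul]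
    congr 3
    ring

lemma aux_limit_real {Ω : Type} [MeasurableSpace Ω] (P : Measure Ω) [IsProbabilityMeasure P]
    {Y C : ℝ} (hY : Y ∈ Ioo (1:ℝ) 2) (U : Ω → ℝ) (hU : Measurable U)
    (hφ : ∀ u : ℝ, (∫ ω, Complex.exp (Complex.I * u * (U ω)) ∂P) =
      Complex.exp ((C * Real.Gamma (-Y) : ℝ) * psi0 Y u))
    (F : ℝ → ℝ) (hF : ContDiff ℝ (⊤ : ℕ∞) F) {a b : ℝ} (ha : 0 < a) (hab : a < b)
    (hFa : ∀ v < a, F v = 0) (hFb : ∀ v, b < v → F v = 0) :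
    Tendsto (fun s : ℝ => s ^ Y * ∫ ω, F (U ω / s) ∂P) atTop
      (𝓝 (C * ∫ v in (a/2)..(b+1), v ^ (-1 - Y) * F v)) := by
  have hcs : HasCompactSupport (fun v => (F v : ℂ)) := by
    refine HasCompactSupport.intro (isCompact_Icc (a := a) (b := b)) (fun v hv => ?_)
    rcases lt_or_ge v a with h | h
    · simp [hFa v h]
    · have : b < v := by by_contra hc; exact hv ⟨h, by linarith⟩
      simp [hFb v this]
  let f : 𝓢(ℝ, ℂ) := hcs.toSchwartzMap (Complex.ofRealCLM.contDiff.comp hF)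
  have hf : ∀ v, f v = (F v : ℂ) := fun v => rfl
  have hfa : ∀ v < a, f v = 0 := fun v hv => by rw [hf, hFa v hv]; simp
  have hfb : ∀ v, b < v → f v = 0 := fun v hv => by rw [hf, hFb v hv]; simp
  have h1 := aux_limit_schwartz P hY U hU hφ f (hfa 0 ha)
  obtain ⟨hd, hp⟩ := aux_parts f (Y := Y) ha hab hfa hfb
  have h2 := aux_functional f hY ha hd
  rw [hp, aux_gammaY hY] at h2
  have hYY : ((Y * (Y - 1) : ℝ) : ℂ) ≠ 0 := by
    norm_cast
    have := hY.1
    exact mul_ne_zero (by linarith) (by linarith)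
  have h3 : ((C * Real.Gamma (-Y) : ℝ) : ℂ) * ∫ ξ, 𝓕 f ξ * psi0 Y (2 * Real.pi * ξ) =
      ((C * ∫ v in (a/2)..(b+1), v ^ (-1 - Y) * F v : ℝ) : ℂ) := by
    have h4 : (∫ ξ, 𝓕 f ξ * psi0 Y (2 * Real.pi * ξ)) * (Real.Gamma (-Y) : ℂ) =
        ∫ v in (a/2)..(b+1), ((v ^ (-1 - Y) : ℝ) : ℂ) * f v := by
      apply mul_left_cancel₀ hYY
      rw [← h2]; push_cast; ring
    have h5 : ∫ v in (a/2)..(b+1), ((v ^ (-1 - Y) : ℝ) : ℂ) * f v =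
        ((∫ v in (a/2)..(b+1), v ^ (-1 - Y) * F v : ℝ) : ℂ) := by
      rw [← intervalIntegral.integral_ofReal]
      congr 1; ext v; rw [hf]; push_cast; rfl
    rw [Complex.ofReal_mul C (∫ v in (a/2)..(b+1), v ^ (-1 - Y) * F v), ← h5, ← h4]
    push_cast; ring
  rw [h3] at h1
  have h6 := (Complex.continuous_re.tendsto _).comp h1
  rw [Complex.ofReal_re] at h6
  refine h6.congr (fun s => ?_)
  simp only [Function.comp, hf]
  have h7 : ∫ ω, ((F (U ω / s) : ℝ) : ℂ) ∂P = ((∫ ω, F (U ω / s) ∂P : ℝ) : ℂ) := integral_ofReal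
  rw [h7, ← Complex.ofReal_mul, Complex.ofReal_re]

lemma aux_bump {a' a b b' : ℝ} (h1 : a' < a) (h2 : b < b') :
    ∃ F : ℝ → ℝ, ContDiff ℝ (⊤ : ℕ∞) F ∧ (∀ v, 0 ≤ F v) ∧ (∀ v, F v ≤ 1) ∧
      (∀ v, a ≤ v → v ≤ b → F v = 1) ∧ (∀ v, v ≤ a' → F v = 0) ∧ (∀ v, b' ≤ v → F v = 0) := by
  have p1 : 0 < a - a' := by linarith
  have p2 : 0 < b' - b := by linarith
  refine ⟨fun v => Real.smoothTransition ((v - a') / (a - a')) * Real.smoothTransition ((b' - v) / (b' - b)),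
    ?_, ?_, ?_, ?_, ?_, ?_⟩
  · apply ContDiff.mul
    · exact Real.smoothTransition.contDiff.comp (by fun_prop)
    · exact Real.smoothTransition.contDiff.comp (by fun_prop)
  · intro v; exact mul_nonneg (Real.smoothTransition.nonneg _) (Real.smoothTransition.nonneg _)
  · intro v; exact mul_le_one₀ (Real.smoothTransition.le_one _) (Real.smoothTransition.nonneg _) (Real.smoothTransition.le_one _)
  · intro v h3 h4
    simp only
    rw [Real.smoothTransition.one_of_one_le, Real.smoothTransition.one_of_one_le, one_mul]
    · rw [one_le_div p2]; linarith
    · rw [one_le_div p1]; linarith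
  · intro v hv
    simp only
    rw [Real.smoothTransition.zero_of_nonpos, zero_mul]
    exact div_nonpos_of_nonpos_of_nonneg (by linarith) p1.le
  · intro v hv
    simp only
    rw [Real.smoothTransition.zero_of_nonpos (x := (b' - v) / (b' - b)), mul_zero]
    exact div_nonpos_of_nonpos_of_nonneg (by linarith) p2.le

lemma aux_powint {Y a b : ℝ} (hY : 0 < Y) (ha : 0 < a) (hab : a ≤ b) :
    ∫ v in Ioc a b, v ^ (-1 - Y) = (1 / Y) * (a ^ (-Y) - b ^ (-Y)) := by
  rw [← intervalIntegral.integral_of_le hab, integral_rpow]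
  · have : -1 - Y + 1 = -Y := by ring
    rw [this]; field_simp; ring
  · right
    refine ⟨by linarith, ?_⟩
    rw [uIcc_of_le hab]
    intro h; linarith [h.1]

lemma aux_squeeze (g up lo : ℝ → ℝ) (L : ℝ) (hup : Tendsto up (𝓝[>] 0) (𝓝 L))
    (hlo : Tendsto lo (𝓝[>] 0) (𝓝 L))
    (h1 : ∀ᶠ ε in 𝓝[>] (0:ℝ), ∃ u : ℝ → ℝ, ∃ l ≤ up ε, Tendsto u atTop (𝓝 l) ∧ ∀ᶠ s in atTop, g s ≤ u s)
    (h2 : ∀ᶠ ε in 𝓝[>] (0:ℝ), ∃ u : ℝ → ℝ, ∃ l ≥ lo ε, Tendsto u atTop (𝓝 l) ∧ ∀ᶠ s in atTop, u s ≤ g s) :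
    Tendsto g atTop (𝓝 L) := by
  rw [tendsto_order]
  constructor
  · intro c hc
    obtain ⟨ε, ⟨u, l, hl, ht, hu⟩, hε⟩ := (h2.and (hlo.eventually (lt_mem_nhds hc))).exists
    filter_upwards [hu, ht.eventually (lt_mem_nhds (lt_of_lt_of_le hε hl))] with s h3 h4
    linarith
  · intro c hc
    obtain ⟨ε, ⟨u, l, hl, ht, hu⟩, hε⟩ := (h1.and (hup.eventually (gt_mem_nhds hc))).exists
    filter_upwards [hu, ht.eventually (gt_mem_nhds (lt_of_le_of_lt hl hε))] with s h3 h4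
    linarith

lemma aux_interval {Ω : Type} [MeasurableSpace Ω] (P : Measure Ω) [IsProbabilityMeasure P]
    {Y C : ℝ} (hY : Y ∈ Ioo (1:ℝ) 2) (hC : 0 < C) (U : Ω → ℝ) (hU : Measurable U)
    (hφ : ∀ u : ℝ, (∫ ω, Complex.exp (Complex.I * u * (U ω)) ∂P) =
      Complex.exp ((C * Real.Gamma (-Y) : ℝ) * psi0 Y u))
    {a b : ℝ} (ha : 0 < a) (hab : a < b) :
    Tendsto (fun s : ℝ => s ^ Y * P.real {ω | a * s ≤ U ω ∧ U ω ≤ b * s}) atTop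
      (𝓝 (C / Y * (a ^ (-Y) - b ^ (-Y)))) := by
  have hY0 : 0 < Y := by linarith [hY.1]
  have hcont : ∀ p q : ℝ, 0 < p → 0 < q →
      ContinuousAt (fun ε : ℝ => C / Y * ((p + ε) ^ (-Y) - (q - ε) ^ (-Y))) 0 ∧
      ContinuousAt (fun ε : ℝ => C / Y * ((p - ε) ^ (-Y) - (q + ε) ^ (-Y))) 0 := by
    intro p q hp hq
    constructor
    · apply ContinuousAt.mul continuousAt_const
      apply ContinuousAt.sub
      · exact ContinuousAt.rpow_const (by fun_prop) (Or.inl (by simpa using hp.ne'))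
      · exact ContinuousAt.rpow_const (by fun_prop) (Or.inl (by simpa using hq.ne'))
    · apply ContinuousAt.mul continuousAt_const
      apply ContinuousAt.sub
      · exact ContinuousAt.rpow_const (by fun_prop) (Or.inl (by simpa using hp.ne'))
      · exact ContinuousAt.rpow_const (by fun_prop) (Or.inl (by simpa using hq.ne'))
  obtain ⟨c1, c2⟩ := hcont a b ha (by linarith)
  have hint : ∀ (F : ℝ → ℝ) (s : ℝ), ContDiff ℝ (⊤ : ℕ∞) F → (∀ v, 0 ≤ F v) → (∀ v, F v ≤ 1) →
      Integrable (fun ω => F (U ω / s)) P := by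
    intro F s h1 h2 h3
    have := h1.continuous
    refine Integrable.mono' (integrable_const (1:ℝ)) ?_ ?_
    · apply Measurable.aestronglyMeasurable; fun_prop
    · refine Eventually.of_forall fun ω => ?_
      rw [Real.norm_of_nonneg (h2 _)]; exact h3 _
  have hms : ∀ s : ℝ, MeasurableSet {ω | a * s ≤ U ω ∧ U ω ≤ b * s} := by
    intro s
    exact (measurableSet_le measurable_const hU).inter (measurableSet_le hU measurable_const)
  have hind : ∀ s : ℝ, P.real {ω | a * s ≤ U ω ∧ U ω ≤ b * s} =
      ∫ ω, ({ω | a * s ≤ U ω ∧ U ω ≤ b * s}.indicator (fun _ => (1:ℝ))) ω ∂P := by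
    intro s
    rw [integral_indicator (hms s)]; simp
  have hintind : ∀ s : ℝ, Integrable ({ω | a * s ≤ U ω ∧ U ω ≤ b * s}.indicator (fun _ => (1:ℝ))) P :=
    fun s => (integrable_const (1:ℝ)).indicator (hms s)
  have hIoc : ∀ (F : ℝ → ℝ), ContDiff ℝ (⊤ : ℕ∞) F → ∀ p q : ℝ, 0 < p →
      IntegrableOn (fun v => v ^ (-1 - Y) * F v) (Ioc p q) := by
    intro F hF p q hp
    have : ContinuousOn (fun v => v ^ (-1 - Y) * F v) (Icc p q) := by
      apply ContinuousOn.mul _ hF.continuous.continuousOn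
      exact fun v hv => (Real.continuousAt_rpow_const v _ (Or.inl (lt_of_lt_of_le hp hv.1).ne')).continuousWithinAt
    exact this.integrableOn_Icc.mono_set Ioc_subset_Icc_self
  have hub : ∀ (F : ℝ → ℝ) (p q : ℝ), ContDiff ℝ (⊤ : ℕ∞) F → (∀ v, 0 ≤ F v) → (∀ v, F v ≤ 1) →
      0 < p → p < q → (∀ v, v ≤ p → F v = 0) → (∀ v, q ≤ v → F v = 0) →
      C * ∫ v in (p/2)..(q+1), v ^ (-1 - Y) * F v ≤ C / Y * (p ^ (-Y) - q ^ (-Y)) := by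
    intro F p q h1 h2 h3 hp hpq h4 h5
    rw [intervalIntegral.integral_of_le (by linarith),
      setIntegral_eq_of_subset_of_forall_sdiff_eq_zero (s := Ioc p q) measurableSet_Ioc]
    · have e : C / Y * (p ^ (-Y) - q ^ (-Y)) = C * ((1 / Y) * (p ^ (-Y) - q ^ (-Y))) := by ring
      rw [e, ← aux_powint hY0 hp hpq.le]
      refine mul_le_mul_of_nonneg_left ?_ hC.le
      refine setIntegral_mono_on (hIoc F h1 p q hp) ?_ measurableSet_Ioc ?_
      · simpa using hIoc (fun _ => 1) contDiff_const p q hp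
      · intro v hv
        have : 0 < v := lt_trans hp hv.1
        exact mul_le_of_le_one_right (by positivity) (h3 v)
    · intro v hv; exact ⟨by linarith [hv.1], by linarith [hv.2]⟩
    · rintro v ⟨hv, hv'⟩
      have : F v = 0 := by
        rcases le_or_gt v p with h | h
        · exact h4 v h
        · apply h5 v
          by_contra hc
          exact hv' ⟨h, by linarith⟩
      rw [this, mul_zero]
  have hlb : ∀ (F : ℝ → ℝ) (p q p' q' : ℝ), ContDiff ℝ (⊤ : ℕ∞) F → (∀ v, 0 ≤ F v) →
      0 < p → p ≤ p' → p' < q' → q' ≤ q → (∀ v, p' ≤ v → v ≤ q' → F v = 1) →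
      C / Y * (p' ^ (-Y) - q' ^ (-Y)) ≤ C * ∫ v in (p/2)..(q+1), v ^ (-1 - Y) * F v := by
    intro F p q p' q' h1 h2 hp hpp hpq hqq h4
    rw [intervalIntegral.integral_of_le (by linarith)]
    have e : C / Y * (p' ^ (-Y) - q' ^ (-Y)) = C * ((1 / Y) * (p' ^ (-Y) - q' ^ (-Y))) := by ring
    rw [e, ← aux_powint hY0 (by linarith) hpq.le]
    gcongr
    have e2 : ∫ v in Ioc p' q', v ^ (-1 - Y) = ∫ v in Ioc p' q', v ^ (-1 - Y) * F v := by
      refine setIntegral_congr_fun measurableSet_Ioc (fun v hv => ?_)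
      rw [h4 v hv.1.le hv.2, mul_one]
    rw [e2]
    refine setIntegral_mono_set (hIoc F h1 _ _ (by positivity)) ?_ ?_
    · filter_upwards [ae_restrict_mem measurableSet_Ioc] with v hv
      have : 0 < v := lt_trans (by positivity) hv.1
      exact mul_nonneg (by positivity) (h2 v)
    · refine (Ioc_subset_Ioc (by linarith) (by linarith)).eventuallyLE
  refine aux_squeeze _ (fun ε : ℝ => C / Y * ((a - ε) ^ (-Y) - (b + ε) ^ (-Y)))
    (fun ε : ℝ => C / Y * ((a + ε) ^ (-Y) - (b - ε) ^ (-Y))) _ ?_ ?_ ?_ ?_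
  · have := c2.tendsto
    simp only [sub_zero, add_zero] at this
    exact this.mono_left nhdsWithin_le_nhds
  · have := c1.tendsto
    simp only [sub_zero, add_zero] at this
    exact this.mono_left nhdsWithin_le_nhds
  · filter_upwards [Ioo_mem_nhdsGT ha] with ε hε
    obtain ⟨F, f1, f2, f3, f4, f5, f6⟩ := aux_bump (a' := a - ε) (a := a) (b := b) (b' := b + ε)
      (by linarith [hε.1]) (by linarith [hε.1])
    refine ⟨_, _, ?_, aux_limit_real P hY U hU hφ F f1 (a := a - ε) (b := b + ε) (by linarith [hε.2])
      (by linarith [hε.1]) (fun v hv => f5 v hv.le) (fun v hv => f6 v hv.le), ?_⟩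
    · exact hub F _ _ f1 f2 f3 (by linarith [hε.2]) (by linarith [hε.1]) f5 f6
    · filter_upwards [eventually_gt_atTop 0] with s hs
      rw [hind]
      refine mul_le_mul_of_nonneg_left ?_ (by positivity)
      refine integral_mono (hintind s) (hint F s f1 f2 f3) (fun ω => ?_)
      by_cases hω : a * s ≤ U ω ∧ U ω ≤ b * s
      · simp only [indicator, mem_ofPred_eq, hω, and_self, if_true]
        rw [f4 (U ω / s) ((le_div_iff₀ hs).2 hω.1) ((div_le_iff₀ hs).2 hω.2)]
      · simp only [indicator, mem_ofPred_eq, hω, if_false]; exact f2 _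
  · have hm : (0:ℝ) < (b - a) / 4 := by linarith
    filter_upwards [Ioo_mem_nhdsGT hm] with ε hε
    obtain ⟨F, f1, f2, f3, f4, f5, f6⟩ := aux_bump (a' := a) (a := a + ε) (b := b - ε) (b' := b)
      (by linarith [hε.1]) (by linarith [hε.1])
    refine ⟨_, _, ?_, aux_limit_real P hY U hU hφ F f1 (a := a) (b := b) ha
      hab (fun v hv => f5 v hv.le) (fun v hv => f6 v hv.le), ?_⟩
    · exact hlb F _ _ _ _ f1 f2 ha (by linarith [hε.1]) (by linarith [hε.2]) (by linarith [hε.1]) f4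
    · filter_upwards [eventually_gt_atTop 0] with s hs
      rw [hind]
      refine mul_le_mul_of_nonneg_left ?_ (by positivity)
      refine integral_mono (hint F s f1 f2 f3) (hintind s) (fun ω => ?_)
      by_cases hω : a * s ≤ U ω ∧ U ω ≤ b * s
      · simp only [indicator, mem_ofPred_eq, hω, and_self, if_true]; exact f3 _
      · simp only [indicator, mem_ofPred_eq, hω, if_false]
        rcases lt_or_ge (U ω) (a * s) with h | h
        · rw [f5]; exact (div_le_iff₀ hs).2 h.le
        · rw [f6]
          have : b * s < U ω := by by_contra hc; exact hω ⟨h, by linarith⟩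
          exact (le_div_iff₀ hs).2 this.le

lemma aux_tail {Ω : Type} [MeasurableSpace Ω] (P : Measure Ω) [IsProbabilityMeasure P]
    {Y κ : ℝ} (hY : Y ∈ Ioo (1:ℝ) 2) (U : Ω → ℝ) (hU : Measurable U)
    (hφ : ∀ u : ℝ, (∫ ω, Complex.exp (Complex.I * u * (U ω)) ∂P) = Complex.exp (κ * psi0 Y u)) :
    ∃ K : ℝ, 0 ≤ K ∧ ∀ r : ℝ, 0 < r → P.real {ω | r < |U ω|} ≤ K * r ^ (-Y) := by
  refine ⟨8 * |κ| * 2 ^ Y, by positivity, fun r hr => ?_⟩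
  have hpm : IsProbabilityMeasure (P.map U) := Measure.isProbabilityMeasure_map hU.aemeasurable
  have hchar : ∀ u : ℝ, charFun (P.map U) u = Complex.exp (κ * psi0 Y u) := by
    intro u
    rw [charFun_apply_real, integral_map hU.aemeasurable (by apply Measurable.aestronglyMeasurable; fun_prop), ← hφ]
    congr 1; ext ω; congr 1; ring
  have h1 := measureReal_abs_gt_le_integral_charFun (μ := P.map U) hr
  have hms : MeasurableSet {x : ℝ | r < |x|} := measurableSet_lt measurable_const (by fun_prop)
  rw [map_measureReal_apply hU hms] at h1
  have h2 : ‖∫ t in (-2 * r⁻¹)..(2 * r⁻¹), 1 - charFun (P.map U) t‖ ≤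
      (4 * |κ| * (2 * r⁻¹) ^ Y) * |2 * r⁻¹ - (-2 * r⁻¹)| := by
    refine intervalIntegral.norm_integral_le_of_norm_le_const (fun t ht => ?_)
    have hr' : 0 < r⁻¹ := by positivity
    rw [uIoc_of_le (by linarith)] at ht
    have habs : |t| ≤ 2 * r⁻¹ := abs_le.2 ⟨by linarith [ht.1], ht.2⟩
    have hb : ‖Complex.exp (κ * psi0 Y t)‖ ≤ 1 := by
      rw [← hchar]; exact norm_charFun_le_one t
    rw [norm_sub_rev, hchar]
    refine (aux_exp_bound _ hb).trans ?_
    rw [norm_mul, Complex.norm_real, Real.norm_eq_abs]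
    have h3 := psi0_norm Y t
    have h4 : |t| ^ Y ≤ (2 * r⁻¹) ^ Y := Real.rpow_le_rpow (abs_nonneg _) habs (by linarith [hY.1])
    calc _ ≤ 2 * (|κ| * (2 * (2 * r⁻¹) ^ Y)) := by gcongr; linarith
      _ = _ := by ring
  have h5 : |2 * r⁻¹ - (-2 * r⁻¹)| = 4 * r⁻¹ := by
    rw [abs_of_pos (by have : 0 < r⁻¹ := by positivity
                       linarith)]; ring
  have h6 : (2 * r⁻¹) ^ Y = 2 ^ Y * r ^ (-Y) := by
    rw [Real.mul_rpow (by norm_num) (by positivity), Real.inv_rpow hr.le, Real.rpow_neg hr.le]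
  rw [h5, h6] at h2
  calc _ ≤ _ := h1
    _ ≤ 2⁻¹ * r * (4 * |κ| * (2 ^ Y * r ^ (-Y)) * (4 * r⁻¹)) := by gcongr
    _ = _ := by field_simp; ring


lemma aux_main {Ω : Type} [MeasurableSpace Ω] (P : Measure Ω) [IsProbabilityMeasure P]
    (Y C M G : ℝ) (hY : Y ∈ Set.Ioo (1:ℝ) 2) (hC : 0 < C) (hM : 1 < M) (hG : 0 < G)
    (U V : Ω → ℝ) (hU : Measurable U) (hV : Measurable V)
    (hIndep : IndepFun U V P)
    (hφ : ∀ u : ℝ, (∫ ω, Complex.exp (Complex.I * u * (U ω)) ∂P) =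
      Complex.exp ((C * Real.Gamma (-Y) : ℝ) * psi0 Y u))
    (hφV : ∀ u : ℝ, (∫ ω, Complex.exp (Complex.I * u * (V ω)) ∂P) =
      Complex.exp ((C * Real.Gamma (-Y) : ℝ) * psi0 Y u))
    (x w : ℝ) (hx : 0 < x) (hw : 0 < w) :
    Tendsto (fun s : ℝ => s ^ Y * P.real {ω | s ^ (1 - Y / 2) * w ≤ U ω - V ω ∧
          (M - 1) * U ω + (G + 1) * V ω ≤ s * x ∧ s * x ≤ M * U ω + G * V ω}) atTop
      (𝓝 ((C / Y) * (M ^ Y - (M - 1) ^ Y) * x ^ (-Y))) := by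
  have hY0 : 0 < Y := by linarith [hY.1]
  have hM0 : 0 < M := by linarith
  have hM1 : 0 < M - 1 := by linarith
  obtain ⟨K, hK0, hK⟩ := aux_tail P hY U hU hφ
  obtain ⟨K', hK0', hK'⟩ := aux_tail P hY V hV hφV
  have hVt : ∀ ε : ℝ, 0 < ε → Tendsto (fun s : ℝ => P.real {ω | ε * s < |V ω|}) atTop (𝓝 0) := by
    intro ε hε
    have h1 : Tendsto (fun s : ℝ => K' * (ε * s) ^ (-Y)) atTop (𝓝 (K' * 0)) :=
      ((tendsto_rpow_neg_atTop hY0).comp (tendsto_id.const_mul_atTop hε)).const_mul K'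
    rw [mul_zero] at h1
    refine squeeze_zero' (Eventually.of_forall fun s => measureReal_nonneg) ?_ h1
    filter_upwards [eventually_gt_atTop 0] with s hs
    exact hK' _ (by positivity)
  have hmI : ∀ p q : ℝ, MeasurableSet {u : ℝ | p ≤ u ∧ u ≤ q} := fun p q => measurableSet_Icc
  have hmA : ∀ p : ℝ, MeasurableSet {u : ℝ | p < |u|} := fun p =>
    measurableSet_lt measurable_const (by fun_prop)
  have hind : ∀ S T : Set ℝ, MeasurableSet S → MeasurableSet T →
      P.real (U ⁻¹' S ∩ V ⁻¹' T) = P.real (U ⁻¹' S) * P.real (V ⁻¹' T) := by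
    intro S T hS hT
    simp only [Measure.real]
    rw [hIndep.measure_inter_preimage_eq_mul S T hS hT, ENNReal.toReal_mul]
  have hlim : C / Y * (M ^ Y - (M - 1) ^ Y) * x ^ (-Y) =
      C / Y * ((x / M) ^ (-Y) - (x / (M - 1)) ^ (-Y)) := by
    rw [Real.div_rpow hx.le hM0.le, Real.div_rpow hx.le hM1.le, Real.rpow_neg hM0.le, Real.rpow_neg hM1.le]
    field_simp
  rw [hlim]
  have hxM : x / M < x / (M - 1) := by gcongr; linarith
  have hcont : ∀ g h : ℝ → ℝ, Continuous g → Continuous h → g 0 = x → h 0 = x →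
      Tendsto (fun ε : ℝ => C / Y * ((g ε / M) ^ (-Y) - (h ε / (M - 1)) ^ (-Y))) (𝓝[>] 0)
        (𝓝 (C / Y * ((x / M) ^ (-Y) - (x / (M - 1)) ^ (-Y)))) := by
    intro g h hg hh hg0 hh0
    have : ContinuousAt (fun ε : ℝ => C / Y * ((g ε / M) ^ (-Y) - (h ε / (M - 1)) ^ (-Y))) 0 := by
      apply ContinuousAt.mul continuousAt_const
      apply ContinuousAt.sub
      · exact ContinuousAt.rpow_const (by fun_prop) (Or.inl (by rw [hg0]; positivity))
      · exact ContinuousAt.rpow_const (by fun_prop) (Or.inl (by rw [hh0]; positivity))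
    have h2 := this.tendsto
    simp only [hg0, hh0] at h2
    exact h2.mono_left nhdsWithin_le_nhds
  have hev : ∀ g : ℝ → ℝ, Continuous g → 0 < g 0 → ∀ᶠ ε in 𝓝[>] (0:ℝ), 0 < g ε := by
    intro g hg h0
    exact (hg.continuousAt.eventually (lt_mem_nhds h0)).filter_mono nhdsWithin_le_nhds
  refine aux_squeeze _ (fun ε : ℝ => C / Y * (((x - G * ε) / M) ^ (-Y) - ((x + (G + 1) * ε) / (M - 1)) ^ (-Y)))
    (fun ε : ℝ => C / Y * (((x + G * ε) / M) ^ (-Y) - ((x - (G + 1) * ε) / (M - 1)) ^ (-Y))) _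
    (hcont _ _ (by fun_prop) (by fun_prop) (by simp) (by simp))
    (hcont _ _ (by fun_prop) (by fun_prop) (by simp) (by simp)) ?_ ?_
  · filter_upwards [self_mem_nhdsWithin, hev (fun ε => x - G * ε) (by fun_prop) (by simpa using hx)] with ε hε hε1
    have hε : 0 < ε := hε
    have hab : (x - G * ε) / M < (x + (G + 1) * ε) / (M - 1) := by
      calc _ < x / M := by gcongr; nlinarith
        _ < x / (M - 1) := hxM
        _ < _ := by gcongr; nlinarith
    have h1 := aux_interval P hY hC U hU hφ (a := (x - G * ε) / M) (b := (x + (G + 1) * ε) / (M - 1))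
      (by positivity) hab
    set c : ℝ := x / (2 * (M + G)) with hc
    have hc0 : 0 < c := by positivity
    have h2 : Tendsto (fun s : ℝ => K * c ^ (-Y) * P.real {ω | ε * s < |V ω|}) atTop (𝓝 0) := by
      simpa using (hVt ε hε).const_mul (K * c ^ (-Y))
    refine ⟨_, _, le_rfl, by simpa using h1.add h2, ?_⟩
    filter_upwards [eventually_gt_atTop 0] with s hs
    have hsub : {ω | s ^ (1 - Y / 2) * w ≤ U ω - V ω ∧
          (M - 1) * U ω + (G + 1) * V ω ≤ s * x ∧ s * x ≤ M * U ω + G * V ω} ⊆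
        {ω | (x - G * ε) / M * s ≤ U ω ∧ U ω ≤ (x + (G + 1) * ε) / (M - 1) * s} ∪
        (U ⁻¹' {u | c * s < |u|} ∩ V ⁻¹' {u | ε * s < |u|}) := by
      rintro ω ⟨q1, q2, q3⟩
      have q0 : 0 < s ^ (1 - Y / 2) * w := by positivity
      rcases le_or_gt (|V ω|) (ε * s) with h | h
      · left
        obtain ⟨v1, v2⟩ := abs_le.1 h
        constructor
        · rw [div_mul_eq_mul_div, div_le_iff₀ hM0]
          nlinarith
        · rw [div_mul_eq_mul_div, le_div_iff₀ hM1]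
          nlinarith
      · right
        refine ⟨?_, h⟩
        have q4 : s * x ≤ (M + G) * U ω := by nlinarith
        have q5 : c * s < U ω := by
          rw [hc, div_mul_eq_mul_div, div_lt_iff₀ (by positivity)]
          nlinarith [mul_pos hs hx]
        exact lt_of_lt_of_le q5 (le_abs_self _)
    have hm := (measureReal_mono (μ := P) hsub).trans (measureReal_union_le _ _)
    rw [hind _ _ (hmA _) (hmA _)] at hm
    have hk : s ^ Y * P.real (U ⁻¹' {u | c * s < |u|}) ≤ K * c ^ (-Y) := by
      have := hK (c * s) (by positivity)
      have e : s ^ Y * (c * s) ^ (-Y) = c ^ (-Y) := by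
        rw [Real.mul_rpow hc0.le hs.le, Real.rpow_neg hs.le]
        have : s ^ Y ≠ 0 := by positivity
        field_simp
      calc _ ≤ s ^ Y * (K * (c * s) ^ (-Y)) := by
            refine mul_le_mul_of_nonneg_left this (by positivity)
        _ = K * (s ^ Y * (c * s) ^ (-Y)) := by ring
        _ = _ := by rw [e]
    calc _ ≤ s ^ Y * _ := mul_le_mul_of_nonneg_left hm (by positivity)
      _ = s ^ Y * P.real {ω | (x - G * ε) / M * s ≤ U ω ∧ U ω ≤ (x + (G + 1) * ε) / (M - 1) * s} +
        (s ^ Y * P.real (U ⁻¹' {u | c * s < |u|})) * P.real {ω | ε * s < |V ω|} := by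
          simp only [preimage_ofPred_eq]; ring
      _ ≤ _ := by gcongr
  · have hgap : 0 < x / (M - 1) - x / M := by linarith
    filter_upwards [self_mem_nhdsWithin, hev (fun ε => x / M - ε) (by fun_prop) (by simp; positivity),
      hev (fun ε => (x - (G + 1) * ε) / (M - 1) - (x + G * ε) / M) (by fun_prop) (by simpa using hxM)]
      with ε hε hε1 hε2
    have hε : 0 < ε := hε
    have h1 := aux_interval P hY hC U hU hφ (a := (x + G * ε) / M) (b := (x - (G + 1) * ε) / (M - 1))
      (by positivity) (by linarith)
    have h2 := h1.mul ((hVt ε hε).const_sub 1)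
    rw [sub_zero, mul_one] at h2
    refine ⟨_, _, le_rfl, h2, ?_⟩
    have h3 : Tendsto (fun s : ℝ => s ^ (-(Y / 2)) * w) atTop (𝓝 0) := by
      simpa using (tendsto_rpow_neg_atTop (by positivity : 0 < Y / 2)).mul_const w
    filter_upwards [eventually_gt_atTop 0, h3.eventually (gt_mem_nhds hε1)] with s hs hs2
    have hsub : (U ⁻¹' {u | (x + G * ε) / M * s ≤ u ∧ u ≤ (x - (G + 1) * ε) / (M - 1) * s} ∩
        V ⁻¹' {u | ε * s < |u|}ᶜ) ⊆ {ω | s ^ (1 - Y / 2) * w ≤ U ω - V ω ∧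
          (M - 1) * U ω + (G + 1) * V ω ≤ s * x ∧ s * x ≤ M * U ω + G * V ω} := by
      rintro ω ⟨⟨q1, q2⟩, q3⟩
      have q3 : ¬ (ε * s < |V ω|) := q3
      obtain ⟨v1, v2⟩ := abs_le.1 (not_lt.1 q3)
      have q1' := q1
      rw [div_mul_eq_mul_div, div_le_iff₀ hM0] at q1
      rw [div_mul_eq_mul_div, le_div_iff₀ hM1] at q2
      refine ⟨?_, by nlinarith, by nlinarith⟩
      have e : s ^ (1 - Y / 2) = s * s ^ (-(Y / 2)) := by
        rw [sub_eq_add_neg, Real.rpow_add hs, Real.rpow_one]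
      have q4 : x / M * s ≤ (x + G * ε) / M * s := by
        gcongr; nlinarith
      rw [e]
      nlinarith
    have hm := measureReal_mono (μ := P) hsub
    rw [hind _ _ (hmI _ _) (hmA _).compl, preimage_compl, probReal_compl_eq_one_sub (hV (hmA _))] at hm
    have := mul_le_mul_of_nonneg_left hm (by positivity : 0 ≤ s ^ Y)
    rw [← mul_assoc] at this
    exact this

/-- Pointwise scaling limit of the joint stable probability (display (NdedLmt2)). -/
theorem stmt14
    {Ω : Type} [MeasurableSpace Ω] (P : Measure Ω) [IsProbabilityMeasure P]
    (Y C M G : ℝ) (hY : Y ∈ Set.Ioo (1:ℝ) 2) (hC : 0 < C) (hM : 1 < M) (hG : 0 < G)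
    (U V : Ω → ℝ) (hU : Measurable U) (hV : Measurable V)
    (hIndep : IndepFun U V P)
    (hUchar : ∀ u : ℝ, (∫ ω, Complex.exp (Complex.I * u * (U ω)) ∂P) =
      Complex.exp (((C * Real.Gamma (-Y) * |u| ^ Y : ℝ) : ℂ) *
        (((Real.cos (Real.pi * Y / 2) : ℝ) : ℂ)
          - Complex.I * ((Real.sign u : ℝ) : ℂ) * ((Real.sin (Real.pi * Y / 2) : ℝ) : ℂ))))
    (hVchar : ∀ u : ℝ, (∫ ω, Complex.exp (Complex.I * u * (V ω)) ∂P) =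
      Complex.exp (((C * Real.Gamma (-Y) * |u| ^ Y : ℝ) : ℂ) *
        (((Real.cos (Real.pi * Y / 2) : ℝ) : ℂ)
          - Complex.I * ((Real.sign u : ℝ) : ℂ) * ((Real.sin (Real.pi * Y / 2) : ℝ) : ℂ))))
    (x w : ℝ) (hx : 0 < x) (hw : 0 < w) :
    Filter.Tendsto
      (fun t => t⁻¹ * (P {ω | t ^ ((1:ℝ)/2 - 1/Y) * w ≤ U ω - V ω ∧
          (M - 1) * U ω + (G + 1) * V ω ≤ t ^ (-(1/Y)) * x ∧
          t ^ (-(1/Y)) * x ≤ M * U ω + G * V ω}).toReal)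
      (𝓝[>] (0:ℝ))
      (𝓝 ((C / Y) * (M ^ Y - (M - 1) ^ Y) * x ^ (-Y))) := by
  have hY0 : 0 < Y := by linarith [hY.1]
  have conv : ∀ u : ℝ, ((C * Real.Gamma (-Y) * |u| ^ Y : ℝ) : ℂ) *
        (((Real.cos (Real.pi * Y / 2) : ℝ) : ℂ)
          - Complex.I * ((Real.sign u : ℝ) : ℂ) * ((Real.sin (Real.pi * Y / 2) : ℝ) : ℂ)) =
      ((C * Real.Gamma (-Y) : ℝ) : ℂ) * psi0 Y u := by
    intro u
    rw [psi0, ← mul_assoc, ← Complex.ofReal_mul]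
  have h := aux_main P Y C M G hY hC hM hG U V hU hV hIndep
    (fun u => by rw [hUchar u, conv u]) (fun u => by rw [hVchar u, conv u]) x w hx hw
  have ht : Tendsto (fun t : ℝ => t ^ (-(1 / Y))) (𝓝[>] 0) atTop :=
    tendsto_rpow_neg_nhdsGT_zero (by simpa using hY0)
  refine (h.comp ht).congr' ?_
  filter_upwards [self_mem_nhdsWithin] with t ht0
  have ht0 : 0 < t := ht0
  have e1 : (t ^ (-(1 / Y))) ^ Y = t⁻¹ := by
    rw [← Real.rpow_mul ht0.le, ← Real.rpow_neg_one]
    congr 1; field_simp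
  have e2 : (t ^ (-(1 / Y))) ^ (1 - Y / 2) = t ^ ((1:ℝ) / 2 - 1 / Y) := by
    rw [← Real.rpow_mul ht0.le]
    congr 1; field_simp; ring
  simp only [Function.comp]
  rw [e1, e2]
  rfl
end

section
/- Negligibility of the correlation term B₂₁ (display (AsyJ22)): define, for t > 0, B₂₁(t) := ∫₀^∞ E[(exp(−t^{1/Y}·(M*·U + G*·V)) − 1)·1_{U − V ≤ −t^{1/2−1/Y}·w}]·((1 − e^{−√t·w})/√t)·(e^{−w²/(2σ²)}/√(2πσ²)) dw. Then lim_{t→0⁺} t^{−1/2}·B₂₁(t) = 0. -/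
open MeasureTheory ProbabilityTheory Filter Topology Set

/-- Tail bound from the characteristic function gives a finite first moment. -/
lemma integrable_id_of_charFun_bound (μ : Measure ℝ) [IsProbabilityMeasure μ] (Y K : ℝ)
    (hY : 1 < Y) (hK : 0 ≤ K) (h : ∀ t : ℝ, ‖1 - charFun μ t‖ ≤ K * |t| ^ Y) :
    Integrable (fun x : ℝ => x) μ := by
  have tail : ∀ r : ℝ, 0 < r → μ.real {x | r < |x|} ≤ (2 * K * 2 ^ Y) * r ^ (-Y) := by
    intro r hr
    refine (measureReal_abs_gt_le_integral_charFun hr).trans ?_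
    have h1 : ‖∫ (t : ℝ) in -2 * r⁻¹..2 * r⁻¹, 1 - charFun μ t‖
        ≤ (K * (2 * r⁻¹) ^ Y) * |2 * r⁻¹ - (-2 * r⁻¹)| := by
      apply intervalIntegral.norm_integral_le_of_norm_le_const
      intro x hx
      have hr' : 0 < r⁻¹ := inv_pos.2 hr
      rw [uIoc_of_le (by linarith)] at hx
      refine (h x).trans ?_
      have : |x| ≤ 2 * r⁻¹ := abs_le.2 ⟨by linarith [hx.1], hx.2⟩
      gcongr
    have hr' : 0 < r⁻¹ := inv_pos.2 hr
    have h2 : |2 * r⁻¹ - (-2 * r⁻¹)| = 4 * r⁻¹ := by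
      rw [abs_of_pos (by linarith)]; ring
    rw [h2, Real.mul_rpow (by norm_num) hr'.le, Real.inv_rpow hr.le, ← Real.rpow_neg hr.le] at h1
    calc 2⁻¹ * r * _ ≤ 2⁻¹ * r * (K * (2 ^ Y * r ^ (-Y)) * (4 * r⁻¹)) := by gcongr
      _ = _ := by field_simp; ring
  refine ⟨by fun_prop, ?_⟩
  rw [hasFiniteIntegral_iff_norm]
  simp only [Real.norm_eq_abs]
  rw [lintegral_eq_lintegral_meas_lt μ (ae_of_all _ fun x => abs_nonneg x) (by fun_prop)]
  rw [← Ioc_union_Ioi_eq_Ioi (zero_le_one (α := ℝ))]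
  refine (lintegral_union_le _ _ _).trans_lt ?_
  refine ENNReal.add_lt_top.2 ⟨?_, ?_⟩
  · calc ∫⁻ t in Ioc (0:ℝ) 1, μ {a | t < |a|} ≤ ∫⁻ t in Ioc (0:ℝ) 1, 1 :=
          lintegral_mono fun t => prob_le_one
      _ < ⊤ := by simp
  · calc ∫⁻ t in Ioi (1:ℝ), μ {a | t < |a|}
        ≤ ∫⁻ t in Ioi (1:ℝ), ENNReal.ofReal ((2 * K * 2 ^ Y) * t ^ (-Y)) := by
          refine setLIntegral_mono' measurableSet_Ioi fun t ht => ?_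
          rw [← ofReal_measureReal]
          exact ENNReal.ofReal_le_ofReal (tail t (zero_lt_one.trans ht))
      _ < ⊤ := by
          have := ((integrableOn_Ioi_rpow_of_lt (a := -Y) (by linarith)
            (zero_lt_one (α := ℝ))).const_mul (2 * K * 2 ^ Y))
          exact Integrable.lintegral_lt_top this

lemma norm_one_sub_exp_le {z : ℂ} (hz : ‖Complex.exp z‖ ≤ 1) :
    ‖1 - Complex.exp z‖ ≤ 2 * ‖z‖ := by
  rcases le_or_gt ‖z‖ 1 with h | h
  · rw [norm_sub_rev]; exact Complex.norm_exp_sub_one_le h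
  · refine (norm_sub_le _ _).trans ?_
    simp only [norm_one]; linarith

lemma abs_exp_sub_one_le (h h₁ y : ℝ) (hh : 0 < h) (h1 : h ≤ h₁) :
    |Real.exp (h * y) - 1| ≤ h * (|y| + Real.exp (h₁ * y) / h₁) := by
  have hh1 : 0 < h₁ := hh.trans_le h1
  have hp : 0 < Real.exp (h₁ * y) / h₁ := by positivity
  rcases le_total 0 y with hy | hy
  · rw [abs_of_nonneg (by linarith [Real.one_le_exp (by positivity : 0 ≤ h * y)])]
    have hc := convexOn_exp.2 (mem_univ (0:ℝ)) (mem_univ (h₁ * y))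
      (show (0:ℝ) ≤ 1 - h / h₁ by rw [sub_nonneg, div_le_one hh1]; exact h1)
      (show (0:ℝ) ≤ h / h₁ by positivity) (by ring)
    simp only [smul_eq_mul, mul_zero, zero_add, Real.exp_zero, mul_one] at hc
    have e : h / h₁ * (h₁ * y) = h * y := by field_simp
    rw [e] at hc
    have : 0 ≤ h / h₁ := by positivity
    have e2 : h * (Real.exp (h₁ * y) / h₁) = h / h₁ * Real.exp (h₁ * y) := by ring
    rw [mul_add, e2]
    have : 0 ≤ h * |y| := by positivity
    linarith
  · have : h * y ≤ 0 := mul_nonpos_of_nonneg_of_nonpos hh.le hy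
    rw [abs_of_nonpos (by linarith [Real.exp_le_one_iff.2 this]), abs_of_nonpos hy]
    have := Real.add_one_le_exp (h * y)
    nlinarith [mul_pos hh hp]

/-- If the inner expectation is genuinely integrable, then `μ` has an exponential moment. -/
lemma integrable_exp_of_prod (μ ν : Measure ℝ) [IsProbabilityMeasure μ] [IsProbabilityMeasure ν]
    (a b c : ℝ) (ha : 0 ≤ a)
    (h : Integrable (fun p : ℝ × ℝ => Set.indicator {p : ℝ × ℝ | p.1 - p.2 ≤ -c}
      (fun p => Real.exp (-(a * p.1 + b * p.2)) - 1) p) (μ.prod ν)) :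
    Integrable (fun x => Real.exp (-(a * x))) μ := by
  obtain ⟨v, hv⟩ := h.prod_left_ae.exists
  have hI : Integrable (fun x => Real.exp (b * v) *
      (‖Set.indicator {p : ℝ × ℝ | p.1 - p.2 ≤ -c}
      (fun p => Real.exp (-(a * p.1 + b * p.2)) - 1) (x, v)‖ + 1) +
      Real.exp (-(a * (v - c)))) μ :=
    ((hv.norm.add (integrable_const 1)).const_mul _).add (integrable_const _)
  refine hI.mono' (by fun_prop) (ae_of_all _ fun x => ?_)
  rw [Real.norm_eq_abs, abs_of_pos (Real.exp_pos _)]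
  by_cases hx : x - v ≤ -c
  · rw [indicator_of_mem (by exact hx)]
    have e : Real.exp (-(a * x)) = Real.exp (b * v) * (Real.exp (-(a * x + b * v))) := by
      rw [← Real.exp_add]; ring_nf
    have h1 : Real.exp (-(a * x + b * v)) ≤ ‖Real.exp (-(a * x + b * v)) - 1‖ + 1 := by
      linarith [Real.le_norm_self (Real.exp (-(a * x + b * v)) - 1)]
    have := mul_le_mul_of_nonneg_left h1 (Real.exp_pos (b * v)).le
    rw [e]
    dsimp only
    linarith [Real.exp_pos (-(a * (v - c)))]
  · rw [indicator_of_notMem (by exact hx)]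
    have : Real.exp (-(a * x)) ≤ Real.exp (-(a * (v - c))) := by
      apply Real.exp_le_exp.2
      nlinarith
    simp only [norm_zero]
    linarith [Real.exp_pos (b * v)]

lemma integrable_exp_of_le {Ω : Type} [MeasurableSpace Ω] (P : Measure Ω) [IsProbabilityMeasure P]
    (U : Ω → ℝ) (hU : Measurable U) (s s' : ℝ) (hs' : 0 ≤ s') (hs : s' ≤ s)
    (h : Integrable (fun ω => Real.exp (-(s * U ω))) P) :
    Integrable (fun ω => Real.exp (-(s' * U ω))) P := by
  refine (h.add (integrable_const 1)).mono' (by fun_prop) (ae_of_all _ fun ω => ?_)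
  rw [Real.norm_eq_abs, abs_of_pos (Real.exp_pos _)]
  simp only [Pi.add_apply]
  rcases le_total 0 (U ω) with h0 | h0
  · have : Real.exp (-(s' * U ω)) ≤ 1 := Real.exp_le_one_iff.2 (by nlinarith)
    linarith [Real.exp_pos (-(s * U ω))]
  · have : Real.exp (-(s' * U ω)) ≤ Real.exp (-(s * U ω)) := Real.exp_le_exp.2 (by nlinarith)
    linarith

/-- Negligibility of the correlation term `B₂₁` (display (AsyJ22)):
`t^(−1/2)·B₂₁(t) → 0` as `t → 0⁺`. -/
theorem stmt15
    {Ω : Type} [MeasurableSpace Ω] (P : Measure Ω) [IsProbabilityMeasure P]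
    (Y C M G σ : ℝ) (hY : Y ∈ Set.Ioo (1:ℝ) 2) (hC : 0 < C) (hM : 1 < M) (hG : 0 < G)
    (hσ : 0 < σ)
    (U V : Ω → ℝ) (hU : Measurable U) (hV : Measurable V)
    (hIndep : IndepFun U V P)
    (hUchar : ∀ u : ℝ, (∫ ω, Complex.exp (Complex.I * u * (U ω)) ∂P) =
      Complex.exp (((C * Real.Gamma (-Y) * |u| ^ Y : ℝ) : ℂ) *
        (((Real.cos (Real.pi * Y / 2) : ℝ) : ℂ)
          - Complex.I * ((Real.sign u : ℝ) : ℂ) * ((Real.sin (Real.pi * Y / 2) : ℝ) : ℂ))))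
    (hVchar : ∀ u : ℝ, (∫ ω, Complex.exp (Complex.I * u * (V ω)) ∂P) =
      Complex.exp (((C * Real.Gamma (-Y) * |u| ^ Y : ℝ) : ℂ) *
        (((Real.cos (Real.pi * Y / 2) : ℝ) : ℂ)
          - Complex.I * ((Real.sign u : ℝ) : ℂ) * ((Real.sin (Real.pi * Y / 2) : ℝ) : ℂ))))
    (B₂₁ : ℝ → ℝ)
    (hB₂₁ : ∀ t > (0:ℝ), B₂₁ t = ∫ w in Set.Ioi (0:ℝ),
      (∫ ω, Set.indicator {ω | U ω - V ω ≤ -(t ^ ((1:ℝ)/2 - 1/Y) * w)}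
          (fun ω => Real.exp (-(t ^ (1/Y) * ((M - 1) * U ω + (G + 1) * V ω))) - 1) ω ∂P)
        * ((1 - Real.exp (-(Real.sqrt t * w))) / Real.sqrt t)
        * (Real.exp (-(w ^ 2) / (2 * σ ^ 2)) / Real.sqrt (2 * Real.pi * σ ^ 2))) :
    Filter.Tendsto (fun t => t ^ (-(1:ℝ)/2) * B₂₁ t) (𝓝[>] (0:ℝ)) (𝓝 0) := by
  obtain ⟨hY1, hY2⟩ := hY
  have hY0 : 0 < Y := by linarith
  set ψ : ℝ → ℂ := fun u => ((C * Real.Gamma (-Y) * |u| ^ Y : ℝ) : ℂ) *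
        (((Real.cos (Real.pi * Y / 2) : ℝ) : ℂ)
          - Complex.I * ((Real.sign u : ℝ) : ℂ) * ((Real.sin (Real.pi * Y / 2) : ℝ) : ℂ)) with hψ
  have : IsProbabilityMeasure (P.map U) := Measure.isProbabilityMeasure_map hU.aemeasurable
  have : IsProbabilityMeasure (P.map V) := Measure.isProbabilityMeasure_map hV.aemeasurable
  have cU : ∀ u, charFun (P.map U) u = Complex.exp (ψ u) := by
    intro u
    rw [charFun_apply_real, integral_map hU.aemeasurable (by fun_prop), hψ, ← hUchar u]
    congr 1; ext ω; ring_nf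
  have cV : ∀ u, charFun (P.map V) u = Complex.exp (ψ u) := by
    intro u
    rw [charFun_apply_real, integral_map hV.aemeasurable (by fun_prop), hψ, ← hVchar u]
    congr 1; ext ω; ring_nf
  have hlaw : P.map U = P.map V := by
    apply Measure.ext_of_charFun; ext u; rw [cU, cV]
  -- first moments
  have hmU' : Integrable (fun x : ℝ => x) (P.map U) := by
    refine integrable_id_of_charFun_bound _ Y (2 * (|C * Real.Gamma (-Y)| * 2)) hY1
      (by positivity) fun u => ?_
    have hle : ‖Complex.exp (ψ u)‖ ≤ 1 := by
      rw [← cU]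
      exact norm_charFun_le_one (μ := P.map U) u
    rw [cU]
    refine (norm_one_sub_exp_le hle).trans ?_
    have h1 : ‖(((Real.cos (Real.pi * Y / 2) : ℝ) : ℂ)
          - Complex.I * ((Real.sign u : ℝ) : ℂ) * ((Real.sin (Real.pi * Y / 2) : ℝ) : ℂ))‖ ≤ 2 := by
      refine (norm_sub_le _ _).trans ?_
      rw [norm_mul, norm_mul, Complex.norm_I, Complex.norm_real, Complex.norm_real,
        Complex.norm_real, Real.norm_eq_abs, Real.norm_eq_abs, Real.norm_eq_abs]
      have a1 := Real.abs_cos_le_one (Real.pi * Y / 2)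
      have a2 := Real.abs_sin_le_one (Real.pi * Y / 2)
      have a3 : |Real.sign u| ≤ 1 := by
        rcases Real.sign_apply_eq u with h | h | h <;> rw [h] <;> norm_num
      have := mul_le_mul a3 a2 (abs_nonneg _) zero_le_one
      linarith
    have h2 : ‖((C * Real.Gamma (-Y) * |u| ^ Y : ℝ) : ℂ)‖ = |C * Real.Gamma (-Y)| * |u| ^ Y := by
      rw [Complex.norm_real, Real.norm_eq_abs, abs_mul,
        abs_of_nonneg (Real.rpow_nonneg (abs_nonneg u) Y)]
    rw [hψ, norm_mul, h2]
    have := mul_le_mul_of_nonneg_left h1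
      (by positivity : 0 ≤ |C * Real.Gamma (-Y)| * |u| ^ Y)
    linarith
  have hmV' : Integrable (fun x : ℝ => x) (P.map V) := hlaw ▸ hmU'
  have hmU : Integrable U P := hmU'.comp_measurable hU
  have hmV : Integrable V P := hmV'.comp_measurable hV
  by_cases hexp : ∃ s > 0, Integrable (fun x : ℝ => Real.exp (-(s * x))) (P.map U)
  swap
  · -- no exponential moment: the inner integrals vanish by convention
    have hz : ∀ t > 0, B₂₁ t = 0 := by
      intro t ht
      rw [hB₂₁ t ht]
      have : ∀ w : ℝ, (∫ ω, Set.indicator {ω | U ω - V ω ≤ -(t ^ ((1:ℝ)/2 - 1/Y) * w)}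
          (fun ω => Real.exp (-(t ^ (1/Y) * ((M - 1) * U ω + (G + 1) * V ω))) - 1) ω ∂P) = 0 := by
        intro w
        apply integral_undef
        intro hint
        apply hexp
        have hpos : 0 < t ^ (1/Y) * (M - 1) := mul_pos (Real.rpow_pos_of_pos ht _) (by linarith)
        refine ⟨t ^ (1/Y) * (M - 1), hpos, ?_⟩
        refine integrable_exp_of_prod (P.map U) (P.map V) _ (t ^ (1/Y) * (G + 1))
          (t ^ ((1:ℝ)/2 - 1/Y) * w) hpos.le ?_
        rw [← (indepFun_iff_map_prod_eq_prod_map_map hU.aemeasurable hV.aemeasurable).1 hIndep]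
        rw [integrable_map_measure _ (by fun_prop)]
        · refine hint.congr (ae_of_all _ fun ω => ?_)
          simp only [Function.comp, Set.indicator_apply, mem_ofPred_eq]
          ring_nf
        · refine (Measurable.indicator (by fun_prop) ?_).aestronglyMeasurable
          exact measurableSet_le (by fun_prop) (by fun_prop)
      simp only [this, zero_mul, integral_zero]
    refine (tendsto_const_nhds (x := (0:ℝ))).congr' ?_
    filter_upwards [self_mem_nhdsWithin] with t ht
    rw [hz t ht, mul_zero]
  obtain ⟨s, hs, hsU'⟩ := hexp
  have hsV' : Integrable (fun x : ℝ => Real.exp (-(s * x))) (P.map V) := hlaw ▸ hsU'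
  have hsU : Integrable (fun ω => Real.exp (-(s * U ω))) P := hsU'.comp_measurable hU
  have hsV : Integrable (fun ω => Real.exp (-(s * V ω))) P := hsV'.comp_measurable hV
  obtain ⟨h₁, hh₁, ha, hb⟩ : ∃ h₁ > 0, h₁ * (M - 1) ≤ s ∧ h₁ * (G + 1) ≤ s := by
    have hp : 0 < M + G := by linarith
    refine ⟨s / (M + G), by positivity, ?_, ?_⟩ <;>
      rw [div_mul_eq_mul_div, div_le_iff₀ hp] <;> nlinarith
  have hIU := integrable_exp_of_le P U hU s (h₁ * (M - 1)) (mul_nonneg hh₁.le (by linarith)) ha hsU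
  have hIV := integrable_exp_of_le P V hV s (h₁ * (G + 1)) (mul_nonneg hh₁.le (by linarith)) hb hsV
  set Z : Ω → ℝ := fun ω => (M - 1) * U ω + (G + 1) * V ω with hZ
  have hIZ : Integrable (fun ω => Real.exp (h₁ * -Z ω)) P := by
    have hi : IndepFun (fun ω => Real.exp (-(h₁ * (M - 1) * U ω)))
        (fun ω => Real.exp (-(h₁ * (G + 1) * V ω))) P :=
      hIndep.comp (φ := fun x => Real.exp (-(h₁ * (M - 1) * x)))
        (ψ := fun x => Real.exp (-(h₁ * (G + 1) * x))) (by fun_prop) (by fun_prop)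
    refine (hi.integrable_mul hIU hIV).congr (ae_of_all _ fun ω => ?_)
    simp only [Pi.mul_apply, ← Real.exp_add, hZ]
    ring_nf
  have hmZ : Integrable Z P := (hmU.const_mul _).add (hmV.const_mul _)
  have hdom : Integrable (fun ω => |(-Z ω)| + Real.exp (h₁ * -Z ω) / h₁) P :=
    hmZ.neg.abs.add (hIZ.div_const _)
  set K := ∫ ω, (|(-Z ω)| + Real.exp (h₁ * -Z ω) / h₁) ∂P with hKdef
  have hK0 : 0 ≤ K := integral_nonneg fun ω => by positivity
  have inner : ∀ t > 0, t ^ (1/Y) ≤ h₁ → ∀ w : ℝ,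
      |∫ ω, Set.indicator {ω | U ω - V ω ≤ -(t ^ ((1:ℝ)/2 - 1/Y) * w)}
          (fun ω => Real.exp (-(t ^ (1/Y) * ((M - 1) * U ω + (G + 1) * V ω))) - 1) ω ∂P|
        ≤ t ^ (1/Y) * K := by
    intro t ht hth w
    rw [hKdef, ← integral_const_mul, ← Real.norm_eq_abs]
    refine norm_integral_le_of_norm_le (hdom.const_mul _) (ae_of_all _ fun ω => ?_)
    refine (norm_indicator_le_norm_self _ _).trans ?_
    have := abs_exp_sub_one_le (t ^ (1/Y)) h₁ (-Z ω) (Real.rpow_pos_of_pos ht _) hth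
    rw [mul_neg] at this
    exact this
  set D : ℝ → ℝ := fun w =>
    w * Real.exp (-(w ^ 2) / (2 * σ ^ 2)) / Real.sqrt (2 * Real.pi * σ ^ 2) with hD
  have hDint : IntegrableOn D (Ioi 0) := by
    have := (integrable_mul_exp_neg_mul_sq (b := 1 / (2 * σ ^ 2)) (by positivity)).div_const
      (Real.sqrt (2 * Real.pi * σ ^ 2))
    refine (this.congr (ae_of_all _ fun w => ?_)).integrableOn
    simp only [hD]
    congr 3
    ring
  have hB : ∀ t > 0, t ^ (1/Y) ≤ h₁ → |B₂₁ t| ≤ t ^ (1/Y) * (K * ∫ w in Ioi (0:ℝ), D w) := by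
    intro t ht hth
    rw [hB₂₁ t ht, ← mul_assoc, ← integral_const_mul, ← Real.norm_eq_abs]
    refine norm_integral_le_of_norm_le (hDint.const_mul _) ?_
    filter_upwards [ae_restrict_mem measurableSet_Ioi] with w hw
    have hw' : 0 < w := hw
    have hst : 0 < Real.sqrt t := Real.sqrt_pos.2 ht
    have q : |(1 - Real.exp (-(Real.sqrt t * w))) / Real.sqrt t| ≤ w := by
      have p0 : Real.exp (-(Real.sqrt t * w)) ≤ 1 :=
        Real.exp_le_one_iff.2 (by have := mul_pos hst hw'; linarith)
      rw [abs_of_nonneg (div_nonneg (by linarith) hst.le), div_le_iff₀ hst]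
      linarith [Real.add_one_le_exp (-(Real.sqrt t * w))]
    have r0 : 0 ≤ Real.exp (-(w ^ 2) / (2 * σ ^ 2)) / Real.sqrt (2 * Real.pi * σ ^ 2) := by
      positivity
    rw [norm_mul, norm_mul, Real.norm_eq_abs, Real.norm_eq_abs, Real.norm_eq_abs, abs_of_nonneg r0]
    have i := inner t ht hth w
    calc _ ≤ (t ^ (1/Y) * K) * w *
          (Real.exp (-(w ^ 2) / (2 * σ ^ 2)) / Real.sqrt (2 * Real.pi * σ ^ 2)) := by
          have : 0 ≤ t ^ (1/Y) * K := mul_nonneg (Real.rpow_nonneg ht.le _) hK0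
          exact mul_le_mul_of_nonneg_right (mul_le_mul i q (abs_nonneg _) this) r0
      _ = _ := by simp only [hD]; ring
  have hYi : 1 / 2 < 1 / Y := one_div_lt_one_div_of_lt hY0 hY2
  have lim0 : ∀ e : ℝ, 0 < e → Tendsto (fun t : ℝ => t ^ e) (𝓝[>] 0) (𝓝 0) := by
    intro e he
    have := (Real.continuousAt_rpow_const 0 e (Or.inr he.le)).tendsto
    rw [Real.zero_rpow he.ne'] at this
    exact this.mono_left nhdsWithin_le_nhds
  have hsmall : ∀ᶠ t : ℝ in 𝓝[>] 0, t ^ (1/Y) ≤ h₁ :=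
    ((lim0 (1/Y) (by linarith)).eventually_lt_const hh₁).mono fun t ht => ht.le
  refine squeeze_zero_norm' (a := fun t => t ^ (1/Y - 1/2) * (K * ∫ w in Ioi (0:ℝ), D w)) ?_ ?_
  · filter_upwards [self_mem_nhdsWithin, hsmall] with t ht hth
    have ht' : 0 < t := ht
    rw [norm_mul, Real.norm_eq_abs, Real.norm_eq_abs, abs_of_pos (Real.rpow_pos_of_pos ht' _)]
    have e : t ^ (1/Y - 1/2) = t ^ (-(1:ℝ)/2) * t ^ (1/Y) := by
      rw [← Real.rpow_add ht']; ring_nf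
    rw [e, mul_assoc]
    exact mul_le_mul_of_nonneg_left (hB t ht' hth) (Real.rpow_pos_of_pos ht' _).le
  · have := (lim0 (1/Y - 1/2) (by linarith)).mul_const (K * ∫ w in Ioi (0:ℝ), D w)
    rwa [zero_mul] at this
end
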